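/- arXiv:1802.02837 — 4 statements merged into one kernel-verified Lean document; each statement's English description precedes it below -/
import Mathlib

section
/- (Monotonicity Lemma, real case.) Let k ≥ 1 and let G be a compact (closed) subgroup of the orthogonal group O(k). For each n ≥ 1, let c(n) denote the cohomogeneity of the action of G × SO(n) on Matrix (Fin k) (Fin n) ℝ given by (g,h)·A = g A hᵀ, i.e. c(n) = kn minus the supremum over A of the Hausdorff dimension of the orbit of A. Then c(n) ≤ c(n+1) for all n ≥ 1. -/
open Matrix ENNReal

attribute [local instance] Matrix.normedAddCommGroup

/-- The orbit of `A` under the action `(g,h)·A = g A hᵀ` of `G × SO(n)` on `k × n`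
real matrices, for a subgroup `G` of `O(k)`. -/
def orbit9 {k n : ℕ} (G : Subgroup (Matrix.orthogonalGroup (Fin k) ℝ))
    (A : Matrix (Fin k) (Fin n) ℝ) : Set (Matrix (Fin k) (Fin n) ℝ) :=
  {B | ∃ g ∈ G, ∃ h ∈ Matrix.specialOrthogonalGroup (Fin n) ℝ,
    B = (g : Matrix (Fin k) (Fin k) ℝ) * A * (h : Matrix (Fin n) (Fin n) ℝ)ᵀ}

/-- The cohomogeneity of the action of `G × SO(n)` on `k × n` real matrices: the real
dimension `k·n` minus the supremum of the Hausdorff dimensions of the orbits. -/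
noncomputable def cohom9 (k : ℕ) (G : Subgroup (Matrix.orthogonalGroup (Fin k) ℝ))
    (n : ℕ) : ℝ≥0∞ :=
  (k * n : ℕ) - sSup {d : ℝ≥0∞ | ∃ A : Matrix (Fin k) (Fin n) ℝ, d = dimH (orbit9 G A)}

section
open ENNReal MeasureTheory Set Filter Topology

lemma cells9 (k N : ℕ) (ε : ℝ) (h0 : 0 < ε) (h1 : ε ≤ 1) :
    ∃ M : ℕ, (M : ℝ) ≤ (2 * N + 1) / ε ∧ ∃ c : (Fin k → Fin M) → Set (Fin k → ℝ),
      {y : Fin k → ℝ | ∀ i, |y i| ≤ N} ⊆ ⋃ j, c j ∧ ∀ j, Metric.ediam (c j) ≤ ENNReal.ofReal ε := by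
  refine ⟨⌊2 * N / ε⌋₊ + 1, ?_, fun j => Set.pi univ fun i => Icc (j i * ε - N) ((j i + 1) * ε - N), ?_, ?_⟩
  · push_cast
    have := Nat.floor_le (a := 2 * N / ε) (by positivity)
    rw [add_div]
    have : 1 ≤ 1 / ε := by rw [le_div_iff₀ h0]; linarith
    linarith
  · intro y hy
    simp only [mem_ofPred_eq, abs_le] at hy
    rw [mem_iUnion]
    refine ⟨fun i => ⟨⌊(y i + N) / ε⌋₊, ?_⟩, ?_⟩
    · rw [Nat.lt_succ_iff]
      apply Nat.floor_mono
      have := hy i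
      gcongr
      linarith
    · intro i _
      have := hy i
      have h2 := Nat.floor_le (a := (y i + N) / ε) (div_nonneg (by linarith) h0.le)
      have h3 := Nat.lt_floor_add_one ((y i + N) / ε)
      rw [le_div_iff₀ h0] at h2
      rw [div_lt_iff₀ h0] at h3
      simp only [mem_Icc]
      constructor <;> linarith
  · intro j
    apply Metric.ediam_pi_le_of_le
    intro i
    rw [Real.ediam_Icc]
    apply ENNReal.ofReal_le_ofReal
    linarith

lemma prod9 {E : Type*} [MetricSpace E] (k N : ℕ) (X : Set E) (d : NNReal) (hd : 0 < d)
    (hX : dimH X < d) :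
    dimH (X ×ˢ {y : Fin k → ℝ | ∀ i, |y i| ≤ N}) ≤ ((d + k : NNReal) : ℝ≥0∞) := by
  let : MeasurableSpace E := borel E
  have : BorelSpace E := ⟨rfl⟩
  let : MeasurableSpace (E × (Fin k → ℝ)) := borel _
  have : BorelSpace (E × (Fin k → ℝ)) := ⟨rfl⟩
  have h0 := hausdorffMeasure_of_dimH_lt hX
  rw [Measure.hausdorffMeasure_apply] at h0
  have hd' : (0:ℝ) < d := hd
  have key : ∀ m : ℕ, ∃ (t : ℕ → Set E) (ε : ℕ → ℝ), X ⊆ ⋃ i, t i ∧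
      (∀ i, 0 < ε i ∧ ε i ≤ 1 / ((m:ℝ) + 1) ∧ Metric.ediam (t i) ≤ ENNReal.ofReal (ε i)) ∧
      ∑' i, ENNReal.ofReal (ε i) ^ (d : ℝ) ≤ 2 := by
    intro m
    have hr : (0 : ℝ≥0∞) < ENNReal.ofReal (1 / ((m:ℝ) + 1)) := by
      rw [ENNReal.ofReal_pos]; positivity
    have h1 : (⨅ (t : ℕ → Set E) (_ : X ⊆ ⋃ n, t n) (_ : ∀ n, Metric.ediam (t n) ≤ ENNReal.ofReal (1 / ((m:ℝ) + 1))),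
          ∑' n, ⨆ _ : (t n).Nonempty, Metric.ediam (t n) ^ (d:ℝ)) < 1 := by
      refine lt_of_le_of_lt ?_ zero_lt_one
      rw [← h0]
      exact le_iSup₂ (f := fun (r : ℝ≥0∞) (_ : 0 < r) => ⨅ (t : ℕ → Set E) (_ : X ⊆ ⋃ n, t n) (_ : ∀ n, Metric.ediam (t n) ≤ r),
          ∑' n, ⨆ _ : (t n).Nonempty, Metric.ediam (t n) ^ (d:ℝ)) _ hr
    simp only [iInf_lt_iff] at h1
    obtain ⟨t, ht, htr, hs⟩ := h1
    obtain ⟨e, he, hes⟩ := ENNReal.exists_pos_sum_of_countable (ε := 1) one_ne_zero ℕ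
    have hfin : ∀ i, Metric.ediam (t i) ≠ ⊤ := fun i => ne_top_of_le_ne_top ENNReal.ofReal_ne_top (htr i)
    refine ⟨t, fun i => max (Metric.ediam (t i)).toReal (min (1 / ((m:ℝ) + 1)) ((e i : ℝ) ^ (1 / (d:ℝ)))), ht, ?_, ?_⟩
    · intro i
      have hei : (0:ℝ) < e i := he i
      refine ⟨lt_max_of_lt_right (lt_min (by positivity) (by positivity)), ?_, ?_⟩
      · apply max_le _ (min_le_left _ _)
        exact ENNReal.toReal_le_of_le_ofReal (by positivity) (htr i)
      · rw [ENNReal.le_ofReal_iff_toReal_le (hfin i) (le_max_of_le_left ENNReal.toReal_nonneg)]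
        exact le_max_left _ _
    · calc _ ≤ ∑' i, ((⨆ _ : (t i).Nonempty, Metric.ediam (t i) ^ (d:ℝ)) + (e i : ℝ≥0∞)) := by
            apply ENNReal.tsum_le_tsum
            intro i
            have hei : (0:ℝ) < e i := he i
            rw [ENNReal.ofReal_max, (ENNReal.monotone_rpow_of_nonneg hd'.le).map_max]
            apply max_le
            · rw [ENNReal.ofReal_toReal (hfin i)]
              refine le_trans ?_ le_self_add
              rcases (t i).eq_empty_or_nonempty with h | h
              · simp [h, hd]
              · simp [h]
            · refine le_trans ?_ le_add_self
              rw [ENNReal.ofReal_rpow_of_nonneg (by positivity) hd'.le]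
              rw [← ENNReal.ofReal_coe_nnreal]
              apply ENNReal.ofReal_le_ofReal
              calc _ ≤ ((e i : ℝ) ^ (1 / (d:ℝ))) ^ (d:ℝ) := by
                    apply Real.rpow_le_rpow (by positivity) (min_le_right _ _) hd'.le
                _ = _ := by rw [← Real.rpow_mul hei.le]; field_simp; simp
        _ ≤ 1 + 1 := by rw [ENNReal.tsum_add]; exact add_le_add hs.le hes.le
        _ = 2 := by norm_num
  choose t ε ht hε hsum using key
  have hε1 : ∀ m i, ε m i ≤ 1 := fun m i => (hε m i).2.1.trans (by
    rw [div_le_one (by positivity)]; linarith [(Nat.cast_nonneg m : (0:ℝ) ≤ m)])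
  choose M hM c hc hcd using fun m i => cells9 k N (ε m i) (hε m i).1 (hε1 m i)
  have hdiam : ∀ m i j, Metric.ediam (t m i ×ˢ c m i j) ≤ ENNReal.ofReal (ε m i) := by
    intro m i j
    apply Metric.ediam_le
    rintro ⟨a, b⟩ ⟨ha, hb⟩ ⟨a', b'⟩ ⟨ha', hb'⟩
    rw [Prod.edist_eq]
    exact max_le ((Metric.edist_le_ediam_of_mem ha ha').trans (hε m i).2.2)
      ((Metric.edist_le_ediam_of_mem hb hb').trans (hcd m i j))
  have H := Measure.hausdorffMeasure_le_liminf_tsum (ι := fun m => Σ i : ℕ, (Fin k → Fin (M m i)))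
    ((d + k : NNReal) : ℝ) (X ×ˢ {y : Fin k → ℝ | ∀ i, |y i| ≤ N}) (l := atTop)
    (fun m : ℕ => ENNReal.ofReal (1 / ((m:ℝ) + 1)))
    (by
      rw [← ENNReal.ofReal_zero]
      exact ENNReal.tendsto_ofReal tendsto_one_div_add_atTop_nhds_zero_nat)
    (fun m p => t m p.1 ×ˢ c m p.1 p.2)
    (Eventually.of_forall fun m p => (hdiam m p.1 p.2).trans (ENNReal.ofReal_le_ofReal (hε m p.1).2.1))
    (Eventually.of_forall fun m => by
      rintro ⟨a, b⟩ ⟨ha, hb⟩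
      obtain ⟨i, hi⟩ := mem_iUnion.1 (ht m ha)
      obtain ⟨j, hj⟩ := mem_iUnion.1 (hc m i hb)
      exact mem_iUnion.2 ⟨⟨i, j⟩, hi, hj⟩)
  apply dimH_le_of_hausdorffMeasure_ne_top
  have hB : ∀ m, (∑' p : (Σ i : ℕ, (Fin k → Fin (M m i))), Metric.ediam (t m p.1 ×ˢ c m p.1 p.2) ^ ((d + k : NNReal) : ℝ))
      ≤ ENNReal.ofReal ((2 * N + 1) ^ k) * 2 := by
    intro m
    rw [ENNReal.tsum_sigma (fun (i : ℕ) (j : Fin k → Fin (M m i)) => Metric.ediam (t m i ×ˢ c m i j) ^ ((d + k : NNReal) : ℝ))]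
    calc _ ≤ ∑' i, ENNReal.ofReal ((2 * N + 1) ^ k) * ENNReal.ofReal (ε m i) ^ (d : ℝ) := by
          apply ENNReal.tsum_le_tsum
          intro i
          have hp := (hε m i).1
          calc _ ≤ ∑' j : Fin k → Fin (M m i), ENNReal.ofReal (ε m i) ^ ((d + k : NNReal) : ℝ) := by
                apply ENNReal.tsum_le_tsum
                intro j
                exact ENNReal.rpow_le_rpow (hdiam m i j) (by positivity)
            _ = ENNReal.ofReal ((M m i : ℝ) ^ k * ε m i ^ ((d:ℝ) + k)) := by
                rw [tsum_fintype]
                simp only [Finset.sum_const, Finset.card_univ, Fintype.card_fun, Fintype.card_fin, nsmul_eq_mul]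
                rw [ENNReal.ofReal_mul (by positivity), ENNReal.ofReal_rpow_of_nonneg hp.le (by positivity)]
                congr 1
                rw [ENNReal.ofReal_pow (by positivity)]
                simp
            _ ≤ ENNReal.ofReal ((2 * N + 1) ^ k * (ε m i) ^ (d : ℝ)) := by
                apply ENNReal.ofReal_le_ofReal
                rw [Real.rpow_add hp, Real.rpow_natCast]
                calc (M m i : ℝ) ^ k * (ε m i ^ (d:ℝ) * ε m i ^ k) = (M m i * ε m i) ^ k * ε m i ^ (d:ℝ) := by
                      rw [mul_pow]; ring
                  _ ≤ _ := by
                      gcongr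
                      have := hM m i
                      rwa [le_div_iff₀ hp] at this
            _ = _ := by
                rw [ENNReal.ofReal_mul (by positivity), ENNReal.ofReal_rpow_of_nonneg hp.le (by positivity)]
      _ ≤ _ := by
          rw [ENNReal.tsum_mul_left]
          gcongr
          exact hsum m
  refine ne_top_of_le_ne_top ?_ (H.trans (liminf_le_of_frequently_le' (Frequently.of_forall hB)))
  exact ENNReal.mul_ne_top ENNReal.ofReal_ne_top (by norm_num)

lemma prodU9 {E : Type*} [MetricSpace E] (k : ℕ) (X : Set E) :
    dimH (X ×ˢ (univ : Set (Fin k → ℝ))) ≤ dimH X + k := by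
  have : (X ×ˢ (univ : Set (Fin k → ℝ))) = ⋃ N : ℕ, X ×ˢ {y : Fin k → ℝ | ∀ i, |y i| ≤ N} := by
    ext ⟨a, b⟩
    simp only [mem_prod, mem_univ, and_true, mem_iUnion, mem_ofPred_eq, exists_and_left, iff_self_and]
    intro _
    obtain ⟨N, hN⟩ := exists_nat_ge ‖b‖
    exact ⟨N, fun i => (norm_le_pi_norm b i).trans hN⟩
  rw [this, dimH_iUnion]
  refine iSup_le fun N => ?_
  apply ENNReal.le_of_forall_pos_le_add
  intro e he hlt
  have hX : dimH X ≠ ⊤ := by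
    intro h; simp [h] at hlt
  lift dimH X to NNReal using hX with D hD
  have := prod9 k N X (D + e) (by positivity) (by rw [← hD]; exact_mod_cast lt_add_of_pos_right D he)
  refine this.trans (le_of_eq ?_)
  push_cast
  ring

end

section

/-- append a column -/
def snocM9 {k n : ℕ} (C : Matrix (Fin k) (Fin n) ℝ) (w : Fin k → ℝ) : Matrix (Fin k) (Fin (n + 1)) ℝ :=
  Matrix.of fun i => Fin.snoc (C i) (w i)

/-- Householder reflection -/
noncomputable def house9 {m : ℕ} (v : Fin m → ℝ) : Matrix (Fin m) (Fin m) ℝ :=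
  1 - (2 / (v ⬝ᵥ v)) • vecMulVec v v

lemma house9_T {m : ℕ} (v : Fin m → ℝ) : (house9 v)ᵀ = house9 v := by
  simp [house9, transpose_vecMulVec]

lemma house9_sq {m : ℕ} (v : Fin m → ℝ) (hv : v ⬝ᵥ v ≠ 0) : house9 v * house9 v = 1 := by
  have : vecMulVec v v * vecMulVec v v = (v ⬝ᵥ v) • vecMulVec v v := by
    rw [vecMulVec_mul_vecMulVec, vecMulVec_smul]
  simp only [house9, sub_mul, mul_sub, one_mul, mul_one, Matrix.smul_mul, Matrix.mul_smul, this, smul_smul]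
  rw [div_mul_cancel₀ _ hv]
  module

/-- parameter -/
noncomputable def zz9 {n : ℕ} (u : Fin (n + 1) → ℝ) : Fin n → ℝ :=
  fun j => - u j.castSucc / (1 - u (Fin.last n))

/-- reflection attached to z -/
noncomputable def hh9 {n : ℕ} (z : Fin n → ℝ) : Matrix (Fin (n+1)) (Fin (n+1)) ℝ :=
  house9 (Fin.snoc z (1:ℝ) : Fin (n+1) → ℝ)

lemma snoc_dot9 {n : ℕ} (z : Fin n → ℝ) :
  ((Fin.snoc z (1:ℝ) : Fin (n+1) → ℝ) ⬝ᵥ (Fin.snoc z (1:ℝ) : Fin (n+1) → ℝ)) = z ⬝ᵥ z + 1 := by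
  simp [dotProduct, Fin.sum_univ_castSucc]

lemma dot_self_nonneg9 {n : ℕ} (z : Fin n → ℝ) : 0 ≤ z ⬝ᵥ z :=
  Finset.sum_nonneg fun i _ => mul_self_nonneg _

lemma hh9_T {n : ℕ} (z : Fin n → ℝ) : (hh9 z)ᵀ = hh9 z := house9_T _

lemma hh9_sq {n : ℕ} (z : Fin n → ℝ) : hh9 z * hh9 z = 1 := by
  apply house9_sq
  rw [snoc_dot9]
  have := dot_self_nonneg9 z
  positivity

lemma hh9_last {n : ℕ} (u : Fin (n + 1) → ℝ) (hu : u ⬝ᵥ u = 1) (hl : u (Fin.last n) ≤ 0) :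
    hh9 (zz9 u) *ᵥ (Pi.single (Fin.last n) 1) = u := by
  have hs : (1 - u (Fin.last n)) ≠ 0 := by linarith
  have hz : zz9 u ⬝ᵥ zz9 u + 1 = 2 / (1 - u (Fin.last n)) := by
    have h1 : zz9 u ⬝ᵥ zz9 u = (∑ j : Fin n, u j.castSucc * u j.castSucc) / (1 - u (Fin.last n))^2 := by
      rw [Finset.sum_div, dotProduct]
      apply Finset.sum_congr rfl
      intro j _
      simp only [zz9]
      field_simp
    have h2 : (∑ j : Fin n, u j.castSucc * u j.castSucc) = 1 - u (Fin.last n) * u (Fin.last n) := by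
      rw [← hu, dotProduct, Fin.sum_univ_castSucc]; ring
    rw [h1, h2]
    field_simp
    ring
  rw [hh9, house9, snoc_dot9, hz, Matrix.sub_mulVec, Matrix.smul_mulVec, vecMulVec_mulVec]
  ext j
  refine Fin.lastCases ?_ (fun j => ?_) j
  · simp
  · simp [zz9]
    field_simp

lemma snocM9_mulVec {k n : ℕ} (C : Matrix (Fin k) (Fin n) ℝ) (w : Fin k → ℝ) (x : Fin (n+1) → ℝ) :
   snocM9 C w *ᵥ x = C *ᵥ (fun j => x j.castSucc) + x (Fin.last n) • w := by
  ext i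
  simp [snocM9, mulVec, dotProduct, Fin.sum_univ_castSucc, mul_comm]

lemma snocM9_T {k n : ℕ} (C : Matrix (Fin k) (Fin n) ℝ) (w : Fin k → ℝ) (x : Fin k → ℝ) (j : Fin n) :
   ((snocM9 C w)ᵀ *ᵥ x) j.castSucc = (Cᵀ *ᵥ x) j := by
  simp [snocM9, mulVec, dotProduct]

lemma snocM9_gram {k n : ℕ} (C : Matrix (Fin k) (Fin n) ℝ) (w : Fin k → ℝ) :
   snocM9 C w * (snocM9 C w)ᵀ = C * Cᵀ + vecMulVec w w := by
  ext i j
  simp [snocM9, mul_apply, Fin.sum_univ_castSucc, vecMulVec_apply]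

lemma split9 {k n : ℕ} (B : Matrix (Fin k) (Fin (n+1)) ℝ) (u : Fin (n + 1) → ℝ) (hu : u ⬝ᵥ u = 1)
    (hl : u (Fin.last n) ≤ 0) (μ : ℝ) (hμ : Bᵀ *ᵥ (B *ᵥ u) = μ • u) :
    ∃ C : Matrix (Fin k) (Fin n) ℝ, B = snocM9 C (B *ᵥ u) * hh9 (zz9 u) ∧ 
      snocM9 C (B *ᵥ u) = B * hh9 (zz9 u) ∧ Cᵀ *ᵥ (B *ᵥ u) = 0 ∧
      C * Cᵀ = B * Bᵀ - vecMulVec (B *ᵥ u) (B *ᵥ u) := by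
  have hH := hh9_last u hu hl
  have hHu : hh9 (zz9 u) *ᵥ u = Pi.single (Fin.last n) 1 := by
    have := congrArg (fun t => hh9 (zz9 u) *ᵥ t) hH
    simpa only [mulVec_mulVec, hh9_sq, one_mulVec] using this.symm
  have hD : snocM9 (Matrix.of fun i j => (B * hh9 (zz9 u)) i (Fin.castSucc j)) (B *ᵥ u) = B * hh9 (zz9 u) := by
    ext i j
    refine Fin.lastCases ?_ (fun j => ?_) j
    · simp only [snocM9, of_apply, Fin.snoc_last]
      have h2 : (B * hh9 (zz9 u)) *ᵥ (Pi.single (Fin.last n) 1) = B *ᵥ u := by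
        rw [← mulVec_mulVec, hH]
      rw [← h2, mulVec_single_one]
      rfl
    · simp [snocM9]
  refine ⟨Matrix.of fun i j => (B * hh9 (zz9 u)) i (Fin.castSucc j), ?_, hD, ?_, ?_⟩
  · rw [hD, Matrix.mul_assoc, hh9_sq, Matrix.mul_one]
  · ext j
    rw [← snocM9_T _ (B *ᵥ u), hD, transpose_mul, hh9_T, ← mulVec_mulVec, hμ, mulVec_smul, hHu]
    simp
  · rw [eq_sub_iff_add_eq, ← snocM9_gram, hD, transpose_mul, hh9_T, Matrix.mul_assoc, ← Matrix.mul_assoc (hh9 _),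
      hh9_sq, Matrix.one_mul]

lemma exists_degen9 {k n : ℕ} (B : Matrix (Fin k) (Fin (n+1)) ℝ) (u0 : Fin (n + 1) → ℝ) (hu0 : u0 ≠ 0)
    (hB : B *ᵥ u0 = 0) : ∃ u x, u ⬝ᵥ u = 1 ∧ u (Fin.last n) ≤ 0 ∧ B *ᵥ u = 0 ∧
      Pi.single (Fin.last n) 1 - u (Fin.last n) • u = Bᵀ *ᵥ x := by
  have hr : LinearMap.range (B * Bᵀ).mulVecLin = LinearMap.range B.mulVecLin := by
    apply Submodule.eq_of_le_of_finrank_eq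
    · rw [Matrix.mulVecLin_mul]
      exact LinearMap.range_comp_le_range _ _
    · exact Matrix.rank_self_mul_transpose B
  have hm : B *ᵥ (Pi.single (Fin.last n) 1) ∈ LinearMap.range (B * Bᵀ).mulVecLin := by
    rw [hr]; exact ⟨_, rfl⟩
  obtain ⟨x, hx⟩ := hm
  set f : Fin (n+1) → ℝ := Pi.single (Fin.last n) 1 - Bᵀ *ᵥ x with hf
  have hBf : B *ᵥ f = 0 := by
    rw [hf, mulVec_sub, ← hx, mulVec_mulVec, mulVecLin_apply, sub_self]
  have hker : ∀ v, B *ᵥ v = 0 → v ⬝ᵥ (Bᵀ *ᵥ x) = 0 := by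
    intro v hv
    rw [mulVec_transpose, dotProduct_comm, ← dotProduct_mulVec, hv, dotProduct_zero]
  have hlast : ∀ v : Fin (n+1) → ℝ, B *ᵥ v = 0 → v (Fin.last n) = v ⬝ᵥ f := by
    intro v hv
    rw [hf, dotProduct_sub, hker v hv]; simp
  by_cases h : f = 0
  · have hp : 0 < u0 ⬝ᵥ u0 := by
      rcases (dot_self_nonneg9 u0).lt_or_eq with h | h
      · exact h
      · exact absurd (dotProduct_self_eq_zero.1 h.symm) hu0
    refine ⟨(Real.sqrt (u0 ⬝ᵥ u0))⁻¹ • u0, x, ?_, ?_, ?_, ?_⟩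
    · rw [smul_dotProduct, dotProduct_smul, smul_smul, smul_eq_mul, ← mul_inv, Real.mul_self_sqrt hp.le, inv_mul_cancel₀ hp.ne']
    · rw [Pi.smul_apply, hlast _ hB, h]; simp
    · rw [mulVec_smul, hB, smul_zero]
    · rw [Pi.smul_apply, hlast _ hB, h]
      simp only [dotProduct_zero, smul_zero, zero_smul, sub_zero]
      exact sub_eq_zero.1 (hf ▸ h)
  · have hp : 0 < f ⬝ᵥ f := by
      rcases (dot_self_nonneg9 f).lt_or_eq with h' | h'
      · exact h'
      · exact absurd (dotProduct_self_eq_zero.1 h'.symm) h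
    have hsq := Real.mul_self_sqrt hp.le
    have hsp := Real.sqrt_pos.2 hp
    refine ⟨-(Real.sqrt (f ⬝ᵥ f))⁻¹ • f, x, ?_, ?_, ?_, ?_⟩
    · rw [smul_dotProduct, dotProduct_smul, smul_smul, smul_eq_mul, neg_mul_neg, ← mul_inv, hsq, inv_mul_cancel₀ hp.ne']
    · rw [Pi.smul_apply, hlast _ hBf, smul_eq_mul, neg_mul]
      have : 0 ≤ (Real.sqrt (f ⬝ᵥ f))⁻¹ * (f ⬝ᵥ f) := by positivity
      linarith
    · rw [mulVec_smul, hBf, smul_zero]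
    · rw [Pi.smul_apply, hlast _ hBf, smul_smul, smul_eq_mul]
      have : -(Real.sqrt (f ⬝ᵥ f))⁻¹ * (f ⬝ᵥ f) * -(Real.sqrt (f ⬝ᵥ f))⁻¹ = 1 := by
        field_simp
        nlinarith
      rw [this, one_smul, hf]; simp

lemma gram9 {k n : ℕ} (X Y : Matrix (Fin k) (Fin n) ℝ) (h : X * Xᵀ = Y * Yᵀ) :
    ∃ q : Matrix (Fin n) (Fin n) ℝ, q * qᵀ = 1 ∧ X = Y * q := by
  let F : Matrix (Fin k) (Fin n) ℝ → ((Fin k → ℝ) →ₗ[ℝ] EuclideanSpace ℝ (Fin n)) := fun Z =>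
    (WithLp.linearEquiv 2 ℝ (Fin n → ℝ)).symm.toLinearMap ∘ₗ (Zᵀ).mulVecLin
  have hF : ∀ Z x j, F Z x j = (Zᵀ *ᵥ x) j := fun Z x j => rfl
  have hn : ∀ Z x, ‖F Z x‖ ^ 2 = x ⬝ᵥ ((Z * Zᵀ) *ᵥ x) := by
    intro Z x
    rw [EuclideanSpace.real_norm_sq_eq, ← mulVec_mulVec, dotProduct_mulVec, ← mulVec_transpose, dotProduct]
    simp only [hF, sq]
  have hn' : ∀ x, ‖F X x‖ = ‖F Y x‖ := by
    intro x
    have : ‖F X x‖ ^ 2 = ‖F Y x‖ ^ 2 := by rw [hn, hn, h]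
    exact (sq_eq_sq₀ (norm_nonneg _) (norm_nonneg _)).1 this
  have hk : LinearMap.ker (F Y) ≤ LinearMap.ker (F X) := by
    intro x hx
    rw [LinearMap.mem_ker] at hx ⊢
    rw [← norm_eq_zero, hn', hx, norm_zero]
  let L0 : LinearMap.range (F Y) →ₗ[ℝ] EuclideanSpace ℝ (Fin n) :=
    (LinearMap.ker (F Y)).liftQ (F X) hk ∘ₗ (F Y).quotKerEquivRange.symm.toLinearMap
  have hL0 : ∀ x, L0 ⟨F Y x, LinearMap.mem_range_self _ x⟩ = F X x := by
    intro x
    simp only [L0, LinearMap.comp_apply, LinearEquiv.coe_coe]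
    rw [LinearMap.quotKerEquivRange_symm_apply_image]
    rfl
  let L : LinearMap.range (F Y) →ₗᵢ[ℝ] EuclideanSpace ℝ (Fin n) := ⟨L0, by
    rintro ⟨_, x, rfl⟩
    rw [hL0, hn']; rfl⟩
  let T := L.extend
  have hT : ∀ x, T (F Y x) = F X x := by
    intro x
    have := L.extend_apply ⟨F Y x, LinearMap.mem_range_self _ x⟩
    rw [← hL0 x]
    exact this
  refine ⟨Matrix.of fun i j => T (EuclideanSpace.single i 1) j, ?_, ?_⟩
  · ext i j
    have := T.inner_map_map (EuclideanSpace.single i 1) (EuclideanSpace.single j 1)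
    rw [PiLp.inner_apply] at this
    simp only [mul_apply, transpose_apply, of_apply]
    simp only [RCLike.inner_apply, conj_trivial] at this
    rw [Finset.sum_congr rfl (fun l _ => mul_comm _ _), this]
    simp [one_apply, EuclideanSpace.inner_single_left, eq_comm]
  · ext i j
    have h1 := congrArg (fun v : EuclideanSpace ℝ (Fin n) => v j) (hT (Pi.single i 1))
    have h2 : F Y (Pi.single i 1) = ∑ l, Y i l • EuclideanSpace.single l (1:ℝ) := by
      ext l
      simp [hF, Finset.sum_apply, Pi.single_apply]
    have h3 : F X (Pi.single i 1) j = X i j := by simp [hF]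
    rw [h2] at h1
    simp only [h3] at h1
    rw [← h1, map_sum, mul_apply]
    simp

/-- The parametrization. -/
noncomputable def Phi9 {k n : ℕ} (p : Polynomial ℝ) (x : Matrix (Fin k) (Fin n) ℝ × (Fin k → ℝ)) :
    Matrix (Fin k) (Fin (n+1)) ℝ :=
  snocM9 x.1 (Polynomial.aeval (x.1 * x.1ᵀ) p *ᵥ x.2) * hh9 (x.1ᵀ *ᵥ x.2)

lemma cdmul9 {T : Type*} [NormedAddCommGroup T] [NormedSpace ℝ T] {a b c : ℕ}
    {F : T → Matrix (Fin a) (Fin b) ℝ} {H : T → Matrix (Fin b) (Fin c) ℝ}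
    (hF : ∀ i j, ContDiff ℝ 1 fun x => F x i j) (hH : ∀ i j, ContDiff ℝ 1 fun x => H x i j) :
    ∀ i j, ContDiff ℝ 1 fun x => (F x * H x) i j := by
  intro i j
  simp only [mul_apply]
  exact ContDiff.sum fun l _ => (hF i l).mul (hH l j)

lemma cdvec9 {T : Type*} [NormedAddCommGroup T] [NormedSpace ℝ T] {a b : ℕ}
    {F : T → Matrix (Fin a) (Fin b) ℝ} {H : T → Fin b → ℝ}
    (hF : ∀ i j, ContDiff ℝ 1 fun x => F x i j) (hH : ∀ i, ContDiff ℝ 1 fun x => H x i) :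
    ∀ i, ContDiff ℝ 1 fun x => (F x *ᵥ H x) i := by
  intro i
  simp only [mulVec, dotProduct]
  exact ContDiff.sum fun l _ => (hF i l).mul (hH l)

attribute [local instance] Matrix.normedSpace

lemma cdPhi9 {k n : ℕ} (p : Polynomial ℝ) : ContDiff ℝ 1 (Phi9 (k := k) (n := n) p) := by
  have h1 : ∀ i j, ContDiff ℝ 1 fun x : Matrix (Fin k) (Fin n) ℝ × (Fin k → ℝ) => x.1 i j := by
    intro i j
    exact contDiff_apply_apply ℝ ℝ i j |>.comp contDiff_fst
  have h2 : ∀ i, ContDiff ℝ 1 fun x : Matrix (Fin k) (Fin n) ℝ × (Fin k → ℝ) => x.2 i := by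
    intro i
    exact contDiff_apply ℝ ℝ i |>.comp contDiff_snd
  have h1T : ∀ i j, ContDiff ℝ 1 fun x : Matrix (Fin k) (Fin n) ℝ × (Fin k → ℝ) => x.1ᵀ i j :=
    fun i j => h1 j i
  have hpow : ∀ m : ℕ, ∀ i j, ContDiff ℝ 1 fun x : Matrix (Fin k) (Fin n) ℝ × (Fin k → ℝ) => ((x.1 * x.1ᵀ) ^ m) i j := by
    intro m
    induction m with
    | zero => intro i j; simp only [pow_zero]; exact contDiff_const
    | succ m ih => simp only [pow_succ]; exact cdmul9 ih (cdmul9 h1 h1T)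
  have hp : ∀ i j, ContDiff ℝ 1 fun x : Matrix (Fin k) (Fin n) ℝ × (Fin k → ℝ) => (Polynomial.aeval (x.1 * x.1ᵀ) p) i j := by
    intro i j
    simp only [Polynomial.aeval_eq_sum_range, Matrix.sum_apply, Matrix.smul_apply, smul_eq_mul]
    exact ContDiff.sum fun l _ => contDiff_const.mul (hpow l i j)
  have hz := cdvec9 h1T h2
  have hw := cdvec9 hp h2
  have hsn : ∀ j, ContDiff ℝ 1 fun x : Matrix (Fin k) (Fin n) ℝ × (Fin k → ℝ) => (Fin.snoc (x.1ᵀ *ᵥ x.2) (1:ℝ) : Fin (n+1) → ℝ) j := by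
    intro j
    refine Fin.lastCases ?_ (fun j => ?_) j
    · simp only [Fin.snoc_last]; exact contDiff_const
    · simp only [Fin.snoc_castSucc]; exact hz j
  have key : ∀ i j, ContDiff ℝ 1 fun x => Phi9 (k := k) (n := n) p x i j := by
    apply cdmul9
    · intro i j
      refine Fin.lastCases ?_ (fun j => ?_) j
      · simp only [snocM9, of_apply, Fin.snoc_last]; exact hw i
      · simp only [snocM9, of_apply, Fin.snoc_castSucc]; exact h1 i j
    · intro i j
      simp only [hh9, house9, Matrix.sub_apply, Matrix.smul_apply, vecMulVec_apply, smul_eq_mul, snoc_dot9]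
      refine contDiff_const.sub (ContDiff.mul (contDiff_const.div ?_ ?_) ((hsn i).mul (hsn j)))
      · simp only [dotProduct]
        exact (ContDiff.sum fun l _ => (hz l).mul (hz l)).add contDiff_const
      · intro x
        have := dot_self_nonneg9 (x.1ᵀ *ᵥ x.2)
        positivity
  exact contDiff_pi.2 fun i => contDiff_pi.2 fun j => key i j

lemma dimPhi9 {k n : ℕ} (p : Polynomial ℝ) (X : Set (Matrix (Fin k) (Fin n) ℝ)) :
    dimH (Phi9 p '' (X ×ˢ Set.univ)) ≤ dimH X + k :=
  ((cdPhi9 p).contDiffOn.dimH_image_le convex_univ (Set.subset_univ _)).trans (prodU9 k X)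

lemma aevC9 {k n : ℕ} (C : Matrix (Fin k) (Fin n) ℝ) (p : Polynomial ℝ) :
    Polynomial.aeval (C * Cᵀ) p * C = C * Polynomial.aeval (Cᵀ * C) p := by
  have hpow : ∀ m : ℕ, (C * Cᵀ) ^ m * C = C * (Cᵀ * C) ^ m := by
    intro m
    induction m with
    | zero => simp
    | succ m ih => rw [pow_succ', Matrix.mul_assoc, ih, pow_succ']; simp only [Matrix.mul_assoc]
  simp only [Polynomial.aeval_eq_sum_range, Matrix.sum_mul, Matrix.mul_sum, Matrix.smul_mul, Matrix.mul_smul, hpow]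

lemma aevw9 {k : ℕ} (M : Matrix (Fin k) (Fin k) ℝ) (p : Polynomial ℝ) (w : Fin k → ℝ) (h : M *ᵥ w = 0) :
    Polynomial.aeval M p *ᵥ w = p.coeff 0 • w := by
  conv_lhs => rw [← Polynomial.divX_mul_X_add p]
  simp [add_mulVec, ← mulVec_mulVec, h, Algebra.algebraMap_eq_smul_one, smul_mulVec]

lemma orb9 {k n : ℕ} (hn : 1 ≤ n) (G : Subgroup (Matrix.orthogonalGroup (Fin k) ℝ)) (A : Matrix (Fin k) (Fin n) ℝ) :
    ∃ A2, {C | ∃ g ∈ G, C * Cᵀ = (g : Matrix (Fin k) (Fin k) ℝ) * (A * Aᵀ) * (g : Matrix (Fin k) (Fin k) ℝ)ᵀ} ⊆ orbit9 G A ∪ orbit9 G A2 := by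
  let J : Matrix (Fin n) (Fin n) ℝ := diagonal (Function.update 1 ⟨0, hn⟩ (-1))
  have hJ : J * J = 1 := by
    simp only [J, diagonal_mul_diagonal]
    rw [← diagonal_one]
    congr 1
    ext i
    by_cases h : i = ⟨0, hn⟩ <;> simp [h, Function.update_apply]
  have hJT : Jᵀ = J := diagonal_transpose _
  have hJd : J.det = -1 := by
    simp only [J, det_diagonal]
    rw [Finset.prod_update_of_mem (Finset.mem_univ _)]
    simp
  refine ⟨A * J, ?_⟩
  rintro C ⟨g, hg, hC⟩
  obtain ⟨q, hq, hCq⟩ := gram9 C ((g : Matrix (Fin k) (Fin k) ℝ) * A) (by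
    rw [hC, transpose_mul]; simp only [Matrix.mul_assoc])
  have hqd : q.det * q.det = 1 := by
    have := congrArg det hq
    rwa [det_mul, det_transpose, det_one] at this
  have hq' : qᵀ * q = 1 := mul_eq_one_comm.1 hq
  rcases mul_self_eq_one_iff.1 hqd with h | h
  · left
    refine ⟨g, hg, qᵀ, ?_, by simpa using hCq⟩
    rw [mem_specialOrthogonalGroup_iff, mem_orthogonalGroup_iff]
    exact ⟨by simpa [star_eq_conjTranspose] using hq', by simpa using h⟩
  · right
    refine ⟨g, hg, qᵀ * J, ?_, ?_⟩
    · rw [mem_specialOrthogonalGroup_iff, mem_orthogonalGroup_iff]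
      refine ⟨?_, by simp [h, hJd]⟩
      rw [transpose_mul, hJT, transpose_transpose,
        Matrix.mul_assoc, ← Matrix.mul_assoc J, hJ, Matrix.one_mul, hq']
    · rw [transpose_mul, hJT, transpose_transpose, hCq]
      simp only [Matrix.mul_assoc]
      rw [← Matrix.mul_assoc J J, hJ, Matrix.one_mul]

lemma cover9 {k n : ℕ} (G : Subgroup (Matrix.orthogonalGroup (Fin k) ℝ)) (A : Matrix (Fin k) (Fin (n+1)) ℝ) :
    ∃ (A' : Matrix (Fin k) (Fin n) ℝ) (p : Polynomial ℝ), orbit9 G A ⊆ 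
      Phi9 p '' ({C | ∃ g ∈ G, C * Cᵀ = (g : Matrix (Fin k) (Fin k) ℝ) * (A' * A'ᵀ) * (g : Matrix (Fin k) (Fin k) ℝ)ᵀ} ×ˢ Set.univ) := by
  have hgram : ∀ (g : orthogonalGroup (Fin k) ℝ) (h : Matrix (Fin (n+1)) (Fin (n+1)) ℝ), hᵀ * h = 1 →
      ((g : Matrix (Fin k) (Fin k) ℝ) * A * hᵀ) * ((g : Matrix (Fin k) (Fin k) ℝ) * A * hᵀ)ᵀ =
      (g : Matrix (Fin k) (Fin k) ℝ) * (A * Aᵀ) * (g : Matrix (Fin k) (Fin k) ℝ)ᵀ := by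
    intro g h hh
    simp only [transpose_mul, transpose_transpose, Matrix.mul_assoc]
    rw [← Matrix.mul_assoc hᵀ h, hh, Matrix.one_mul]
  have horth : ∀ h ∈ specialOrthogonalGroup (Fin (n+1)) ℝ, hᵀ * h = 1 := by
    intro h hh
    have := (mem_orthogonalGroup_iff' _ _).1 (mem_specialOrthogonalGroup_iff.1 hh).1
    simpa [star_eq_conjTranspose] using this
  have hgo : ∀ g : orthogonalGroup (Fin k) ℝ, (g : Matrix (Fin k) (Fin k) ℝ)ᵀ * (g : Matrix (Fin k) (Fin k) ℝ) = 1 := by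
    intro g
    have := (mem_orthogonalGroup_iff' _ _).1 g.2
    simpa [star_eq_conjTranspose] using this
  by_cases hker : ∃ u0 ≠ 0, A *ᵥ u0 = 0
  · obtain ⟨u0, hu0, hA⟩ := hker
    obtain ⟨u, x, hu, hl, hAu, -⟩ := exists_degen9 A u0 hu0 hA
    obtain ⟨A', -, -, -, hA'⟩ := split9 A u hu hl 0 (by rw [hAu]; simp)
    rw [hAu] at hA'
    simp only [vecMulVec_zero, sub_zero] at hA'
    refine ⟨A', 0, ?_⟩
    rintro B ⟨g, hg, h, hh, rfl⟩
    have hh' := horth h hh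
    have hB : ((g : Matrix (Fin k) (Fin k) ℝ) * A * hᵀ) *ᵥ (h *ᵥ u0) = 0 := by
      rw [mulVec_mulVec, Matrix.mul_assoc, hh', Matrix.mul_one, ← mulVec_mulVec, hA, mulVec_zero]
    have hhu : h *ᵥ u0 ≠ 0 := by
      intro h0
      have := congrArg (fun t => hᵀ *ᵥ t) h0
      simp only [mulVec_mulVec, hh', one_mulVec, mulVec_zero] at this
      exact hu0 this
    have hBB := hgram g h hh'
    set B := (g : Matrix (Fin k) (Fin k) ℝ) * A * hᵀ with hBdef
    obtain ⟨v, y, hv, hvl, hBv, hy⟩ := exists_degen9 B _ hhu hB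
    obtain ⟨C, hBC, hCB, -, hC⟩ := split9 B v hv hvl 0 (by rw [hBv]; simp)
    rw [hBv] at hBC hCB hC
    simp only [vecMulVec_zero, sub_zero] at hC
    refine ⟨(C, -(1 - v (Fin.last n))⁻¹ • y), ⟨⟨g, hg, by rw [hC, hBB, hA']⟩, trivial⟩, ?_⟩
    have hz : Cᵀ *ᵥ (-(1 - v (Fin.last n))⁻¹ • y) = zz9 v := by
      have hs : (1 - v (Fin.last n)) ≠ 0 := by linarith
      ext j
      rw [mulVec_smul, Pi.smul_apply, ← snocM9_T C 0, hCB, transpose_mul, hh9_T, ← mulVec_mulVec, ← hy,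
        mulVec_sub, mulVec_smul, hh9_last v hv hvl]
      have hHu : hh9 (zz9 v) *ᵥ v = Pi.single (Fin.last n) 1 := by
        have := congrArg (fun t => hh9 (zz9 v) *ᵥ t) (hh9_last v hv hvl)
        simpa only [mulVec_mulVec, hh9_sq, one_mulVec] using this.symm
      rw [hHu]
      simp [zz9]
      field_simp
    simp only [Phi9, hz, map_zero, zero_mulVec]
    exact hBC.symm
  · push Not at hker
    -- eigenvector
    have hherm : (Aᵀ * A).IsHermitian := by
      simpa using isHermitian_conjTranspose_mul_self A
    obtain ⟨u, μ, hu, hl, hμ⟩ : ∃ u : Fin (n+1) → ℝ, ∃ μ : ℝ, u ⬝ᵥ u = 1 ∧ u (Fin.last n) ≤ 0 ∧ Aᵀ *ᵥ (A *ᵥ u) = μ • u := by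
      let b := hherm.eigenvectorBasis (Fin.last n)
      have h1 : (⇑b) ⬝ᵥ (⇑b) = 1 := by
        have h2 : ‖b‖ = 1 := hherm.eigenvectorBasis.orthonormal.1 _
        have h3 := EuclideanSpace.real_norm_sq_eq b
        rw [h2] at h3
        simp only [dotProduct, ← sq]
        rw [← h3]; norm_num
      have h2 := hherm.mulVec_eigenvectorBasis (Fin.last n)
      rcases le_total (b (Fin.last n)) 0 with h | h
      · exact ⟨_, _, h1, h, by rw [mulVec_mulVec]; exact h2⟩
      · refine ⟨-⇑b, hherm.eigenvalues (Fin.last n), by simpa using h1, by simpa using h, ?_⟩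
        rw [mulVec_mulVec, mulVec_neg, smul_neg]
        exact congrArg _ h2
    obtain ⟨A', hA1, hA2, hA3, hA4⟩ := split9 A u hu hl μ hμ
    -- injectivity of the truncated matrix
    have hinj : ∀ (B : Matrix (Fin k) (Fin (n+1)) ℝ) (C : Matrix (Fin k) (Fin n) ℝ) (w : Fin k → ℝ) (z : Fin n → ℝ), (∀ x, B *ᵥ x = 0 → x = 0) →
        snocM9 C w = (B * hh9 z : Matrix (Fin k) (Fin (n+1)) ℝ) → (Cᵀ * C).det ≠ 0 := by
      intro B C w z hB hC hdet
      obtain ⟨x, hx0, hx⟩ := exists_mulVec_eq_zero_iff.2 hdet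
      have hCx : C *ᵥ x = 0 := by
        rw [← dotProduct_self_eq_zero]
        rw [dotProduct_mulVec, ← mulVec_transpose, mulVec_mulVec, hx, zero_dotProduct]
      have h1 : snocM9 C w *ᵥ (Fin.snoc x (0:ℝ) : Fin (n+1) → ℝ) = 0 := by
        rw [snocM9_mulVec]
        simp [hCx]
      rw [hC, ← mulVec_mulVec] at h1
      have h2 := congrArg (fun t => hh9 z *ᵥ t) (hB _ h1)
      simp only [mulVec_mulVec, hh9_sq, one_mulVec, mulVec_zero] at h2
      apply hx0
      ext j
      simpa using congrFun h2 j.castSucc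
    have hdetA := hinj A A' _ _ (fun x hx => by_contra fun h => hker x h hx) hA2
    have hc0 : (A'ᵀ * A').charpoly.coeff 0 ≠ 0 := by
      intro h
      apply hdetA
      rw [det_eq_sign_charpoly_coeff, h, mul_zero]
    refine ⟨A', Polynomial.C ((A'ᵀ * A').charpoly.coeff 0)⁻¹ * (A'ᵀ * A').charpoly, ?_⟩
    rintro B ⟨g, hg, h, hh, rfl⟩
    have hh' := horth h hh
    have hh2 : h * hᵀ = 1 := mul_eq_one_comm.1 hh'
    have hBB := hgram g h hh'
    have hBinj : ∀ x, ((g : Matrix (Fin k) (Fin k) ℝ) * A * hᵀ) *ᵥ x = 0 → x = 0 := by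
      intro x hx
      have h1 := congrArg (fun t => (g : Matrix (Fin k) (Fin k) ℝ)ᵀ *ᵥ t) hx
      simp only [mulVec_mulVec, ← Matrix.mul_assoc, hgo, Matrix.one_mul, mulVec_zero] at h1
      rw [← mulVec_mulVec] at h1
      have h2 := by_contra fun h => hker _ h h1
      have h3 := congrArg (fun t => h *ᵥ t) h2
      simpa only [mulVec_mulVec, hh2, one_mulVec, mulVec_zero] using h3
    obtain ⟨s, hs, hsl⟩ : ∃ s : ℝ, s * s = 1 ∧ s * (h *ᵥ u) (Fin.last n) ≤ 0 := by
      rcases le_total ((h *ᵥ u) (Fin.last n)) 0 with h | h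
      · exact ⟨1, by norm_num, by linarith⟩
      · exact ⟨-1, by norm_num, by linarith⟩
    have hBv : ((g : Matrix (Fin k) (Fin k) ℝ) * A * hᵀ) *ᵥ (s • (h *ᵥ u)) = s • ((g : Matrix (Fin k) (Fin k) ℝ) *ᵥ (A *ᵥ u)) := by
      rw [mulVec_smul, mulVec_mulVec, Matrix.mul_assoc, hh', Matrix.mul_one, ← mulVec_mulVec]
    obtain ⟨C, hBC, hCB, hCw, hC⟩ := split9 ((g : Matrix (Fin k) (Fin k) ℝ) * A * hᵀ) (s • (h *ᵥ u))
      (by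
        rw [smul_dotProduct, dotProduct_smul, smul_smul, hs, one_smul, dotProduct_mulVec, ← mulVec_transpose,
          mulVec_mulVec, hh', one_mulVec, hu]) hsl μ (by
        rw [hBv, mulVec_smul, transpose_mul, transpose_mul, transpose_transpose, smul_comm]
        congr 1
        rw [← mulVec_mulVec, ← mulVec_mulVec, mulVec_mulVec _ (g : Matrix (Fin k) (Fin k) ℝ)ᵀ, hgo, one_mulVec, hμ, mulVec_smul])
    have hdetC := hinj _ C _ _ hBinj hCB
    set B := (g : Matrix (Fin k) (Fin k) ℝ) * A * hᵀ with hBdef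
    set v := s • (h *ᵥ u) with hv
    have hCC : C * Cᵀ = (g : Matrix (Fin k) (Fin k) ℝ) * (A' * A'ᵀ) * (g : Matrix (Fin k) (Fin k) ℝ)ᵀ := by
      rw [hC, hBB, hA4, hBv, Matrix.mul_sub, Matrix.sub_mul, smul_vecMulVec, vecMulVec_smul, smul_smul, hs, one_smul]
      congr 1
      rw [mul_vecMulVec, vecMulVec_mul, vecMul_transpose]
    have hchar : (Cᵀ * C).charpoly = (A'ᵀ * A').charpoly := by
      obtain ⟨q, hq, hCq⟩ := gram9 C ((g : Matrix (Fin k) (Fin k) ℝ) * A') (by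
        rw [hCC, transpose_mul]; simp only [Matrix.mul_assoc])
      have hq' : qᵀ * q = 1 := mul_eq_one_comm.1 hq
      have : (qᵀ * (A'ᵀ * A') * q).charpoly = (A'ᵀ * A').charpoly := by
        have h3 := charpoly_units_conj ⟨qᵀ, q, hq', hq⟩ (A'ᵀ * A')
        rwa [← coe_units_inv] at h3
      rw [← this, hCq]
      congr 1
      simp only [transpose_mul, Matrix.mul_assoc]
      rw [← Matrix.mul_assoc (g : Matrix (Fin k) (Fin k) ℝ)ᵀ, hgo, Matrix.one_mul]
    let z' := (Cᵀ * C)⁻¹ *ᵥ zz9 v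
    refine ⟨(C, B *ᵥ v + C *ᵥ z'), ⟨⟨g, hg, hCC⟩, trivial⟩, ?_⟩
    have hz : Cᵀ *ᵥ (B *ᵥ v + C *ᵥ z') = zz9 v := by
      rw [mulVec_add, hCw, zero_add, mulVec_mulVec, mulVec_mulVec, mul_nonsing_inv _ (isUnit_iff_ne_zero.2 hdetC), one_mulVec]
    have hw : Polynomial.aeval (C * Cᵀ) (Polynomial.C ((A'ᵀ * A').charpoly.coeff 0)⁻¹ * (A'ᵀ * A').charpoly) *ᵥ (B *ᵥ v + C *ᵥ z') = B *ᵥ v := by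
      rw [mulVec_add, aevw9 _ _ _ (by rw [← mulVec_mulVec, hCw, mulVec_zero]), mulVec_mulVec _ _ C, aevC9, map_mul,
        ← hchar, aeval_self_charpoly, hchar]
      simp [hc0]
    simp only [Phi9, hz, hw]
    exact hBC.symm

lemma final9 (k : ℕ) (G : Subgroup (Matrix.orthogonalGroup (Fin k) ℝ)) (n : ℕ) (hn : 1 ≤ n)
    (A : Matrix (Fin k) (Fin (n+1)) ℝ) :
    dimH (orbit9 G A) ≤ sSup {d : ℝ≥0∞ | ∃ A : Matrix (Fin k) (Fin n) ℝ, d = dimH (orbit9 G A)} + k := by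
  obtain ⟨A', p, h⟩ := cover9 G A
  obtain ⟨A2, h2⟩ := orb9 hn G A'
  refine (dimH_mono h).trans ((dimPhi9 p _).trans ?_)
  gcongr
  refine (dimH_mono h2).trans ?_
  rw [dimH_union]
  exact max_le (le_sSup ⟨_, rfl⟩) (le_sSup ⟨_, rfl⟩)

end

theorem stmt9 (k : ℕ) (hk : 1 ≤ k)
    (G : Subgroup (Matrix.orthogonalGroup (Fin k) ℝ))
    (hG : IsClosed {M : Matrix (Fin k) (Fin k) ℝ | ∃ g ∈ G, M = g}) :
    ∀ n : ℕ, 1 ≤ n → cohom9 k G n ≤ cohom9 k G (n + 1) := by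
  intro n hn
  have h : sSup {d : ℝ≥0∞ | ∃ A : Matrix (Fin k) (Fin (n+1)) ℝ, d = dimH (orbit9 G A)} ≤
      sSup {d : ℝ≥0∞ | ∃ A : Matrix (Fin k) (Fin n) ℝ, d = dimH (orbit9 G A)} + k := by
    apply sSup_le
    rintro _ ⟨A, rfl⟩
    exact final9 k G n hn A
  unfold cohom9
  refine le_trans (le_of_eq ?_) (tsub_le_tsub_left h _)
  have : ((k * (n + 1) : ℕ) : ℝ≥0∞) = (k * n : ℕ) + (k : ℝ≥0∞) := by push_cast; ring
  rw [this]
  exact (ENNReal.add_sub_add_eq_sub_right (ENNReal.natCast_ne_top k)).symm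
end

section
/- (Monotonicity Lemma, complex case.) Let k ≥ 1 and let G be a compact (closed) subgroup of the unitary group U(k). For each n ≥ 1, let c(n) denote the cohomogeneity of the action of G × U(n) on Matrix (Fin k) (Fin n) ℂ given by (g,h)·A = g A h*, i.e. c(n) = 2kn minus the supremum over A of the Hausdorff dimension of the orbit of A. Then c(n) ≤ c(n+1) for all n ≥ 1. -/
open Matrix ENNReal

attribute [local instance] Matrix.normedAddCommGroup

/-- The orbit of `A` under the action `(g,h)·A = g A h*` of `G × U(n)` on `k × n`
complex matrices, for a subgroup `G` of `U(k)`. -/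
def orbit10 {k n : ℕ} (G : Subgroup (Matrix.unitaryGroup (Fin k) ℂ))
    (A : Matrix (Fin k) (Fin n) ℂ) : Set (Matrix (Fin k) (Fin n) ℂ) :=
  {B | ∃ g ∈ G, ∃ h ∈ Matrix.unitaryGroup (Fin n) ℂ,
    B = (g : Matrix (Fin k) (Fin k) ℂ) * A * (h : Matrix (Fin n) (Fin n) ℂ)ᴴ}

/-- The cohomogeneity of the action of `G × U(n)` on `k × n` complex matrices: the real
dimension `2·k·n` minus the supremum of the Hausdorff dimensions of the orbits. -/
noncomputable def cohom10 (k : ℕ) (G : Subgroup (Matrix.unitaryGroup (Fin k) ℂ))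
    (n : ℕ) : ℝ≥0∞ :=
  (2 * k * n : ℕ) - sSup {d : ℝ≥0∞ | ∃ A : Matrix (Fin k) (Fin n) ℂ, d = dimH (orbit10 G A)}

section general
open Filter Topology

variable {E : Type*} [NormedRing E] [NormedAlgebra ℝ E] [FiniteDimensional ℝ E]

structure IsGrp (S : Set E) : Prop where
  closed : IsClosed S
  one : (1 : E) ∈ S
  mul : ∀ x ∈ S, ∀ y ∈ S, x * y ∈ S
  inv : ∀ x ∈ S, ∃ y ∈ S, x * y = 1 ∧ y * x = 1

lemma exp_neg_mem {S : Set E} (hS : IsGrp S) {L : E} (h : NormedSpace.exp L ∈ S) :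
    NormedSpace.exp (-L) ∈ S := by
  let _ : NormedAlgebra ℚ E := NormedAlgebra.restrictScalars ℚ ℝ E
  have : CompleteSpace E := FiniteDimensional.complete ℝ E
  obtain ⟨y, hy, h1, h2⟩ := hS.inv _ h
  have h3 : NormedSpace.exp (-L) * NormedSpace.exp L = 1 := by
    rw [← NormedSpace.exp_add_of_commute (Commute.neg_left (Commute.refl L))]; simp
  have : NormedSpace.exp (-L) = y := left_inv_eq_right_inv h3 h1
  rwa [this]

lemma exp_nat_mem {S : Set E} (hS : IsGrp S) {L : E} (h : NormedSpace.exp L ∈ S) (n : ℕ) :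
    NormedSpace.exp ((n : ℝ) • L) ∈ S := by
  let _ : NormedAlgebra ℚ E := NormedAlgebra.restrictScalars ℚ ℝ E
  have : CompleteSpace E := FiniteDimensional.complete ℝ E
  induction n with
  | zero => simpa using hS.one
  | succ n ih =>
    have : ((n + 1 : ℕ) : ℝ) • L = (n : ℝ) • L + L := by push_cast; rw [add_smul, one_smul]
    rw [this, NormedSpace.exp_add_of_commute ((Commute.refl L).smul_left _)]
    exact hS.mul _ ih _ h

lemma exp_int_mem {S : Set E} (hS : IsGrp S) {L : E} (h : NormedSpace.exp L ∈ S) (z : ℤ) :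
    NormedSpace.exp ((z : ℝ) • L) ∈ S := by
  obtain ⟨n, rfl | rfl⟩ := z.eq_nat_or_neg
  · exact_mod_cast exp_nat_mem hS h n
  · have := exp_neg_mem hS (exp_nat_mem hS h n)
    rw [← neg_smul] at this
    exact_mod_cast this

lemma exists_log : ∃ l : E → E, l 1 = 0 ∧ HasFDerivAt l (ContinuousLinearMap.id ℝ E) 1 ∧
    ∀ᶠ y in 𝓝 (1 : E), NormedSpace.exp (l y) = y := by
  let _ : NormedAlgebra ℚ E := NormedAlgebra.restrictScalars ℚ ℝ E
  have : CompleteSpace E := FiniteDimensional.complete ℝ E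
  have hf : HasStrictFDerivAt (NormedSpace.exp : E → E)
      ((ContinuousLinearEquiv.refl ℝ E : E ≃L[ℝ] E) : E →L[ℝ] E) 0 :=
    hasStrictFDerivAt_exp_zero (𝕂 := ℝ)
  refine ⟨hf.localInverse _ _ _, ?_, ?_, ?_⟩
  · have := hf.localInverse_apply_image
    rwa [NormedSpace.exp_zero] at this
  · have := hf.to_localInverse.hasFDerivAt
    rw [NormedSpace.exp_zero] at this
    exact this
  · have := hf.eventually_right_inverse
    rwa [NormedSpace.exp_zero] at this

lemma key {S : Set E} (hS : IsGrp S) {ι : Type*} {l : Filter ι} [l.NeBot] (x : ι → E) (c : ι → ℝ)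
    (hx : ∀ᶠ i in l, x i ∈ S)
    (hx1 : Tendsto x l (𝓝 1)) {Z : E} (hZ : Tendsto (fun i => c i • (x i - 1)) l (𝓝 Z)) :
    NormedSpace.exp Z ∈ S := by
  let _ : NormedAlgebra ℚ E := NormedAlgebra.restrictScalars ℚ ℝ E
  have : CompleteSpace E := FiniteDimensional.complete ℝ E
  obtain ⟨L, hL1, hLd, hLe⟩ := exists_log (E := E)
  have h0 : Tendsto (fun i => L (x i)) l (𝓝 0) := by
    have := hLd.continuousAt.tendsto.comp hx1
    rwa [hL1] at this
  have h1 : Tendsto (fun i => c i • L (x i)) l (𝓝 Z) := by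
    have ho := hLd.isLittleO.comp_tendsto hx1
    have ho2 : (fun i => c i • (L (x i) - (x i - 1))) =o[l] (fun i => c i • (x i - 1)) := by
      have := (Asymptotics.isBigO_refl c l).smul_isLittleO ho
      simpa [Function.comp_def, hL1] using this
    have ho3 := ho2.trans_isBigO (hZ.isBigO_one ℝ)
    rw [Asymptotics.isLittleO_one_iff] at ho3
    have := ho3.add hZ
    rw [zero_add] at this
    refine this.congr fun i => ?_
    rw [← smul_add]; simp
  have h2 : Tendsto (fun i => (⌊c i⌋ : ℝ) • L (x i)) l (𝓝 Z) := by
    have h3 : Tendsto (fun i => Int.fract (c i) • L (x i)) l (𝓝 0) := by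
      refine squeeze_zero_norm (a := fun i => ‖L (x i)‖) (fun i => ?_) (by simpa using h0.norm)
      rw [norm_smul]
      refine mul_le_of_le_one_left (norm_nonneg _) ?_
      rw [Real.norm_eq_abs, abs_of_nonneg (Int.fract_nonneg _)]
      exact (Int.fract_lt_one _).le
    have := h1.sub h3
    rw [sub_zero] at this
    refine this.congr fun i => ?_
    rw [← sub_smul, Int.self_sub_fract]
  have h3 : Tendsto (fun i => NormedSpace.exp ((⌊c i⌋ : ℝ) • L (x i))) l (𝓝 (NormedSpace.exp Z)) :=
    h2.exp
  refine hS.closed.mem_of_tendsto h3 ?_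
  filter_upwards [hx, hx1.eventually hLe] with i hi hi2
  exact exp_int_mem hS (by rwa [hi2]) _

lemma hasDerivAt_expc (X : E) : HasDerivAt (fun t : ℝ => NormedSpace.exp (t • X)) X 0 := by
  have : CompleteSpace E := FiniteDimensional.complete ℝ E
  simpa using hasDerivAt_exp_smul_const (𝕂 := ℝ) X (0 : ℝ)

/-- Lie algebra of a closed linear group. -/
def lieSub (S : Set E) (hS : IsGrp S) : Submodule ℝ E where
  carrier := {X | ∀ t : ℝ, NormedSpace.exp (t • X) ∈ S}
  zero_mem' := fun t => by simpa using hS.one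
  smul_mem' := fun c X hX t => by rw [smul_smul]; exact hX _
  add_mem' := by
    intro X Y hX hY t
    have hd : HasDerivAt (fun s : ℝ => NormedSpace.exp (s • X) * NormedSpace.exp (s • Y)) (X + Y) 0 := by
      have h := (hasDerivAt_expc X).mul (hasDerivAt_expc Y)
      simp only [zero_smul, NormedSpace.exp_zero, mul_one, one_mul] at h
      exact h
    have hc := hd.continuousAt.tendsto.mono_left (nhdsWithin_le_nhds (s := {0}ᶜ))
    have hs := hd.tendsto_slope_zero
    refine key hS (l := 𝓝[≠] (0:ℝ)) _ (fun s => t * s⁻¹) (Eventually.of_forall fun s => hS.mul _ (hX s) _ (hY s))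
      (by simpa using hc) ?_
    have := hs.const_smul t
    simpa [smul_smul] using this

lemma mem_lieSub {S : Set E} {hS : IsGrp S} {X : E} :
    X ∈ lieSub S hS ↔ ∀ t : ℝ, NormedSpace.exp (t • X) ∈ S := Iff.rfl

lemma exp_mem_of_lie {S : Set E} {hS : IsGrp S} {X : E} (h : X ∈ lieSub S hS) :
    NormedSpace.exp X ∈ S := by simpa using h 1

lemma transversal {S : Set E} (hS : IsGrp S) (q : Submodule ℝ E) (hq : Disjoint (lieSub S hS) q) :
    ∀ᶠ Z : q in 𝓝 0, NormedSpace.exp (Z : E) ∈ S → Z = 0 := by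
  let _ : NormedAlgebra ℚ E := NormedAlgebra.restrictScalars ℚ ℝ E
  have : CompleteSpace E := FiniteDimensional.complete ℝ E
  by_contra hcon
  rw [not_eventually] at hcon
  obtain ⟨z, hz0, hz⟩ := exists_seq_forall_of_frequently hcon
  push Not at hz
  have hn : ∀ n, ‖z n‖ ≠ 0 := fun n => norm_ne_zero_iff.2 (hz n).2
  have hsph : ∀ n, ‖z n‖⁻¹ • z n ∈ Metric.sphere (0 : q) 1 := by
    intro n
    rw [mem_sphere_zero_iff_norm, norm_smul, norm_inv, norm_norm, inv_mul_cancel₀ (hn n)]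
  obtain ⟨w, hw, φ, hφ, hlim⟩ := (isCompact_sphere (0 : q) 1).tendsto_subseq hsph
  have hz0' : Tendsto (fun n => ((z (φ n) : q) : E)) atTop (𝓝 0) := by
    have := (continuous_subtype_val.tendsto (0 : q)).comp (hz0.comp hφ.tendsto_atTop)
    simpa [Function.comp_def] using this
  have hlim' : Tendsto (fun n => ‖z (φ n)‖⁻¹ • ((z (φ n) : q) : E)) atTop (𝓝 (w : E)) := by
    have := (continuous_subtype_val.tendsto w).comp hlim
    simpa [Function.comp_def] using this
  have hexp0 : HasFDerivAt (NormedSpace.exp : E → E) (1 : E →L[ℝ] E) 0 := hasFDerivAt_exp_zero (𝕂 := ℝ)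
  have hmem : (w : E) ∈ lieSub S hS := by
    intro t
    refine key hS (l := atTop) (fun n => NormedSpace.exp ((z (φ n) : q) : E)) (fun n => t * ‖z (φ n)‖⁻¹)
      (Eventually.of_forall fun n => (hz _).1) (by simpa using hz0'.exp) ?_
    have ho := hexp0.isLittleO.comp_tendsto hz0'
    have ho2 : (fun n => ‖z (φ n)‖⁻¹ • (NormedSpace.exp ((z (φ n) : q) : E) - 1 - (z (φ n) : E)))
        =o[atTop] (fun n => ‖z (φ n)‖⁻¹ • ((z (φ n) : q) : E)) := by
      have := (Asymptotics.isBigO_refl (fun n => ‖z (φ n)‖⁻¹) atTop).smul_isLittleO ho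
      simpa [Function.comp_def] using this
    have ho3 := ho2.trans_isBigO (hlim'.isBigO_one ℝ)
    rw [Asymptotics.isLittleO_one_iff] at ho3
    have := (ho3.add hlim').const_smul t
    rw [zero_add] at this
    refine this.congr fun n => ?_
    rw [← smul_add, smul_smul]; simp
  have hw0 : (w : E) = 0 := Submodule.disjoint_def.1 hq _ hmem w.2
  have : w = 0 := Subtype.ext hw0
  simp [this] at hw


variable {W : Type*} [NormedAddCommGroup W] [NormedSpace ℝ W] [FiniteDimensional ℝ W]

lemma hasStrict_sub (m : Submodule ℝ E) :
    HasStrictFDerivAt (fun X : m => NormedSpace.exp (X : E)) m.subtypeL 0 := by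
  have : CompleteSpace E := FiniteDimensional.complete ℝ E
  have h : HasStrictFDerivAt (NormedSpace.exp : E → E) (1 : E →L[ℝ] E) (m.subtypeL 0) := by
    simpa using hasStrictFDerivAt_exp_zero (𝕂 := ℝ) (𝔸 := E)
  exact h.comp (0 : m) m.subtypeL.hasStrictFDerivAt

lemma lower_bound {S : Set E} (hS : IsGrp S) (f : E → W) (L : E →ₗ[ℝ] W)
    (hf : HasStrictFDerivAt f (LinearMap.toContinuousLinearMap L) 1) :
    (Module.finrank ℝ ((lieSub S hS).map L) : ℝ≥0∞) ≤ dimH (f '' S) := by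
  have : CompleteSpace E := FiniteDimensional.complete ℝ E
  have : CompleteSpace W := FiniteDimensional.complete ℝ W
  set R := (lieSub S hS).map L with hR
  obtain ⟨π, hπ⟩ := R.subtype.exists_leftInverse_of_injective (by simp)
  have hπ' : ∀ r : R, π r = r := fun r => LinearMap.congr_fun hπ r
  let Pc : W →L[ℝ] R := LinearMap.toContinuousLinearMap π
  let Lc : E →L[ℝ] W := LinearMap.toContinuousLinearMap L
  have hf' : HasStrictFDerivAt f Lc (NormedSpace.exp ((0 : lieSub S hS) : E)) := by
    simpa using hf
  have hd := (Pc.hasStrictFDerivAt.comp _ hf').comp (0 : lieSub S hS) (hasStrict_sub (lieSub S hS))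
  have hsurj : ((Pc ∘L Lc) ∘L (lieSub S hS).subtypeL).range = ⊤ := by
    rw [LinearMap.range_eq_top]
    rintro ⟨r, hr⟩
    obtain ⟨X, hX, rfl⟩ := hr
    exact ⟨⟨X, hX⟩, hπ' ⟨L X, _⟩⟩
  have hmap := hd.map_nhds_eq_of_surj hsurj
  have hmem := Filter.image_mem_map (m := fun X : lieSub S hS => Pc (f (NormedSpace.exp (X : E))))
    (Filter.univ_mem (f := 𝓝 (0 : lieSub S hS)))
  rw [hmap] at hmem
  rw [← Real.dimH_of_mem_nhds hmem]
  refine le_trans (dimH_mono ?_) (Pc.lipschitz.dimH_image_le (f '' S))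
  rintro _ ⟨X, -, rfl⟩
  exact ⟨_, ⟨_, exp_mem_of_lie X.2, rfl⟩, rfl⟩

lemma fix_exp (f : E → W) (ρ : E → W →ₗ[ℝ] W) (hρ : ∀ x y, f (x * y) = ρ x (f y))
    (L : E →ₗ[ℝ] W) (hf : HasStrictFDerivAt f (LinearMap.toContinuousLinearMap L) 1)
    (Y : E) (hY : L Y = 0) :
    f (NormedSpace.exp Y) = f 1 := by
  let _ : NormedAlgebra ℚ E := NormedAlgebra.restrictScalars ℚ ℝ E
  have : CompleteSpace E := FiniteDimensional.complete ℝ E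
  have h0 : HasDerivAt (fun t : ℝ => f (NormedSpace.exp (t • Y))) 0 0 := by
    have hf' : HasFDerivAt f (LinearMap.toContinuousLinearMap L) (NormedSpace.exp ((0:ℝ) • Y)) := by
      simpa using hf.hasFDerivAt
    have := hf'.comp_hasDerivAt (0:ℝ) (hasDerivAt_expc Y)
    simpa [hY, Function.comp_def] using this
  have hd : ∀ t : ℝ, HasDerivAt (fun t : ℝ => f (NormedSpace.exp (t • Y))) 0 t := by
    intro t
    have h1 : HasDerivAt (fun s : ℝ => f (NormedSpace.exp (s • Y))) 0 (t - t) := by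
      rwa [sub_self]
    have h2 := h1.comp_sub_const t t
    have h3 := (LinearMap.toContinuousLinearMap (ρ (NormedSpace.exp (t • Y)))).hasFDerivAt.comp_hasDerivAt t h2
    rw [map_zero] at h3
    refine h3.congr_of_eventuallyEq (Eventually.of_forall fun s => ?_)
    have : s • Y = t • Y + (s - t) • Y := by rw [← add_smul]; congr 1; ring
    change f (NormedSpace.exp (s • Y)) = ρ (NormedSpace.exp (t • Y)) (f (NormedSpace.exp ((s - t) • Y)))
    rw [← hρ, this, NormedSpace.exp_add_of_commute]
    exact ((Commute.refl Y).smul_left _).smul_right _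
  have := is_const_of_deriv_eq_zero (fun t => (hd t).differentiableAt) (fun t => (hd t).deriv) 1 0
  simpa using this

lemma local_form {S : Set E} (hS : IsGrp S) (L : E →ₗ[ℝ] W) :
    ∃ m : Submodule ℝ E, Module.finrank ℝ m ≤ Module.finrank ℝ ((lieSub S hS).map L) ∧
    ∀ᶠ x in 𝓝 (1 : E), x ∈ S → ∃ X ∈ m, ∃ Y, L Y = 0 ∧ x = NormedSpace.exp X * NormedSpace.exp Y := by
  have : CompleteSpace E := FiniteDimensional.complete ℝ E
  let _ : NormedAlgebra ℚ E := NormedAlgebra.restrictScalars ℚ ℝ E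
  set g := lieSub S hS with hg
  set s := g ⊓ LinearMap.ker L with hs
  obtain ⟨s', hs'⟩ := s.exists_isCompl
  obtain ⟨q, hq⟩ := g.exists_isCompl
  set m := g ⊓ s' with hm
  have hms : s ⊔ m = g := by
    rw [hm, inf_comm, ← sup_inf_assoc_of_le s' (inf_le_left : s ≤ g), hs'.sup_eq_top, top_inf_eq]
  refine ⟨m, ?_, ?_⟩
  · refine LinearMap.finrank_le_finrank_of_injective
      (f := L.restrict (p := m) (q := g.map L) (fun x hx => ⟨x, hx.1, rfl⟩)) ?_
    rw [injective_iff_map_eq_zero]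
    rintro ⟨x, hx⟩ h0
    have h0' : L x = 0 := congrArg Subtype.val h0
    exact Subtype.ext (Submodule.disjoint_def.1 hs'.disjoint x ⟨hx.1, h0'⟩ hx.2)
  · have h1 : HasStrictFDerivAt (fun z : m × s × q => NormedSpace.exp (z.1 : E))
        (m.subtypeL ∘L ContinuousLinearMap.fst ℝ m (s × q)) 0 :=
      (hasStrict_sub m).comp (0 : m × s × q) (ContinuousLinearMap.fst ℝ m (s × q)).hasStrictFDerivAt
    have h2 : HasStrictFDerivAt (fun z : m × s × q => NormedSpace.exp (z.2.1 : E))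
        (s.subtypeL ∘L (ContinuousLinearMap.fst ℝ s q ∘L ContinuousLinearMap.snd ℝ m (s × q))) 0 :=
      (hasStrict_sub s).comp (0 : m × s × q)
        (ContinuousLinearMap.fst ℝ s q ∘L ContinuousLinearMap.snd ℝ m (s × q)).hasStrictFDerivAt
    have h3 : HasStrictFDerivAt (fun z : m × s × q => NormedSpace.exp (z.2.2 : E))
        (q.subtypeL ∘L (ContinuousLinearMap.snd ℝ s q ∘L ContinuousLinearMap.snd ℝ m (s × q))) 0 :=
      (hasStrict_sub q).comp (0 : m × s × q)
        (ContinuousLinearMap.snd ℝ s q ∘L ContinuousLinearMap.snd ℝ m (s × q)).hasStrictFDerivAt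
    have h4 := (h1.mul' h2).mul' h3
    have hmap := h4.map_nhds_eq_of_surj (by
      rw [LinearMap.range_eq_top]
      intro x
      have hx : x ∈ g ⊔ q := by rw [hq.sup_eq_top]; trivial
      obtain ⟨y, hy, c, hc, rfl⟩ := Submodule.mem_sup.1 hx
      rw [← hms] at hy
      obtain ⟨b, hb, a, ha, rfl⟩ := Submodule.mem_sup.1 hy
      refine ⟨(⟨a, ha⟩, ⟨b, hb⟩, ⟨c, hc⟩), ?_⟩
      simp
      abel)
    have hev : ∀ᶠ z : m × s × q in 𝓝 0, NormedSpace.exp (z.2.2 : E) ∈ S → z.2.2 = 0 := by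
      have ht : Tendsto (fun z : m × s × q => z.2.2) (𝓝 0) (𝓝 0) :=
        (continuous_snd.comp continuous_snd).tendsto (0 : m × s × q)
      exact ht.eventually (transversal hS q hq.disjoint)
    have hmem := Filter.image_mem_map (m := (fun z : m × s × q => NormedSpace.exp (z.1 : E)) *
      (fun z : m × s × q => NormedSpace.exp (z.2.1 : E)) *
      (fun z : m × s × q => NormedSpace.exp (z.2.2 : E))) hev
    rw [hmap] at hmem
    simp only [Pi.mul_apply, Prod.fst_zero, Prod.snd_zero, ZeroMemClass.coe_zero,
      NormedSpace.exp_zero, mul_one] at hmem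
    filter_upwards [hmem] with x hx hxS
    obtain ⟨⟨X, Y, Z⟩, hz, rfl⟩ := hx
    have hZ : Z = 0 := by
      apply hz
      have hXY := hS.mul _ (exp_mem_of_lie X.2.1) _ (exp_mem_of_lie Y.2.1)
      obtain ⟨y, hy, -, hy2⟩ := hS.inv _ hXY
      have := hS.mul _ hy _ hxS
      simp only [Pi.mul_apply] at this
      rw [← mul_assoc, hy2, one_mul] at this
      exact this
    refine ⟨X, X.2, Y, Y.2.2, ?_⟩
    simp [hZ]

lemma upper_bound {S : Set E} (hS : IsGrp S) (f : E → W) (ρ : E → W →ₗ[ℝ] W)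
    (hρ : ∀ x y, f (x * y) = ρ x (f y)) (hcd : ContDiff ℝ 1 f)
    (L : E →ₗ[ℝ] W) (hf : HasStrictFDerivAt f (LinearMap.toContinuousLinearMap L) 1) :
    dimH (f '' S) ≤ (Module.finrank ℝ ((lieSub S hS).map L) : ℝ≥0∞) := by
  have : CompleteSpace E := FiniteDimensional.complete ℝ E
  have : CompleteSpace W := FiniteDimensional.complete ℝ W
  have : SecondCountableTopology E := by
    have := FiniteDimensional.proper ℝ E
    infer_instance
  obtain ⟨m, hm, hloc⟩ := local_form hS L
  have hinv : ∀ x : S, ∃ y ∈ S, (x : E) * y = 1 ∧ y * x = 1 := fun x => hS.inv x x.2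
  choose! iv hiv using hS.inv
  let N : E → Set E := fun x => {y | iv x * y ∈ S → ∃ X ∈ m, ∃ Y, L Y = 0 ∧ iv x * y = NormedSpace.exp X * NormedSpace.exp Y}
  obtain ⟨t, htS, htc, hcov⟩ := TopologicalSpace.countable_cover_nhdsWithin (s := S) (f := N) (by
    intro x hx
    apply mem_nhdsWithin_of_mem_nhds
    have hc : Tendsto (fun y => iv x * y) (𝓝 x) (𝓝 1) := by
      have : Continuous (fun y : E => iv x * y) := continuous_const.mul continuous_id
      have h := this.tendsto x
      rwa [(hiv x hx).2.2] at h
    exact hc.eventually hloc)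
  let F : m → W := fun X => f (NormedSpace.exp (X : E))
  have hF : ContDiff ℝ 1 F := by
    have he : ContDiff ℝ 1 (NormedSpace.exp : E → E) :=
      contDiff_iff_contDiffAt.2 fun x => (NormedSpace.exp_analytic (𝕂 := ℝ) x).contDiffAt
    exact hcd.comp (he.comp m.subtypeL.contDiff)
  have hFd := hF.dimH_range_le
  have hsub : f '' S ⊆ ⋃ x ∈ t, (ρ x) '' (Set.range F) := by
    rintro _ ⟨y, hy, rfl⟩
    obtain ⟨x, hx, hxy⟩ := Set.mem_iUnion₂.1 (hcov hy)
    obtain ⟨X, hX, Y, hY, he⟩ := hxy (hS.mul _ (hiv x (htS hx)).1 _ hy)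
    refine Set.mem_iUnion₂.2 ⟨x, hx, F ⟨X, hX⟩, ⟨_, rfl⟩, ?_⟩
    have hy2 : y = x * (NormedSpace.exp X * NormedSpace.exp Y) := by
      rw [← he, ← mul_assoc, (hiv x (htS hx)).2.1, one_mul]
    have hfix := fix_exp f ρ hρ L hf Y hY
    change ρ x (f (NormedSpace.exp X)) = f y
    rw [hy2, hρ, hρ, hfix, ← hρ _ 1, mul_one]
  refine (dimH_mono hsub).trans ?_
  rw [dimH_bUnion htc]
  refine iSup₂_le fun x _ => ?_
  refine (((LinearMap.toContinuousLinearMap (ρ x)).lipschitz.dimH_image_le (Set.range F))).trans ?_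
  exact hFd.trans (by exact_mod_cast hm)

lemma dimH_eq {S : Set E} (hS : IsGrp S) (f : E → W) (ρ : E → W →ₗ[ℝ] W)
    (hρ : ∀ x y, f (x * y) = ρ x (f y)) (hcd : ContDiff ℝ 1 f)
    (L : E →ₗ[ℝ] W) (hf : HasFDerivAt f (LinearMap.toContinuousLinearMap L) 1) :
    dimH (f '' S) = (Module.finrank ℝ ((lieSub S hS).map L) : ℝ≥0∞) := by
  have hs : HasStrictFDerivAt f (LinearMap.toContinuousLinearMap L) 1 :=
    hcd.contDiffAt.hasStrictFDerivAt' hf (by simp)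
  exact le_antisymm (upper_bound hS f ρ hρ hcd L hs) (lower_bound hS f L hs)

lemma lieSub_skew [StarRing E] [ContinuousStar E] [StarModule ℝ E] {S : Set E} (hS : IsGrp S)
    (hSu : S ⊆ {x | x ∈ unitary E}) (X : E) (h : X ∈ lieSub S hS) : star X = -X := by
  let _ : NormedAlgebra ℚ E := NormedAlgebra.restrictScalars ℚ ℝ E
  have : CompleteSpace E := FiniteDimensional.complete ℝ E
  have h1 := hasDerivAt_expc X
  have h2 := hasDerivAt_expc (star X)
  have h3 := h2.mul h1
  simp only [zero_smul, NormedSpace.exp_zero, mul_one, one_mul] at h3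
  have h4 : ((fun t : ℝ => NormedSpace.exp (t • star X)) * (fun t : ℝ => NormedSpace.exp (t • X)))
      = fun _ => (1 : E) := by
    funext t
    have := (hSu (h t)).1
    rw [NormedSpace.star_exp, star_smul, star_trivial] at this
    exact this
  rw [h4] at h3
  have := h3.unique (hasDerivAt_const (0 : ℝ) (1 : E))
  exact eq_neg_of_add_eq_zero_left this

lemma lieSub_unitary [StarRing E] [ContinuousStar E] [StarModule ℝ E] {S : Set E} (hS : IsGrp S)
    (hSu : S = {x | x ∈ unitary E}) (X : E) : X ∈ lieSub S hS ↔ star X = -X := by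
  let _ : NormedAlgebra ℚ E := NormedAlgebra.restrictScalars ℚ ℝ E
  have : CompleteSpace E := FiniteDimensional.complete ℝ E
  subst hSu
  constructor
  · exact lieSub_skew hS (le_refl _) X
  · intro h t
    apply NormedSpace.exp_mem_unitary_of_mem_skewAdjoint
    rw [skewAdjoint.mem_iff, star_smul, h, star_trivial, smul_neg]

lemma IsGrp.prod {E₂ : Type*} [NormedRing E₂] {S : Set E} {S₂ : Set E₂} (h1 : IsGrp S)
    (h2 : IsGrp S₂) : IsGrp (S ×ˢ S₂) where
  closed := h1.closed.prod h2.closed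
  one := ⟨h1.one, h2.one⟩
  mul := fun x hx y hy => ⟨h1.mul _ hx.1 _ hy.1, h2.mul _ hx.2 _ hy.2⟩
  inv := fun x hx => by
    obtain ⟨y, hy, a, b⟩ := h1.inv _ hx.1
    obtain ⟨y', hy', a', b'⟩ := h2.inv _ hx.2
    exact ⟨(y, y'), ⟨hy, hy'⟩, Prod.ext a a', Prod.ext b b'⟩

lemma dimH_bilin {E₂ : Type*} [NormedRing E₂] [NormedAlgebra ℝ E₂] [FiniteDimensional ℝ E₂]
    {S : Set E} {S₂ : Set E₂} (h1 : IsGrp S) (h2 : IsGrp S₂) (B : E →ₗ[ℝ] E₂ →ₗ[ℝ] W)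
    (σ : E → E₂ → W →ₗ[ℝ] W) (hσ : ∀ x y x' y', B (x * x') (y * y') = σ x y (B x' y')) :
    dimH {w | ∃ x ∈ S, ∃ y ∈ S₂, w = B x y} =
    (Module.finrank ℝ (((lieSub S h1).prod (lieSub S₂ h2)).map
      ((B.flip 1).coprod (B 1))) : ℝ≥0∞) := by
  have : CompleteSpace E := FiniteDimensional.complete ℝ E
  have : CompleteSpace E₂ := FiniteDimensional.complete ℝ E₂
  let _ : NormedAlgebra ℚ E := NormedAlgebra.restrictScalars ℚ ℝ E
  let _ : NormedAlgebra ℚ E₂ := NormedAlgebra.restrictScalars ℚ ℝ E₂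
  have hl : lieSub (S ×ˢ S₂) (h1.prod h2) = (lieSub S h1).prod (lieSub S₂ h2) := by
    ext ⟨X, Y⟩
    rw [Submodule.mem_prod, mem_lieSub, mem_lieSub, mem_lieSub, ← forall_and]
    refine forall_congr' fun t => ?_
    rw [Set.mem_prod, Prod.fst_exp, Prod.snd_exp]
    rfl
  let Bc : E →L[ℝ] E₂ →L[ℝ] W := LinearMap.toContinuousLinearMap
    ((LinearMap.toContinuousLinearMap : (E₂ →ₗ[ℝ] W) ≃ₗ[ℝ] _).toLinearMap ∘ₗ B)
  have hBc : ∀ x y, Bc x y = B x y := fun x y => rfl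
  have hb := Bc.isBoundedBilinearMap
  have key := dimH_eq (h1.prod h2) (fun z : E × E₂ => Bc z.1 z.2) (fun z => σ z.1 z.2)
    (fun x y => hσ _ _ _ _) hb.contDiff ((B.flip 1).coprod (B 1)) (by
      have := hb.hasFDerivAt (1 : E × E₂)
      have heq : LinearMap.toContinuousLinearMap ((B.flip 1).coprod (B 1)) = hb.deriv 1 := by
        refine ContinuousLinearMap.ext fun z => ?_
        simp [hBc, add_comm]
      rw [heq]
      exact this)
  rw [← hl, ← key]
  congr 1
  ext w
  constructor
  · rintro ⟨x, hx, y, hy, rfl⟩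
    exact ⟨(x, y), ⟨hx, hy⟩, rfl⟩
  · rintro ⟨⟨x, y⟩, ⟨hx, hy⟩, rfl⟩
    exact ⟨x, hx, y, hy, rfl⟩

end general


section concrete

/-- skew-Hermitian matrices -/
def skewM (n : ℕ) : Submodule ℝ (Matrix (Fin n) (Fin n) ℂ) where
  carrier := {Y | Yᴴ = -Y}
  zero_mem' := by simp
  add_mem' := by
    intro a b ha hb
    simp only [Set.mem_ofPred_eq] at *
    rw [conjTranspose_add, ha, hb, neg_add]
  smul_mem' := by
    intro c a ha
    simp only [Set.mem_ofPred_eq] at *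
    rw [conjTranspose_smul, ha, star_trivial, smul_neg]

lemma mem_skewM {n : ℕ} {Y : Matrix (Fin n) (Fin n) ℂ} : Y ∈ skewM n ↔ Yᴴ = -Y := Iff.rfl

/-- The infinitesimal action. -/
def infAct {k n : ℕ} (A : Matrix (Fin k) (Fin n) ℂ) :
    (Matrix (Fin k) (Fin k) ℂ × Matrix (Fin n) (Fin n) ℂ) →ₗ[ℝ] Matrix (Fin k) (Fin n) ℂ where
  toFun z := z.1 * A + A * z.2ᴴ
  map_add' := by
    intro x y
    simp only [Prod.fst_add, Prod.snd_add, conjTranspose_add, Matrix.add_mul, Matrix.mul_add]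
    abel
  map_smul' := by
    intro c x
    simp [conjTranspose_smul]

/-- The bilinear form of the action. -/
noncomputable def bilAct {k n : ℕ} (A : Matrix (Fin k) (Fin n) ℂ) :
    Matrix (Fin k) (Fin k) ℂ →ₗ[ℝ] Matrix (Fin n) (Fin n) ℂ →ₗ[ℝ] Matrix (Fin k) (Fin n) ℂ :=
  LinearMap.mk₂ ℝ (fun x y => x * A * yᴴ)
    (by intros; simp [Matrix.add_mul])
    (by intros; simp)
    (by intros; simp [Matrix.mul_add])
    (by intros; simp [conjTranspose_smul])

/-- The action. -/
def actM {k n : ℕ} (x : Matrix (Fin k) (Fin k) ℂ) (y : Matrix (Fin n) (Fin n) ℂ) :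
    Matrix (Fin k) (Fin n) ℂ →ₗ[ℝ] Matrix (Fin k) (Fin n) ℂ where
  toFun A := x * A * yᴴ
  map_add' := by intros; simp [Matrix.mul_add, Matrix.add_mul]
  map_smul' := by intros; simp

attribute [local instance] Matrix.normedSpace

theorem exists_lie (k : ℕ) (G : Subgroup (Matrix.unitaryGroup (Fin k) ℂ))
    (hG : IsClosed {M : Matrix (Fin k) (Fin k) ℂ | ∃ g ∈ G, M = g}) :
    ∃ 𝔤 : Submodule ℝ (Matrix (Fin k) (Fin k) ℂ), 𝔤 ≤ skewM k ∧
      ∀ (n : ℕ) (A : Matrix (Fin k) (Fin n) ℂ), dimH (orbit10 G A) =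
        (Module.finrank ℝ ((𝔤.prod (skewM n)).map (infAct A)) : ℝ≥0∞) := by
  have hcs : ∀ n : ℕ, ContinuousStar (Matrix (Fin n) (Fin n) ℂ) := fun n =>
    ⟨(continuous_id (X := Matrix (Fin n) (Fin n) ℂ)).matrix_conjTranspose⟩
  have hUc : ∀ n : ℕ, IsClosed {M : Matrix (Fin n) (Fin n) ℂ | M ∈ unitary (Matrix (Fin n) (Fin n) ℂ)} := by
    intro n
    have : {M : Matrix (Fin n) (Fin n) ℂ | M ∈ unitary (Matrix (Fin n) (Fin n) ℂ)} =
      {M | Mᴴ * M = 1} ∩ {M | M * Mᴴ = 1} := rfl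
    rw [this]
    exact (isClosed_eq (by fun_prop) continuous_const).inter
      (isClosed_eq (by fun_prop) continuous_const)
  let iR : ∀ n : ℕ, NormedRing (Matrix (Fin n) (Fin n) ℂ) := fun n => Matrix.linftyOpNormedRing
  let iA : ∀ n : ℕ, NormedAlgebra ℝ (Matrix (Fin n) (Fin n) ℂ) := fun n => Matrix.linftyOpNormedAlgebra
  have hcs' : ∀ n : ℕ, @ContinuousStar (Matrix (Fin n) (Fin n) ℂ)
      (iR n).toPseudoMetricSpace.toUniformSpace.toTopologicalSpace _ := hcs
  have hS : IsGrp {M : Matrix (Fin k) (Fin k) ℂ | ∃ g ∈ G, M = g} := {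
    closed := hG
    one := ⟨1, G.one_mem, rfl⟩
    mul := by
      rintro _ ⟨g, hg, rfl⟩ _ ⟨h, hh, rfl⟩
      exact ⟨g * h, G.mul_mem hg hh, rfl⟩
    inv := by
      rintro _ ⟨g, hg, rfl⟩
      refine ⟨_, ⟨g⁻¹, G.inv_mem hg, rfl⟩, ?_, ?_⟩
      · exact congrArg Subtype.val (mul_inv_cancel g)
      · exact congrArg Subtype.val (inv_mul_cancel g) }
  have hU : ∀ n : ℕ, IsGrp {M : Matrix (Fin n) (Fin n) ℂ | M ∈ unitary (Matrix (Fin n) (Fin n) ℂ)} :=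
    fun n => {
    closed := hUc n
    one := (unitary _).one_mem
    mul := fun x hx y hy => (unitary _).mul_mem hx hy
    inv := fun x hx => ⟨star x, Unitary.star_mem hx, hx.2, hx.1⟩ }
  refine ⟨lieSub _ hS, ?_, ?_⟩
  · intro X hX
    refine lieSub_skew hS ?_ X hX
    rintro _ ⟨g, hg, rfl⟩
    exact g.2
  · intro n A
    have hl : lieSub _ (hU n) = skewM n := by
      ext Y
      exact lieSub_unitary (hU n) rfl Y
    have := dimH_bilin hS (hU n) (bilAct A) actM (by
      intro x y x' y'
      simp [bilAct, actM, conjTranspose_mul, Matrix.mul_assoc])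
    rw [hl] at this
    have e : ((bilAct A).flip 1).coprod ((bilAct A) 1) = infAct A := by
      refine LinearMap.ext fun z => ?_
      simp [bilAct, infAct]
    rw [e] at this
    rw [← this]
    congr 1
    ext w
    constructor
    · rintro ⟨g, hg, h, hh, rfl⟩
      exact ⟨g, ⟨g, hg, rfl⟩, h, hh, rfl⟩
    · rintro ⟨_, ⟨g, hg, rfl⟩, h, hh, rfl⟩
      exact ⟨g, hg, h, hh, rfl⟩

end concrete

section linalg

lemma finrank_map_add_ker {V V' : Type*} [AddCommGroup V] [Module ℝ V] [FiniteDimensional ℝ V]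
    [AddCommGroup V'] [Module ℝ V'] (f : V →ₗ[ℝ] V') (P : Submodule ℝ V) :
    Module.finrank ℝ (P.map f) + Module.finrank ℝ (P ⊓ LinearMap.ker f : Submodule ℝ V)
      = Module.finrank ℝ P := by
  have h := (f.domRestrict P).finrank_range_add_finrank_ker
  rw [LinearMap.range_domRestrict, LinearMap.ker_domRestrict] at h
  rw [← h, ← Submodule.map_comap_subtype, Submodule.finrank_map_subtype_eq]

/-- restriction -/
def restr (k n : ℕ) : (Matrix (Fin k) (Fin k) ℂ × Matrix (Fin (n+1)) (Fin (n+1)) ℂ) →ₗ[ℝ]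
    (Matrix (Fin k) (Fin k) ℂ × Matrix (Fin n) (Fin n) ℂ) where
  toFun z := (z.1, z.2.submatrix Fin.castSucc Fin.castSucc)
  map_add' := by intros; rfl
  map_smul' := by intros; rfl

lemma restr_apply {k n : ℕ} (z) :
    restr k n z = (z.1, z.2.submatrix Fin.castSucc Fin.castSucc) := rfl

lemma infAct_apply {k n : ℕ} (A : Matrix (Fin k) (Fin n) ℂ) (z) :
    infAct A z = z.1 * A + A * z.2ᴴ := rfl

lemma restr_mem {k n : ℕ} (𝔤 : Submodule ℝ (Matrix (Fin k) (Fin k) ℂ)) {z}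
    (hz : z ∈ 𝔤.prod (skewM (n+1))) : restr k n z ∈ 𝔤.prod (skewM n) := by
  refine ⟨hz.1, ?_⟩
  have h2 := mem_skewM.1 hz.2
  change (z.2.submatrix _ _)ᴴ = - z.2.submatrix _ _
  rw [conjTranspose_submatrix, h2]; rfl

lemma finrank_P_le {k n : ℕ} (𝔤 : Submodule ℝ (Matrix (Fin k) (Fin k) ℂ)) :
    Module.finrank ℝ (𝔤.prod (skewM (n+1))) ≤ Module.finrank ℝ (𝔤.prod (skewM n)) + (2 * n + 1) := by
  let f : (𝔤.prod (skewM (n+1))) →ₗ[ℝ] (𝔤.prod (skewM n)) × (Fin n → ℂ) × ℝ :=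
    ((restr k n).restrict (fun z hz => restr_mem 𝔤 hz)).prod
      (LinearMap.prod
        { toFun := fun z j => z.1.2 (Fin.castSucc j) (Fin.last n)
          map_add' := by intros; rfl
          map_smul' := by intros; rfl }
        { toFun := fun z => (z.1.2 (Fin.last n) (Fin.last n)).im
          map_add' := by intros; simp
          map_smul' := by intros; simp })
  have hf : Function.Injective f := by
    rw [injective_iff_map_eq_zero]
    rintro ⟨⟨X, Y⟩, hX, hY⟩ h
    have hY' : ∀ i j, star (Y j i) = - Y i j := fun i j => congrFun (congrFun (mem_skewM.1 hY) i) j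
    have h1 : restr k n (X, Y) = 0 := congrArg Subtype.val (congrArg Prod.fst h)
    have h2 : ∀ j : Fin n, Y (Fin.castSucc j) (Fin.last n) = 0 := fun j =>
      congrFun (congrArg (fun z => z.2.1) h) j
    have h3 : (Y (Fin.last n) (Fin.last n)).im = 0 := congrArg (fun z => z.2.2) h
    have hX0 : X = 0 := congrArg Prod.fst h1
    have hY0 : ∀ i j : Fin n, Y (Fin.castSucc i) (Fin.castSucc j) = 0 := fun i j =>
      congrFun (congrFun (congrArg Prod.snd h1) i) j
    have : Y = 0 := by
      ext i j
      refine Fin.lastCases ?_ (fun i => ?_) i <;> refine Fin.lastCases ?_ (fun j => ?_) j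
      · have := hY' (Fin.last n) (Fin.last n)
        have hr := congrArg Complex.re this
        simp at hr
        apply Complex.ext
        · simp; linarith
        · simpa using h3
      · have := hY' (Fin.last n) (Fin.castSucc j)
        rw [h2] at this
        simpa using this.symm
      · exact h2 i
      · exact hY0 i j
    subst hX0 this
    rfl
  have := LinearMap.finrank_le_finrank_of_injective hf
  rw [Module.finrank_prod, Module.finrank_prod, finrank_real_of_complex] at this
  simpa [add_assoc] using this

/-- dimension of the infinitesimal orbit -/
noncomputable def rk {k n : ℕ} (𝔤 : Submodule ℝ (Matrix (Fin k) (Fin k) ℂ)) (A : Matrix (Fin k) (Fin n) ℂ) : ℕ :=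
  Module.finrank ℝ ((𝔤.prod (skewM n)).map (infAct A))

lemma infAct_castSucc {k n : ℕ} (A : Matrix (Fin k) (Fin (n+1)) ℂ) (z) (i : Fin k) (j : Fin n) :
    infAct A z i (Fin.castSucc j) = infAct (A.submatrix id Fin.castSucc) (restr k n z) i j
      + A i (Fin.last n) * star (z.2 (Fin.castSucc j) (Fin.last n)) := by
  simp [infAct_apply, restr_apply, Matrix.mul_apply, Fin.sum_univ_castSucc, add_assoc]

lemma infAct_last {k n : ℕ} (A : Matrix (Fin k) (Fin (n+1)) ℂ) (z) (i : Fin k) :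
    infAct A z i (Fin.last n) = (z.1 *ᵥ (fun i => A i (Fin.last n))) i
      + (∑ j : Fin n, A i (Fin.castSucc j) * star (z.2 (Fin.last n) (Fin.castSucc j)))
      + A i (Fin.last n) * star (z.2 (Fin.last n) (Fin.last n)) := by
  simp [infAct, Matrix.mul_apply, Fin.sum_univ_castSucc, add_assoc, Matrix.mulVec, dotProduct]

lemma rk_case1 {k n : ℕ} (𝔤 : Submodule ℝ (Matrix (Fin k) (Fin k) ℂ))
    (A : Matrix (Fin k) (Fin (n+1)) ℂ) (hA : ∀ i, A i (Fin.last n) = 0) :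
    rk 𝔤 A ≤ rk 𝔤 (A.submatrix id Fin.castSucc) + 2 * k := by
  let g : Matrix (Fin k) (Fin (n+1)) ℂ →ₗ[ℝ] Matrix (Fin k) (Fin n) ℂ :=
    { toFun := fun C => C.submatrix id Fin.castSucc
      map_add' := by intros; rfl
      map_smul' := by intros; rfl }
  let f : ((𝔤.prod (skewM (n+1))).map (infAct A)) →ₗ[ℝ]
      ((𝔤.prod (skewM n)).map (infAct (A.submatrix id Fin.castSucc))) × (Fin k → ℂ) :=
    (g.restrict (by
      rintro _ ⟨z, hz, rfl⟩
      refine ⟨restr k n z, restr_mem 𝔤 hz, ?_⟩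
      ext i j
      change _ = infAct A z i (Fin.castSucc j)
      rw [infAct_castSucc, hA]; simp)).prod
      { toFun := fun C i => C.1 i (Fin.last n)
        map_add' := by intros; rfl
        map_smul' := by intros; rfl }
  have hf : Function.Injective f := by
    rw [injective_iff_map_eq_zero]
    rintro ⟨C, hC⟩ h
    have h1 : C.submatrix id Fin.castSucc = 0 := congrArg Subtype.val (congrArg Prod.fst h)
    have h2 : ∀ i, C i (Fin.last n) = 0 := fun i => congrFun (congrArg Prod.snd h) i
    apply Subtype.ext
    ext i j
    refine Fin.lastCases ?_ (fun j => ?_) j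
    · exact h2 i
    · exact congrFun (congrFun h1 i) j
  have := LinearMap.finrank_le_finrank_of_injective hf
  rw [Module.finrank_prod, finrank_real_of_complex] at this
  simpa [rk] using this

/-- block diagonal -/
def blk {n : ℕ} (Y : Matrix (Fin n) (Fin n) ℂ) (c : ℂ) : Matrix (Fin (n+1)) (Fin (n+1)) ℂ :=
  fun i j => Fin.lastCases (motive := fun _ => ℂ) (Fin.lastCases (motive := fun _ => ℂ) c (fun _ => 0) j)
    (fun i' => Fin.lastCases (motive := fun _ => ℂ) 0 (fun j' => Y i' j') j) i

lemma blk_skew {n : ℕ} {Y : Matrix (Fin n) (Fin n) ℂ} {c : ℂ} (hY : Y ∈ skewM n) (hc : star c = -c) :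
    blk Y c ∈ skewM (n+1) := by
  have hY' : ∀ i j, star (Y j i) = - Y i j := fun i j => congrFun (congrFun (mem_skewM.1 hY) i) j
  rw [mem_skewM]
  ext i j
  rw [conjTranspose_apply, Matrix.neg_apply]
  refine Fin.lastCases ?_ (fun i => ?_) i <;> refine Fin.lastCases ?_ (fun j => ?_) j <;> simp only [blk, Fin.lastCases_last, Fin.lastCases_castSucc, hc, hY', star_zero, neg_zero]

lemma rk_case2 {k n : ℕ} (𝔤 : Submodule ℝ (Matrix (Fin k) (Fin k) ℂ)) (h𝔤 : 𝔤 ≤ skewM k)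
    (A : Matrix (Fin k) (Fin (n+1)) ℂ) (d : Fin (n+1) → ℂ) (hd : ∀ i, d i ≠ 0)
    (hA : Aᴴ * A = diagonal d) :
    rk 𝔤 A ≤ rk 𝔤 (A.submatrix id Fin.castSucc) + 2 * k := by
  set B := A.submatrix id Fin.castSucc with hB
  set v : Fin k → ℂ := fun i => A i (Fin.last n) with hv
  set K := 𝔤.prod (skewM n) ⊓ LinearMap.ker (infAct B) with hK
  set KA := 𝔤.prod (skewM (n+1)) ⊓ LinearMap.ker (infAct A) with hKA
  let c : Matrix (Fin k) (Fin k) ℂ → ℂ := fun X => (star v ⬝ᵥ (X *ᵥ v)) / d (Fin.last n)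
  let ψ : (Matrix (Fin k) (Fin k) ℂ × Matrix (Fin n) (Fin n) ℂ) →ₗ[ℝ] (Fin k → ℂ) :=
    { toFun := fun z => z.1 *ᵥ v - c z.1 • v
      map_add' := by
        intro x y
        simp only [c, Prod.fst_add, Matrix.add_mulVec, dotProduct_add, add_div, add_smul]
        abel
      map_smul' := by
        intro r x
        simp only [c, Prod.smul_fst, Matrix.smul_mulVec, dotProduct_smul, smul_sub, RingHom.id_apply,
          smul_div_assoc, smul_assoc] }
  have hvv : star v ⬝ᵥ v = d (Fin.last n) := by
    have := congrFun (congrFun hA (Fin.last n)) (Fin.last n)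
    simpa [Matrix.mul_apply, dotProduct] using this
  have hBv : ∀ j : Fin n, star (fun i => A i (Fin.castSucc j)) ⬝ᵥ v = 0 := by
    intro j
    have := congrFun (congrFun hA (Fin.castSucc j)) (Fin.last n)
    rw [diagonal_apply_ne _ (Fin.castSucc_lt_last j).ne] at this
    simpa [Matrix.mul_apply, dotProduct] using this
  have hdr : star (d (Fin.last n)) = d (Fin.last n) := by
    rw [← hvv, ← star_dotProduct_star, star_star, dotProduct_comm]
  have hskew : ∀ X ∈ 𝔤, ∀ u w : Fin k → ℂ, star u ⬝ᵥ (X *ᵥ w) = - (star (X *ᵥ u) ⬝ᵥ w) := by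
    intro X hX u w
    have h := mem_skewM.1 (h𝔤 hX)
    rw [star_mulVec, h, dotProduct_mulVec, vecMul_neg, neg_dotProduct, neg_neg]
  have hc : ∀ X ∈ 𝔤, star (c X) = - c X := by
    intro X hX
    simp only [c]
    rw [star_div₀, hdr, ← star_dotProduct_star, star_star, ← neg_div, hskew X hX, neg_neg]
  have e1 := finrank_map_add_ker (infAct A) (𝔤.prod (skewM (n+1)))
  have e2 := finrank_map_add_ker (infAct B) (𝔤.prod (skewM n))
  have e3 := finrank_map_add_ker ψ K
  have e4 := finrank_P_le (n := n) 𝔤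
  have e5 : Module.finrank ℝ (K ⊓ LinearMap.ker ψ : Submodule ℝ _) ≤ Module.finrank ℝ KA := by
    refine le_trans (Submodule.finrank_mono ?_) (Submodule.finrank_map_le (restr k n) KA)
    rintro ⟨X, Y⟩ ⟨⟨⟨hX, hY⟩, hXY⟩, hψ⟩
    have hψ' : X *ᵥ v - c X • v = 0 := hψ
    have hXY' : infAct B (X, Y) = 0 := hXY
    have hr : restr k n (X, blk Y (c X)) = (X, Y) := by
      rw [restr_apply]
      refine Prod.ext rfl ?_
      ext i j
      simp [blk]
    refine ⟨(X, blk Y (c X)), ⟨⟨hX, blk_skew hY (hc X hX)⟩, ?_⟩, hr⟩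
    change infAct A _ = 0
    ext i j
    refine Fin.lastCases ?_ (fun j => ?_) j
    · rw [infAct_last]
      have := congrFun hψ' i
      simp only [blk, Fin.lastCases_last, Fin.lastCases_castSucc, star_zero, mul_zero,
        Finset.sum_const_zero, hc X hX]
      simp only [Pi.sub_apply, Pi.smul_apply, Pi.zero_apply, smul_eq_mul] at this
      change (X *ᵥ v) i + 0 + v i * (- c X) = 0
      linear_combination this
    · rw [infAct_castSucc, hr, hXY']
      simp [blk]
  have e6 : Module.finrank ℝ (K.map ψ) + 2 * (n + 1) ≤ 2 * k := by
    let N : Submodule ℂ (Fin k → ℂ) := LinearMap.ker (Aᴴ.mulVecLin)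
    have hle : K.map ψ ≤ N.restrictScalars ℝ := by
      rintro _ ⟨⟨X, Y⟩, ⟨⟨hX, hY⟩, hXY⟩, rfl⟩
      have hXY' : infAct B (X, Y) = 0 := hXY
      change Aᴴ *ᵥ (X *ᵥ v - c X • v) = 0
      ext j
      rw [mulVec_sub, mulVec_smul]
      refine Fin.lastCases ?_ (fun j => ?_) j
      · have h1 : (Aᴴ *ᵥ v) (Fin.last n) = d (Fin.last n) := hvv
        have h2 : (Aᴴ *ᵥ (X *ᵥ v)) (Fin.last n) = star v ⬝ᵥ (X *ᵥ v) := rfl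
        simp only [Pi.sub_apply, Pi.smul_apply, h1, h2, c, smul_eq_mul, Pi.zero_apply]
        rw [div_mul_cancel₀ _ (hd _), sub_self]
      · have h1 : (Aᴴ *ᵥ v) (Fin.castSucc j) = 0 := hBv j
        have h2 : (Aᴴ *ᵥ (X *ᵥ v)) (Fin.castSucc j) = star (fun i => A i (Fin.castSucc j)) ⬝ᵥ (X *ᵥ v) := rfl
        simp only [Pi.sub_apply, Pi.smul_apply, h1, h2, smul_zero, sub_zero, Pi.zero_apply]
        rw [hskew X hX, neg_eq_zero]
        have h3 : X *ᵥ (fun i => A i (Fin.castSucc j)) = - ∑ l, star (Y j l) • (fun i => A i (Fin.castSucc l)) := by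
          ext i
          have := congrFun (congrFun hXY' i) j
          simp [infAct, Matrix.mul_apply, hB] at this
          rw [Pi.neg_apply, Finset.sum_apply]
          simp only [Matrix.mulVec, dotProduct, Pi.smul_apply, smul_eq_mul]
          rw [eq_neg_iff_add_eq_zero, ← this]
          congr 1
          refine Finset.sum_congr rfl fun l _ => ?_
          rw [mul_comm]; rfl
        rw [h3, star_neg, neg_dotProduct, star_sum, sum_dotProduct, neg_eq_zero]
        refine Finset.sum_eq_zero fun l _ => ?_
        rw [star_smul, smul_dotProduct, hBv, smul_zero]
    have h1 := Submodule.finrank_mono hle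
    have h2 : Module.finrank ℝ (N.restrictScalars ℝ) = 2 * Module.finrank ℂ N :=
      finrank_real_of_complex N
    have h3 := (Aᴴ.mulVecLin).finrank_range_add_finrank_ker
    have h4 : n + 1 ≤ Aᴴ.rank := by
      have hu : IsUnit (diagonal d) := by
        rw [Matrix.isUnit_iff_isUnit_det, det_diagonal, isUnit_iff_ne_zero]
        exact Finset.prod_ne_zero_iff.2 fun i _ => hd i
      have := rank_of_isUnit _ hu
      rw [← hA] at this
      have h5 := rank_mul_le_left Aᴴ A
      rw [this] at h5
      simpa using h5
    have h6 : Aᴴ.rank = Module.finrank ℂ (LinearMap.range Aᴴ.mulVecLin) := rfl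
    rw [← h6, Module.finrank_fintype_fun_eq_card, Fintype.card_fin] at h3
    have h7 : Module.finrank ℂ N = Module.finrank ℂ (LinearMap.ker Aᴴ.mulVecLin) := rfl
    omega
  unfold rk
  rw [← hKA] at e1
  rw [← hK] at e2
  omega

end linalg

section final

lemma orbit_mul {k n : ℕ} (G : Subgroup (Matrix.unitaryGroup (Fin k) ℂ))
    (A : Matrix (Fin k) (Fin n) ℂ) (u : Matrix (Fin n) (Fin n) ℂ)
    (hu : u ∈ Matrix.unitaryGroup (Fin n) ℂ) : orbit10 G (A * u) = orbit10 G A := by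
  have h2 : u * uᴴ = 1 := Matrix.mem_unitaryGroup_iff.1 hu
  have hu' : uᴴ ∈ Matrix.unitaryGroup (Fin n) ℂ := Unitary.star_mem hu
  ext B
  constructor
  · rintro ⟨g, hg, h, hh, rfl⟩
    refine ⟨g, hg, h * uᴴ, mul_mem hh hu', ?_⟩
    rw [conjTranspose_mul, conjTranspose_conjTranspose]
    simp only [Matrix.mul_assoc]
  · rintro ⟨g, hg, h, hh, rfl⟩
    refine ⟨g, hg, h * u, mul_mem hh hu, ?_⟩
    rw [conjTranspose_mul]
    simp only [Matrix.mul_assoc]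
    rw [← Matrix.mul_assoc u, h2, Matrix.one_mul]

lemma exists_diag {k n : ℕ} (A : Matrix (Fin k) (Fin n) ℂ) :
    ∃ u ∈ Matrix.unitaryGroup (Fin n) ℂ, ∃ d : Fin n → ℂ, (A * u)ᴴ * (A * u) = diagonal d := by
  have hH : (Aᴴ * A).IsHermitian := isHermitian_conjTranspose_mul_self A
  refine ⟨hH.eigenvectorUnitary, hH.eigenvectorUnitary.2, RCLike.ofReal ∘ hH.eigenvalues, ?_⟩
  · rw [← hH.conjStarAlgAut_star_eigenvectorUnitary, Unitary.conjStarAlgAut_star_apply,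
      conjTranspose_mul]
    simp only [Matrix.mul_assoc]
    rfl

open scoped ComplexOrder in
lemma rk_step {k n : ℕ} (G : Subgroup (Matrix.unitaryGroup (Fin k) ℂ))
    (hG : IsClosed {M : Matrix (Fin k) (Fin k) ℂ | ∃ g ∈ G, M = g})
    (A : Matrix (Fin k) (Fin (n+1)) ℂ) :
    ∃ B : Matrix (Fin k) (Fin n) ℂ, dimH (orbit10 G A) ≤ dimH (orbit10 G B) + (2 * k : ℕ) := by
  obtain ⟨𝔤, h𝔤, H⟩ := exists_lie k G hG
  have H' : ∀ (n : ℕ) (A : Matrix (Fin k) (Fin n) ℂ), dimH (orbit10 G A) = (rk 𝔤 A : ℝ≥0∞) := H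
  suffices ∃ u ∈ Matrix.unitaryGroup (Fin (n+1)) ℂ, ∃ B : Matrix (Fin k) (Fin n) ℂ,
      rk 𝔤 (A * u) ≤ rk 𝔤 B + 2 * k by
    obtain ⟨u, hu, B, hB⟩ := this
    refine ⟨B, ?_⟩
    rw [← orbit_mul G A u hu, H', H']
    exact_mod_cast hB
  obtain ⟨u, hu, d, hd⟩ := exists_diag A
  by_cases h : ∀ i, d i ≠ 0
  · exact ⟨u, hu, _, rk_case2 𝔤 h𝔤 (A * u) d h hd⟩
  · push Not at h
    obtain ⟨j, hj⟩ := h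
    have hcol : ∀ i, (A * u) i j = 0 := by
      have h1 := congrFun (congrFun hd j) j
      rw [diagonal_apply_eq, hj] at h1
      have h2 : star (fun i => (A * u) i j) ⬝ᵥ (fun i => (A * u) i j) = 0 := h1
      rw [dotProduct_star_self_eq_zero] at h2
      exact fun i => congrFun h2 i
    refine ⟨u.submatrix id (Equiv.swap j (Fin.last n)), ?_, _, rk_case1 𝔤 _ ?_⟩
    · rw [Matrix.mem_unitaryGroup_iff]
      have : u * uᴴ = 1 := Matrix.mem_unitaryGroup_iff.1 hu
      rw [star_eq_conjTranspose, conjTranspose_submatrix, submatrix_mul_equiv, this]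
      simp
    · intro i
      have := hcol i
      simpa [Matrix.mul_apply] using this

end final

theorem stmt10 (k : ℕ) (hk : 1 ≤ k)
    (G : Subgroup (Matrix.unitaryGroup (Fin k) ℂ))
    (hG : IsClosed {M : Matrix (Fin k) (Fin k) ℂ | ∃ g ∈ G, M = g}) :
    ∀ n : ℕ, 1 ≤ n → cohom10 k G n ≤ cohom10 k G (n + 1) := by
  intro n _
  unfold cohom10
  set s := sSup {d : ℝ≥0∞ | ∃ A : Matrix (Fin k) (Fin n) ℂ, d = dimH (orbit10 G A)} with hs
  have h1 : sSup {d : ℝ≥0∞ | ∃ A : Matrix (Fin k) (Fin (n+1)) ℂ, d = dimH (orbit10 G A)}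
      ≤ s + (2 * k : ℕ) := by
    refine sSup_le ?_
    rintro _ ⟨A, rfl⟩
    obtain ⟨B, hB⟩ := rk_step G hG A
    have h3 : dimH (orbit10 G B) ≤ s := le_sSup ⟨B, rfl⟩
    exact hB.trans (by gcongr)
  refine le_trans ?_ (tsub_le_tsub_left h1 _)
  have h2 : ((2 * k * (n + 1) : ℕ) : ℝ≥0∞) = (2 * k * n : ℕ) + (2 * k : ℕ) := by
    rw [← Nat.cast_add]; congr 1
  rw [h2, ENNReal.add_sub_add_eq_sub_right (ENNReal.natCast_ne_top _)]
end

section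
/- Let k ≥ 1 and let G be a compact (closed) subgroup of the orthogonal group O(k). For each n ≥ 1, let c(n) denote the cohomogeneity of the action of G × SO(n) on Matrix (Fin k) (Fin n) ℝ given by (g,h)·A = g A hᵀ. Then the sequence c(n) is eventually constant: there exist N and c₀ such that c(n) = c₀ for all n ≥ N. -/
open Matrix ENNReal

attribute [local instance] Matrix.normedAddCommGroup

/-- The orbit of `A` under the action `(g,h)·A = g A hᵀ` of `G × SO(n)` on `k × n`
real matrices, for a subgroup `G` of `O(k)`. -/
def orbit11 {k n : ℕ} (G : Subgroup (Matrix.orthogonalGroup (Fin k) ℝ))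
    (A : Matrix (Fin k) (Fin n) ℝ) : Set (Matrix (Fin k) (Fin n) ℝ) :=
  {B | ∃ g ∈ G, ∃ h ∈ Matrix.specialOrthogonalGroup (Fin n) ℝ,
    B = (g : Matrix (Fin k) (Fin k) ℝ) * A * (h : Matrix (Fin n) (Fin n) ℝ)ᵀ}

/-- The cohomogeneity of the action of `G × SO(n)` on `k × n` real matrices: the real
dimension `k·n` minus the supremum of the Hausdorff dimensions of the orbits. -/
noncomputable def cohom11 (k : ℕ) (G : Subgroup (Matrix.orthogonalGroup (Fin k) ℝ))
    (n : ℕ) : ℝ≥0∞ :=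
  (k * n : ℕ) - sSup {d : ℝ≥0∞ | ∃ A : Matrix (Fin k) (Fin n) ℝ, d = dimH (orbit11 G A)}


section HD
open MeasureTheory Metric Set Topology Filter
open scoped NNReal

lemma aux_exists_cover {X : Type*} [EMetricSpace X] [MeasurableSpace X] [BorelSpace X]
    {s : ℝ} {S : Set X} (h : μH[s] S = 0) {r ε : ℝ≥0∞} (hr : 0 < r) (hε : 0 < ε) :
    ∃ t : ℕ → Set X, S ⊆ ⋃ n, t n ∧ (∀ n, ediam (t n) ≤ r) ∧
      ∑' n, ⨆ _ : (t n).Nonempty, ediam (t n) ^ s < ε := by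
  rw [Measure.hausdorffMeasure_apply] at h
  simp only [ENNReal.iSup_eq_zero] at h
  have h1 := h r hr
  have h2 := h1.trans_lt hε
  simp only [iInf_lt_iff] at h2
  obtain ⟨t, h3, h4, h5⟩ := h2
  exact ⟨t, h3, h4, h5⟩

lemma aux_exists_cover_pos {X : Type*} [EMetricSpace X] [MeasurableSpace X] [BorelSpace X]
    {s : ℝ} (hs : 0 < s) {S : Set X} (h : μH[s] S = 0) {r : ℝ≥0} (hr : 0 < r) :
    ∃ (t : ℕ → Set X) (δ : ℕ → ℝ≥0), S ⊆ ⋃ n, t n ∧ (∀ n, ediam (t n) ≤ δ n) ∧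
      (∀ n, 0 < δ n) ∧ (∀ n, δ n ≤ r) ∧
      ∑' n, (δ n : ℝ≥0∞) ^ s ≤ 2 := by
  obtain ⟨t, h1, h2, h3⟩ := aux_exists_cover h (r := r) (ε := 1) (by exact_mod_cast hr) one_pos
  obtain ⟨e, he, hes⟩ := ENNReal.exists_pos_sum_of_countable (one_ne_zero : (1 : ℝ≥0∞) ≠ 0) ℕ
  have hfin : ∀ n, ediam (t n) ≠ ⊤ := fun n => ((h2 n).trans_lt ENNReal.coe_lt_top).ne
  refine ⟨t, fun n => max (ediam (t n)).toNNReal (min r (e n ^ (1 / s))), h1, ?_, ?_, ?_, ?_⟩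
  · intro n
    rw [ENNReal.coe_max, ENNReal.coe_toNNReal (hfin n)]
    exact le_max_left _ _
  · intro n
    exact lt_max_of_lt_right (lt_min hr (NNReal.rpow_pos (he n)))
  · intro n
    refine max_le ?_ (min_le_left _ _)
    simpa using ENNReal.toNNReal_mono ENNReal.coe_ne_top (h2 n)
  · have key : ∀ n, ((max (ediam (t n)).toNNReal (min r (e n ^ (1 / s))) : ℝ≥0) : ℝ≥0∞) ^ s ≤
        (⨆ _ : (t n).Nonempty, ediam (t n) ^ s) + e n := by
      intro n
      have hη : ((min r (e n ^ (1 / s)) : ℝ≥0) : ℝ≥0∞) ^ s ≤ e n := by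
        have : ((min r (e n ^ (1 / s)) : ℝ≥0) : ℝ≥0∞) ≤ (e n : ℝ≥0∞) ^ (1/s) := by
          rw [← ENNReal.coe_rpow_of_nonneg _ (by positivity)]
          exact_mod_cast min_le_right _ _
        calc _ ≤ ((e n : ℝ≥0∞) ^ (1/s)) ^ s := ENNReal.rpow_le_rpow this hs.le
          _ = e n := by rw [← ENNReal.rpow_mul]; field_simp; simp
      rw [ENNReal.coe_max, ENNReal.coe_toNNReal (hfin n)]
      rcases max_choice (ediam (t n)) ((min r (e n ^ (1 / s)) : ℝ≥0) : ℝ≥0∞) with hh | hh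
      · rw [hh]
        rcases (t n).eq_empty_or_nonempty with h0 | h0
        · simp [h0, ENNReal.zero_rpow_of_pos hs]
        · simp [h0]
      · rw [hh]
        exact hη.trans le_add_self
    calc _ ≤ ∑' n, ((⨆ _ : (t n).Nonempty, ediam (t n) ^ s) + e n) := ENNReal.tsum_le_tsum key
      _ = _ := ENNReal.tsum_add
      _ ≤ 1 + 1 := add_le_add h3.le hes.le
      _ = 2 := by norm_num

lemma aux_meas_prod_le {X : Type*} [EMetricSpace X] [MeasurableSpace X] [BorelSpace X]
    [SecondCountableTopology X]
    {s : ℝ} (hs : 0 < s) {S : Set X} (h : μH[s] S = 0) (m : ℕ) (a : Fin m → ℝ) :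
    μH[s + m] (S ×ˢ (univ.pi fun i => Icc (a i) (a i + 1))) ≤ 2 ^ m * 2 := by
  have hr : ∀ n : ℕ, 0 < (1 : ℝ≥0) / (n + 1) := fun n => by positivity
  choose t δ h1 h2 h3 h4 h5 using fun n => aux_exists_cover_pos hs h (hr n)
  let N : ℕ → ℕ → ℕ := fun n i => ⌈1 / δ n i⌉₊
  have hN0 : ∀ n i, 0 < N n i := fun n i => Nat.ceil_pos.2 (by have := h3 n i; positivity)
  have hδ1 : ∀ n i, δ n i ≤ 1 := fun n i => (h4 n i).trans (by
    rw [div_le_one (by positivity)]; simp)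
  have hN1 : ∀ n i, (1 : ℝ≥0) / N n i ≤ δ n i := by
    intro n i
    have : 1 / δ n i ≤ N n i := Nat.le_ceil _
    have h3' := h3 n i
    have h0 : (0 : ℝ≥0) < N n i := by exact_mod_cast hN0 n i
    rw [div_le_iff₀ h3'] at this
    rw [div_le_iff₀ h0, mul_comm]; exact this
  have hN2 : ∀ n i, (N n i : ℝ≥0) * δ n i ≤ 2 := by
    intro n i
    have : (N n i : ℝ≥0) ≤ 1 / δ n i + 1 := (Nat.ceil_lt_add_one (by positivity)).le
    calc (N n i : ℝ≥0) * δ n i ≤ (1 / δ n i + 1) * δ n i := by gcongr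
      _ = 1 + δ n i := by rw [add_mul, one_mul, div_mul_cancel₀ _ (h3 n i).ne']
      _ ≤ 1 + 1 := by gcongr; exact hδ1 n i
      _ = 2 := by norm_num
  let T : ∀ n : ℕ, (Σ i : ℕ, (Fin m → Fin (N n i))) → Set (X × (Fin m → ℝ)) := fun n p =>
    t n p.1 ×ˢ (univ.pi fun l => Icc (a l + (p.2 l : ℝ) / N n p.1) (a l + ((p.2 l : ℝ) + 1) / N n p.1))
  have hT : ∀ n p, ediam (T n p) ≤ δ n p.1 := by
    intro n p
    refine Metric.ediam_le ?_
    rintro ⟨x, u⟩ ⟨hx, hu⟩ ⟨y, v⟩ ⟨hy, hv⟩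
    rw [Prod.edist_eq]
    refine max_le ((Metric.edist_le_ediam_of_mem hx hy).trans (h2 n p.1)) ?_
    refine edist_pi_le_iff.2 fun l => ?_
    have hu' := hu l (mem_univ _)
    have hv' := hv l (mem_univ _)
    have hd : dist (u l) (v l) ≤ δ n p.1 := by
      refine (Real.dist_le_of_mem_Icc hu' hv').trans ?_
      have := hN1 n p.1
      have h' : (1 : ℝ) / N n p.1 ≤ δ n p.1 := by exact_mod_cast this
      calc _ = (1 : ℝ) / N n p.1 := by ring
        _ ≤ _ := h'
    rw [edist_dist]
    exact ENNReal.ofReal_le_of_le_toReal (by simpa using hd)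
  refine (Measure.hausdorffMeasure_le_liminf_tsum (l := atTop) (s + m) _
    (fun n : ℕ => (((1 : ℝ≥0) / (n + 1) : ℝ≥0) : ℝ≥0∞)) ?_ T ?_ ?_).trans ?_
  · rw [← ENNReal.coe_zero]
    refine ENNReal.tendsto_coe.2 ?_
    exact tendsto_one_div_add_atTop_nhds_zero_nat
  · refine Eventually.of_forall fun n p => (hT n p).trans ?_
    exact_mod_cast h4 n p.1
  · refine Eventually.of_forall fun n => ?_
    rintro ⟨x, u⟩ ⟨hx, hu⟩
    obtain ⟨i, hi⟩ := mem_iUnion.1 (h1 n hx)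
    have : ∀ l, ∃ j : Fin (N n i), u l ∈ Icc (a l + (j : ℝ) / N n i) (a l + ((j : ℝ) + 1) / N n i) := by
      intro l
      have hul := hu l (mem_univ _)
      have hNp : (0 : ℝ) < N n i := by exact_mod_cast hN0 n i
      simp only [mem_Icc] at hul
      have hN1' := hN0 n i
      by_cases hlt : ⌊(u l - a l) * N n i⌋₊ < N n i
      · refine ⟨⟨_, hlt⟩, ?_, ?_⟩
        · have := Nat.floor_le (a := (u l - a l) * N n i) (mul_nonneg (by linarith) hNp.le)
          have := (div_le_iff₀ hNp).2 this
          simp only; linarith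
        · have := (Nat.lt_floor_add_one ((u l - a l) * N n i)).le
          have := (le_div_iff₀ hNp).2 this
          simp only; linarith
      · refine ⟨⟨N n i - 1, by omega⟩, ?_, ?_⟩
        · push Not at hlt
          have h6 := (Nat.le_floor_iff (mul_nonneg (by linarith) hNp.le)).1 hlt
          have h7 : (1 : ℝ) ≤ u l - a l := by
            by_contra hc
            push Not at hc
            nlinarith
          have : ((N n i - 1 : ℕ) : ℝ) / N n i ≤ 1 := by
            rw [div_le_one hNp]; exact_mod_cast Nat.sub_le _ _
          simp only; linarith
        · have : (((N n i - 1 : ℕ) : ℝ) + 1) / N n i = 1 := by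
            rw [Nat.cast_sub hN1']; field_simp; simp
          simp only; rw [this]; linarith
    choose j hj using this
    exact mem_iUnion.2 ⟨⟨i, j⟩, hi, fun l _ => hj l⟩
  · have hb : ∀ n, ∑' p, ediam (T n p) ^ (s + m) ≤ 2 ^ m * 2 := by
      intro n
      calc ∑' p, ediam (T n p) ^ (s + m)
          ≤ ∑' p : (Σ i : ℕ, (Fin m → Fin (N n i))), (δ n p.1 : ℝ≥0∞) ^ (s + m) :=
            ENNReal.tsum_le_tsum fun p => ENNReal.rpow_le_rpow (hT n p) (by positivity)
        _ = ∑' i, ∑' _ : (Fin m → Fin (N n i)), (δ n i : ℝ≥0∞) ^ (s + m) := ENNReal.tsum_sigma' _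
        _ ≤ ∑' i, 2 ^ m * (δ n i : ℝ≥0∞) ^ s := by
            refine ENNReal.tsum_le_tsum fun i => ?_
            rw [tsum_fintype, Finset.sum_const, Finset.card_univ, Fintype.card_fun, Fintype.card_fin,
              Fintype.card_fin, nsmul_eq_mul, ENNReal.rpow_add_of_nonneg _ _ hs.le (by positivity),
              ENNReal.rpow_natCast, mul_comm (_ ^ s), ← mul_assoc]
            gcongr
            push_cast
            rw [← mul_pow]
            gcongr
            exact_mod_cast hN2 n i
        _ = 2 ^ m * ∑' i, (δ n i : ℝ≥0∞) ^ s := ENNReal.tsum_mul_left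
        _ ≤ 2 ^ m * 2 := by gcongr; exact h5 n
    refine (liminf_le_liminf (Eventually.of_forall hb)).trans ?_
    simp

lemma aux_dimH_prod_le {X : Type*} [EMetricSpace X] [SecondCountableTopology X]
    (S : Set X) (m : ℕ) :
    dimH (S ×ˢ (univ : Set (Fin m → ℝ))) ≤ dimH S + m := by
  borelize X
  have hcov : (S ×ˢ (univ : Set (Fin m → ℝ))) ⊆
      ⋃ b : Fin m → ℤ, S ×ˢ (univ.pi fun i => Icc (b i : ℝ) (b i + 1)) := by
    rintro ⟨x, u⟩ ⟨hx, -⟩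
    exact mem_iUnion.2 ⟨fun i => ⌊u i⌋, hx, fun i _ => ⟨Int.floor_le _, (Int.lt_floor_add_one _).le⟩⟩
  refine (dimH_mono hcov).trans ?_
  rw [dimH_iUnion]
  refine iSup_le fun b => ?_
  refine le_of_forall_gt_imp_ge_of_dense fun c hc => ?_
  have h1 : dimH S < c - m := lt_tsub_iff_right.2 hc
  obtain ⟨s, hs1, hs2⟩ := ENNReal.lt_iff_exists_nnreal_btwn.1 h1
  have hs0 : (0 : ℝ) < s := by
    have : (0 : ℝ≥0∞) < s := bot_le.trans_lt hs1
    exact_mod_cast this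
  have h2 := aux_meas_prod_le hs0 (hausdorffMeasure_of_dimH_lt hs1) m (fun i => (b i : ℝ))
  have h3 : dimH (S ×ˢ (univ.pi fun i => Icc (b i : ℝ) (b i + 1))) ≤ ((s + m : ℝ≥0) : ℝ≥0∞) := by
    refine dimH_le_of_hausdorffMeasure_ne_top (h2.trans_lt ?_).ne
    exact ENNReal.mul_lt_top (ENNReal.pow_lt_top (by simp)) (by simp)
  refine h3.trans ?_
  push_cast
  exact (lt_tsub_iff_right.1 hs2).le

lemma aux_meas_prod_ge {X : Type*} [EMetricSpace X] [MeasurableSpace X] [BorelSpace X]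
    [SecondCountableTopology X]
    {s : ℝ} (hs : 0 ≤ s) {S : Set X} (m : ℕ) {K : Set (Fin m → ℝ)} (hK : volume K ≠ 0)
    (h : μH[s + m] (S ×ˢ K) = 0) : μH[s] S = 0 := by
  rw [Measure.hausdorffMeasure_apply]
  simp only [ENNReal.iSup_eq_zero]
  intro r hr
  rw [← nonpos_iff_eq_zero]
  refine le_of_forall_gt_imp_ge_of_dense fun ε hε => ?_
  -- wlog r, ε finite
  have hr' : 0 < min r 1 := lt_min hr one_pos
  have hε' : 0 < min ε 1 * volume K / 2 ^ m :=
    ENNReal.div_pos (mul_ne_zero (lt_min hε one_pos).ne' hK) (by simp)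
  obtain ⟨t, h1, h2, h3⟩ := aux_exists_cover h hr' hε'
  have hfin : ∀ n, ediam (t n) ≠ ⊤ := fun n =>
    ((h2 n).trans_lt (min_lt_of_right_lt ENNReal.one_lt_top)).ne
  -- closed sets containing the projections
  have hB : ∀ n, ∃ B : Set (Fin m → ℝ), MeasurableSet B ∧ Prod.snd '' t n ⊆ B ∧
      ediam (t n) ^ s * volume B ≤ 2 ^ m * ⨆ _ : (t n).Nonempty, ediam (t n) ^ (s + m) := by
    intro n
    rcases (t n).eq_empty_or_nonempty with h0 | ⟨p, hp⟩
    · exact ⟨∅, MeasurableSet.empty, by simp [h0], by simp⟩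
    · refine ⟨closedBall p.2 (ediam (t n)).toReal, isClosed_closedBall.measurableSet, ?_, ?_⟩
      · rintro _ ⟨q, hq, rfl⟩
        rw [mem_closedBall, dist_edist]
        refine ENNReal.toReal_mono (hfin n) ?_
        exact (le_max_right _ _).trans (Metric.edist_le_ediam_of_mem hq hp)
      · rw [Real.volume_pi_closedBall _ ENNReal.toReal_nonneg, Fintype.card_fin,
          ENNReal.ofReal_pow (by positivity), ENNReal.ofReal_mul (by norm_num),
          ENNReal.ofReal_toReal (hfin n), mul_pow]
        have : (t n).Nonempty := ⟨p, hp⟩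
        simp only [this, ciSup_pos]
        rw [ENNReal.rpow_add_of_nonneg _ _ hs (by positivity), ENNReal.rpow_natCast]
        simp only [ENNReal.ofReal_ofNat]
        rw [mul_left_comm]
  choose B hB1 hB2 hB3 using hB
  let f : (Fin m → ℝ) → ℝ≥0∞ := fun u => ∑' n, (B n).indicator (fun _ => ediam (t n) ^ s) u
  have hf : ∫⁻ u, f u < min ε 1 * volume K := by
    rw [lintegral_tsum (fun n => (measurable_const.indicator (hB1 n)).aemeasurable)]
    calc _ = ∑' n, ediam (t n) ^ s * volume (B n) := by
          congr 1; ext n; rw [lintegral_indicator_const (hB1 n)]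
      _ ≤ ∑' n, 2 ^ m * ⨆ _ : (t n).Nonempty, ediam (t n) ^ (s + m) := ENNReal.tsum_le_tsum hB3
      _ = 2 ^ m * ∑' n, ⨆ _ : (t n).Nonempty, ediam (t n) ^ (s + m) := ENNReal.tsum_mul_left
      _ < 2 ^ m * (min ε 1 * volume K / 2 ^ m) :=
          ENNReal.mul_lt_mul_right (by simp) (by simp) h3
      _ = _ := ENNReal.mul_div_cancel (by simp) (by simp)
  have hex : ∃ u ∈ K, f u ≤ ε := by
    by_contra hc
    push Not at hc
    refine absurd hf (not_lt.2 ?_)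
    have hfm : Measurable f := Measurable.tsum fun n => measurable_const.indicator (hB1 n)
    calc min ε 1 * volume K ≤ ε * volume K := by gcongr; exact min_le_left _ _
      _ ≤ ε * volume {u | ε ≤ f u} := by gcongr; exact fun u hu => (hc u hu).le
      _ ≤ _ := mul_meas_ge_le_lintegral hfm ε
  obtain ⟨u, huK, hu⟩ := hex
  refine iInf_le_of_le (fun n => {x | (x, u) ∈ t n}) ?_
  refine iInf_le_of_le ?_ (iInf_le_of_le ?_ ?_)
  · intro x hx
    obtain ⟨n, hn⟩ := mem_iUnion.1 (h1 (mk_mem_prod hx huK))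
    exact mem_iUnion.2 ⟨n, hn⟩
  · intro n
    refine Metric.ediam_le fun x hx y hy => ?_
    refine le_trans ?_ ((h2 n).trans (min_le_left _ _))
    refine le_trans ?_ (Metric.edist_le_ediam_of_mem hx hy)
    exact le_max_left _ _
  · refine le_trans (ENNReal.tsum_le_tsum fun n => ?_) hu
    refine iSup_le fun ⟨x, hx⟩ => ?_
    have : u ∈ B n := hB2 n ⟨_, hx, rfl⟩
    rw [indicator_of_mem this]
    refine ENNReal.rpow_le_rpow ?_ hs
    refine Metric.ediam_le fun x hx y hy => ?_
    refine le_trans ?_ (Metric.edist_le_ediam_of_mem hx hy)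
    exact le_max_left _ _

lemma aux_le_dimH_prod {X : Type*} [EMetricSpace X] [SecondCountableTopology X]
    {S : Set X} (hS : S.Nonempty) (m : ℕ) {K : Set (Fin m → ℝ)} (hK : volume K ≠ 0) :
    dimH S + m ≤ dimH (S ×ˢ K) := by
  borelize X
  have key : ∀ s : ℝ≥0, μH[s] S ≠ 0 → (s : ℝ≥0∞) + m ≤ dimH (S ×ˢ K) := by
    intro s hs
    have : μH[((s + m : ℝ≥0) : ℝ)] (S ×ˢ K) ≠ 0 := by
      intro h0
      exact hs (aux_meas_prod_ge s.2 m hK (by simpa using h0))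
    simpa using le_dimH_of_hausdorffMeasure_ne_zero this
  have h0 : (m : ℝ≥0∞) ≤ dimH (S ×ˢ K) := by
    have := key 0 (by
      obtain ⟨x, hx⟩ := hS
      have := measure_mono (μ := μH[(0 : ℝ)]) (singleton_subset_iff.2 hx)
      rw [Measure.hausdorffMeasure_zero_singleton] at this
      intro h
      simp only [NNReal.coe_zero] at h
      rw [h] at this
      simp at this)
    simpa using this
  have h1 : dimH S ≤ dimH (S ×ˢ K) - m := by
    refine le_of_forall_lt_imp_le_of_dense fun c hc => ?_
    lift c to ℝ≥0 using (hc.trans_le le_top).ne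
    refine ENNReal.le_sub_of_add_le_right (by simp) (key c ?_)
    rw [hausdorffMeasure_of_lt_dimH hc]; simp
  calc dimH S + m ≤ dimH (S ×ˢ K) - m + m := by gcongr
    _ = _ := tsub_add_cancel_of_le h0

end HD
section Chart
open MeasureTheory Metric Set Topology Filter
open scoped NNReal

variable {E F : Type*} [NormedAddCommGroup E] [NormedSpace ℝ E] [FiniteDimensional ℝ E]
  [NormedAddCommGroup F] [NormedSpace ℝ F] [FiniteDimensional ℝ F]

lemma aux_exists_chart {f' : E →L[ℝ] F} (hf' : Function.Surjective f') {m : ℕ}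
    (hm : m + Module.finrank ℝ F = Module.finrank ℝ E) :
    ∃ (p : E →L[ℝ] (Fin m → ℝ)) (L : E ≃L[ℝ] F × (Fin m → ℝ)), (L : E →L[ℝ] F × (Fin m → ℝ)) = f'.prod p := by
  have hker : Module.finrank ℝ f'.ker = m := by
    have h1 := LinearMap.finrank_range_add_finrank_ker (f' : E →ₗ[ℝ] F)
    rw [LinearMap.range_eq_top.2 hf', finrank_top] at h1
    have : Module.finrank ℝ f'.ker = Module.finrank ℝ (LinearMap.ker (f' : E →ₗ[ℝ] F)) := rfl
    omega
  obtain ⟨q, hq⟩ := LinearMap.exists_leftInverse_of_injective f'.ker.subtype (by simp)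
  let e : f'.ker ≃ₗ[ℝ] (Fin m → ℝ) := LinearEquiv.ofFinrankEq _ _ (by rw [hker]; simp)
  let p : E →ₗ[ℝ] (Fin m → ℝ) := e.toLinearMap ∘ₗ q
  have hinj : Function.Injective ((f' : E →ₗ[ℝ] F).prod p) := by
    rw [← LinearMap.ker_eq_bot, LinearMap.ker_eq_bot']
    intro x hx
    have h1 : f' x = 0 := congrArg Prod.fst hx
    have h2 : e (q x) = 0 := congrArg Prod.snd hx
    have h3 : q x = 0 := by simpa using h2
    have h4 := LinearMap.congr_fun hq ⟨x, h1⟩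
    simp only [LinearMap.comp_apply, Submodule.subtype_apply, LinearMap.id_apply] at h4
    rw [h3] at h4
    exact (congrArg Subtype.val h4).symm
  let L := LinearMap.linearEquivOfInjective ((f' : E →ₗ[ℝ] F).prod p) hinj
    (by rw [Module.finrank_prod, ← hm]; simp [add_comm])
  refine ⟨LinearMap.toContinuousLinearMap p, L.toContinuousLinearEquiv, ?_⟩
  ext x <;> rfl

lemma aux_chart {f : E → F} {f' : E →L[ℝ] F} {a : E} (hf : HasStrictFDerivAt f f' a)
    (hf' : Function.Surjective f') {m : ℕ}
    (hm : m + Module.finrank ℝ F = Module.finrank ℝ E) :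
    (∀ X : Set F, ∃ U ∈ 𝓝 a, dimH (f ⁻¹' X ∩ U) ≤ dimH X + m) ∧
    (∀ X : Set F, f a ∈ X → ∃ U ∈ 𝓝 (f a), dimH (X ∩ U) + m ≤ dimH (f ⁻¹' X)) := by
  obtain ⟨p, L, hL⟩ := aux_exists_chart hf' hm
  have hφ : HasStrictFDerivAt (fun x => (f x, p x)) (L : E →L[ℝ] F × (Fin m → ℝ)) a := by
    rw [hL]; exact hf.prodMk p.hasStrictFDerivAt
  have hleft := hφ.eventually_left_inverse
  have hright := hφ.eventually_right_inverse
  have hψ := hφ.to_localInverse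
  have hψc := hφ.localInverse_continuousAt
  have hψa := hφ.localInverse_apply_image
  set ψ := hφ.localInverse with hψdef
  obtain ⟨K1, U1, hU1, hK1⟩ := hφ.exists_lipschitzOnWith
  obtain ⟨K2, V2, hV2, hK2⟩ := hψ.exists_lipschitzOnWith
  constructor
  · intro X
    refine ⟨{x | ψ (f x, p x) = x} ∩ {x | (f x, p x) ∈ V2}, inter_mem hleft ?_, ?_⟩
    · exact hφ.continuousAt.preimage_mem_nhds hV2
    · have hsub : f ⁻¹' X ∩ ({x | ψ (f x, p x) = x} ∩ {x | (f x, p x) ∈ V2}) ⊆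
          ψ '' ((X ×ˢ univ) ∩ V2) := by
        rintro x ⟨hx, hx1, hx2⟩
        exact ⟨(f x, p x), ⟨⟨hx, mem_univ _⟩, hx2⟩, hx1⟩
      calc _ ≤ _ := dimH_mono hsub
        _ ≤ dimH ((X ×ˢ univ) ∩ V2) := (hK2.mono inter_subset_right).dimH_image_le
        _ ≤ _ := dimH_mono inter_subset_left
        _ ≤ _ := aux_dimH_prod_le X m
  · intro X hX
    have hW : {y | f (ψ y) = y.1 ∧ p (ψ y) = y.2} ∩ ψ ⁻¹' U1 ∈ 𝓝 (f a, p a) := by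
      refine inter_mem ?_ (hψc.preimage_mem_nhds (by rw [hψa]; exact hU1))
      filter_upwards [hright] with y hy
      exact ⟨congrArg Prod.fst hy, congrArg Prod.snd hy⟩
    obtain ⟨U, hU, K, hK, hUK⟩ := mem_nhds_prod_iff.1 hW
    refine ⟨U, hU, ?_⟩
    have hsub : (X ∩ U) ×ˢ K ⊆ (fun x => (f x, p x)) '' (f ⁻¹' X ∩ U1) := by
      rintro ⟨x, u⟩ ⟨⟨hx, hxU⟩, hu⟩
      obtain ⟨⟨h1, h2⟩, h3⟩ := hUK (mk_mem_prod hxU hu)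
      refine ⟨ψ (x, u), ⟨?_, h3⟩, Prod.ext h1 h2⟩
      simp only [mem_preimage] 
      rw [h1]; exact hx
    calc _ ≤ dimH ((X ∩ U) ×ˢ K) :=
          aux_le_dimH_prod (S := X ∩ U) ⟨f a, hX, mem_of_mem_nhds hU⟩ m
            (Measure.measure_pos_of_mem_nhds volume hK).ne'
      _ ≤ _ := dimH_mono hsub
      _ ≤ dimH (f ⁻¹' X ∩ U1) := (hK1.mono inter_subset_right).dimH_image_le
      _ ≤ _ := dimH_mono inter_subset_left

/-- Dimension of the preimage of a set under a submersion. -/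
lemma aux_dimH_submersion {f : E → F} {X : Set F} 
    (hreg : ∀ a ∈ f ⁻¹' X, ∃ f' : E →L[ℝ] F, HasStrictFDerivAt f f' a ∧ Function.Surjective f')
    (hne : X.Nonempty) (hsurj : X ⊆ range f) {m : ℕ}
    (hm : m + Module.finrank ℝ F = Module.finrank ℝ E) :
    dimH (f ⁻¹' X) = dimH X + m := by
  apply le_antisymm
  · by_contra hc
    push Not at hc
    obtain ⟨a, ha, h⟩ := exists_mem_nhdsWithin_lt_dimH_of_lt_dimH hc
    obtain ⟨f', h1, h2⟩ := hreg a ha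
    obtain ⟨U, hU, hd⟩ := (aux_chart h1 h2 hm).1 X
    exact absurd hd (not_le.2 (h _ (inter_mem self_mem_nhdsWithin (mem_nhdsWithin_of_mem_nhds hU))))
  · have hm0 : ∀ x ∈ X, ∃ U ∈ 𝓝 x, dimH (X ∩ U) + m ≤ dimH (f ⁻¹' X) := by
      intro x hx
      obtain ⟨a, rfl⟩ := hsurj hx
      obtain ⟨f', h1, h2⟩ := hreg a hx
      exact (aux_chart h1 h2 hm).2 X hx
    have h0 : (m : ℝ≥0∞) ≤ dimH (f ⁻¹' X) := by
      obtain ⟨x, hx⟩ := hne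
      obtain ⟨U, -, hU⟩ := hm0 x hx
      exact le_add_self.trans hU
    have h1 : dimH X ≤ dimH (f ⁻¹' X) - m := by
      refine le_of_forall_lt_imp_le_of_dense fun c hc => ?_
      obtain ⟨x, hx, h⟩ := exists_mem_nhdsWithin_lt_dimH_of_lt_dimH hc
      obtain ⟨U, hU, hd⟩ := hm0 x hx
      refine ENNReal.le_sub_of_add_le_right (by simp) (le_trans ?_ hd)
      gcongr
      exact (h _ (inter_mem self_mem_nhdsWithin (mem_nhdsWithin_of_mem_nhds hU))).le
    calc dimH X + m ≤ dimH (f ⁻¹' X) - m + m := by gcongr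
      _ = _ := tsub_add_cancel_of_le h0

end Chart
section Alg
open scoped MatrixOrder in
lemma aux_sqrt {k : ℕ} {M : Matrix (Fin k) (Fin k) ℝ} (hM : M.PosSemidef) :
    ∃ C : Matrix (Fin k) (Fin k) ℝ, C * Cᵀ = M := by
  obtain ⟨X, hX, -, h⟩ :=
        CFC.exists_sqrt_of_isSelfAdjoint_of_quasispectrumRestricts hM.isHermitian
          (QuasispectrumRestricts.nnreal_of_nonneg hM.nonneg)
  refine ⟨X, ?_⟩
  have h2 : Xᵀ = X := by
    have := hX.star_eq
    rwa [Matrix.star_eq_conjTranspose, Matrix.conjTranspose_eq_transpose_of_trivial] at this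
  rw [h2]; exact h

lemma aux_resize {k n : ℕ} (hkn : k ≤ n) (C : Matrix (Fin k) (Fin k) ℝ) :
    ∃ A : Matrix (Fin k) (Fin n) ℝ, A * Aᵀ = C * Cᵀ := by
  let J : Matrix (Fin k) (Fin n) ℝ := (1 : Matrix (Fin n) (Fin n) ℝ).submatrix (Fin.castLE hkn) id
  have hJ : J * Jᵀ = 1 := by
    ext i j
    simp [J, Matrix.mul_apply, Matrix.one_apply, eq_comm]
  refine ⟨C * J, ?_⟩
  rw [Matrix.transpose_mul, Matrix.mul_assoc, ← Matrix.mul_assoc J, hJ, Matrix.one_mul]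

lemma aux_toMat {n : ℕ} (U : EuclideanSpace ℝ (Fin n) →ₗᵢ[ℝ] EuclideanSpace ℝ (Fin n)) :
    ∃ h ∈ Matrix.orthogonalGroup (Fin n) ℝ, h.det = LinearMap.det U.toLinearMap ∧
      ∀ x, U x = WithLp.toLp 2 (h *ᵥ x.ofLp) := by
  let b := (EuclideanSpace.basisFun (Fin n) ℝ)
  refine ⟨LinearMap.toMatrix b.toBasis b.toBasis U.toLinearMap, ?_, ?_, ?_⟩
  · rw [Matrix.mem_orthogonalGroup_iff']
    ext i j
    have : ∀ l i, LinearMap.toMatrix b.toBasis b.toBasis U.toLinearMap l i = (U (b i)) l := by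
      intro l i
      rw [LinearMap.toMatrix_apply]
      simp [b]
    rw [Matrix.mul_apply]
    simp only [Matrix.transpose_apply, this]
    have h1 : inner ℝ (U (b j)) (U (b i)) = if j = i then (1 : ℝ) else 0 := by
      rw [U.inner_map_map]
      exact orthonormal_iff_ite.1 b.orthonormal j i
    rw [PiLp.inner_apply] at h1
    rw [Matrix.one_apply]
    simp only [eq_comm (a := i)]
    rw [← h1]
    simp
  · exact LinearMap.det_toMatrix _ _
  · intro x
    have h1 := LinearMap.toMatrix_mulVec_repr b.toBasis b.toBasis U.toLinearMap x
    ext i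
    have := congrFun h1 i
    have h2 : ⇑(b.toBasis.repr x) = x.ofLp := by
      ext l; simp [b]
    rw [h2] at this
    simpa [b] using this.symm

lemma aux_vecMul_inj {k n : ℕ} {A : Matrix (Fin k) (Fin n) ℝ} (hA : (A * Aᵀ).det ≠ 0)
    {x : Fin k → ℝ} (hx : x ᵥ* A = 0) : x = 0 := by
  by_contra h
  refine hA (Matrix.exists_vecMul_eq_zero_iff.1 ⟨x, h, ?_⟩)
  rw [← Matrix.vecMul_vecMul, hx, Matrix.zero_vecMul]

lemma aux_dot {k n : ℕ} (A : Matrix (Fin k) (Fin n) ℝ) (x : Fin k → ℝ) :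
    (x ᵥ* A) ⬝ᵥ (x ᵥ* A) = (x ᵥ* (A * Aᵀ)) ⬝ᵥ x := by
  rw [← Matrix.vecMul_vecMul, Matrix.vecMul_transpose, ← Matrix.dotProduct_mulVec]
  exact dotProduct_comm _ _

lemma aux_ext {k n : ℕ} (hkn : k < n) {A B : Matrix (Fin k) (Fin n) ℝ}
    (hA : (A * Aᵀ).det ≠ 0) (hAB : A * Aᵀ = B * Bᵀ) :
    ∃ h ∈ Matrix.specialOrthogonalGroup (Fin n) ℝ, B = A * hᵀ := by
  let V := EuclideanSpace ℝ (Fin n)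
  let T : Matrix (Fin k) (Fin n) ℝ → ((Fin k → ℝ) →ₗ[ℝ] V) := fun M =>
    (WithLp.linearEquiv 2 ℝ (Fin n → ℝ)).symm.toLinearMap ∘ₗ Matrix.vecMulLinear M
  have hT : ∀ M x, T M x = WithLp.toLp 2 (x ᵥ* M) := fun M x => rfl
  have hnorm : ∀ x, ‖T B x‖ = ‖T A x‖ := by
    intro x
    have : ‖T B x‖ ^ 2 = ‖T A x‖ ^ 2 := by
      have key : ∀ M : Matrix (Fin k) (Fin n) ℝ, ‖T M x‖ ^ 2 = (x ᵥ* M) ⬝ᵥ (x ᵥ* M) := by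
        intro M
        rw [hT, EuclideanSpace.real_norm_sq_eq]
        simp [dotProduct, sq]
      rw [key, key, aux_dot, aux_dot, hAB]
    exact (sq_eq_sq₀ (norm_nonneg _) (norm_nonneg _)).1 this
  have hinj : Function.Injective (T A) := by
    rw [← LinearMap.ker_eq_bot, LinearMap.ker_eq_bot']
    intro x hx
    refine aux_vecMul_inj hA ?_
    rw [hT] at hx
    exact congrArg WithLp.ofLp hx
  let e := LinearEquiv.ofInjective (T A) hinj
  let L : LinearMap.range (T A) →ₗᵢ[ℝ] V :=
    { toLinearMap := (T B) ∘ₗ e.symm.toLinearMap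
      norm_map' := by
        intro y
        obtain ⟨x, rfl⟩ := e.surjective y
        simp only [LinearMap.comp_apply, LinearEquiv.coe_coe, LinearEquiv.symm_apply_apply]
        rw [hnorm]; rfl }
  let U := L.extend
  have hU : ∀ x, U (T A x) = T B x := by
    intro x
    have h1 := L.extend_apply (e x)
    have h2 : L (e x) = T B x := by
      show (T B) (e.symm (e x)) = _
      rw [LinearEquiv.symm_apply_apply]
    rw [h2] at h1
    exact h1
  have hfin : ∀ W : V →ₗᵢ[ℝ] V, (∀ x, W (T A x) = T B x) → LinearMap.det W.toLinearMap = 1 →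
      ∃ h ∈ Matrix.specialOrthogonalGroup (Fin n) ℝ, B = A * hᵀ := by
    intro W hW hdet
    obtain ⟨h, h1, h2, h3⟩ := aux_toMat W
    refine ⟨h, Matrix.mem_specialOrthogonalGroup_iff.2 ⟨h1, h2.trans hdet⟩, ?_⟩
    ext i j
    have h4 := hW (Pi.single i 1)
    rw [h3, hT, hT] at h4
    have h5 := congrFun (congrArg WithLp.ofLp h4) j
    simp only [Matrix.single_one_vecMul] at h5
    rw [Matrix.row_apply] at h5
    rw [← h5, Matrix.mul_apply, Matrix.mulVec]
    simp [dotProduct, mul_comm]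
  by_cases hd : LinearMap.det U.toLinearMap = 1
  · exact hfin U hU hd
  have hd' : LinearMap.det U.toLinearMap = -1 := by
    obtain ⟨h, h1, h2, h3⟩ := aux_toMat U
    rw [Matrix.mem_orthogonalGroup_iff] at h1
    have := congrArg Matrix.det h1
    rw [Matrix.det_mul, Matrix.det_transpose, Matrix.det_one, h2] at this
    rcases mul_self_eq_one_iff.1 this with h | h
    · exact absurd h hd
    · exact h
  have hne : (LinearMap.range (T A))ᗮ ≠ ⊥ := by
    intro h0
    rw [Submodule.orthogonal_eq_bot_iff] at h0
    have h1 := LinearMap.finrank_range_le (T A)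
    rw [h0, finrank_top] at h1
    simp [V] at h1
    omega
  obtain ⟨v, hv, hv0⟩ := Submodule.exists_mem_ne_zero_of_ne_bot hne
  let R := (Submodule.span ℝ {v})ᗮ.reflection
  refine hfin (U.comp R.toLinearIsometry) ?_ ?_
  · intro x
    have : R (T A x) = T A x := by
      apply Submodule.reflection_mem_subspace_eq_self
      rw [Submodule.mem_orthogonal_singleton_iff_inner_left]
      exact hv _ ⟨x, rfl⟩
    show U (R (T A x)) = _
    rw [this, hU]
  · have : (U.comp R.toLinearIsometry).toLinearMap = U.toLinearMap ∘ₗ R.toLinearMap := rfl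
    rw [this, LinearMap.det_comp, hd']
    have h2 := (Submodule.span ℝ {v})ᗮ.det_reflection
    rw [Submodule.orthogonal_orthogonal, finrank_span_singleton hv0] at h2
    rw [h2]; norm_num

end Alg
section Main
attribute [local instance] Matrix.normedSpace
open Set

def auxSym (k : ℕ) : Submodule ℝ (Matrix (Fin k) (Fin k) ℝ) where
  carrier := {M | Mᵀ = M}
  add_mem' := by
    intro a b ha hb
    simp only [mem_ofPred_eq] at *
    rw [Matrix.transpose_add, ha, hb]
  zero_mem' := by simp
  smul_mem' := by
    intro c a ha
    simp only [mem_ofPred_eq] at *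
    rw [Matrix.transpose_smul, ha]

noncomputable def auxP (k : ℕ) : Matrix (Fin k) (Fin k) ℝ →ₗ[ℝ] auxSym k where
  toFun M := ⟨(1 / 2 : ℝ) • (M + Mᵀ), by
    show _ᵀ = _
    rw [Matrix.transpose_smul, Matrix.transpose_add, Matrix.transpose_transpose, add_comm]⟩
  map_add' := by
    intro a b
    apply Subtype.ext
    simp only [Matrix.transpose_add, Submodule.coe_add]
    rw [← smul_add]; congr 1; abel
  map_smul' := by
    intro c a
    apply Subtype.ext
    simp only [Matrix.transpose_smul, Submodule.coe_smul, RingHom.id_apply]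
    rw [← smul_add, smul_comm]

noncomputable def auxQ (k n : ℕ) (B : Matrix (Fin k) (Fin n) ℝ) : auxSym k := auxP k (B * Bᵀ)

lemma auxP_coe {k : ℕ} {M : Matrix (Fin k) (Fin k) ℝ} (hM : Mᵀ = M) : (auxP k M : Matrix _ _ ℝ) = M := by
  show (1 / 2 : ℝ) • (M + Mᵀ) = M
  rw [hM, ← two_smul ℝ M, smul_smul]; norm_num

lemma auxQ_coe {k n : ℕ} (B : Matrix (Fin k) (Fin n) ℝ) : (auxQ k n B : Matrix _ _ ℝ) = B * Bᵀ :=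
  auxP_coe (by simp)

noncomputable def auxBil (k n : ℕ) : Matrix (Fin k) (Fin n) ℝ →ₗ[ℝ] Matrix (Fin k) (Fin n) ℝ →ₗ[ℝ]
    Matrix (Fin k) (Fin k) ℝ :=
  LinearMap.mk₂ ℝ (fun A B => A * Bᵀ) (by intros; rw [Matrix.add_mul]) (by intros; simp)
    (by intros; rw [Matrix.transpose_add, Matrix.mul_add]) (by intros; simp)

lemma auxQ_deriv {k n : ℕ} {A : Matrix (Fin k) (Fin n) ℝ} (hA : (A * Aᵀ).det ≠ 0) :
    ∃ f' : Matrix (Fin k) (Fin n) ℝ →L[ℝ] auxSym k, HasStrictFDerivAt (auxQ k n) f' A ∧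
      Function.Surjective f' := by
  have h1 := (auxBil k n).toContinuousBilinearMap.hasStrictFDerivAt_of_bilinear
    (hasStrictFDerivAt_id A) (hasStrictFDerivAt_id A)
  have h2 := (LinearMap.toContinuousLinearMap (auxP k)).hasStrictFDerivAt.comp A h1
  refine ⟨_, h2, ?_⟩
  rintro ⟨H, hH⟩
  have hH' : Hᵀ = H := hH
  let C := A * Aᵀ
  have hC : Cᵀ = C := by simp [C]
  have hu : IsUnit C.det := isUnit_iff_ne_zero.2 hA
  refine ⟨(1 / 2 : ℝ) • (H * C⁻¹ * A), ?_⟩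
  have e1 : A * ((1 / 2 : ℝ) • (H * C⁻¹ * A))ᵀ = (1 / 2 : ℝ) • H := by
    rw [Matrix.transpose_smul, Matrix.transpose_mul, Matrix.transpose_mul, hH',
      Matrix.transpose_nonsing_inv, hC, Matrix.mul_smul, ← Matrix.mul_assoc, ← Matrix.mul_assoc]
    show (1 / 2 : ℝ) • (C * C⁻¹ * H) = _
    rw [Matrix.mul_nonsing_inv _ hu, Matrix.one_mul]
  have e2 : ((1 / 2 : ℝ) • (H * C⁻¹ * A)) * Aᵀ = (1 / 2 : ℝ) • H := by
    rw [Matrix.smul_mul, Matrix.mul_assoc]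
    show (1 / 2 : ℝ) • (H * C⁻¹ * C) = _
    rw [Matrix.mul_assoc, Matrix.nonsing_inv_mul _ hu, Matrix.mul_one]
  apply Subtype.ext
  show (auxP k (A * ((1 / 2 : ℝ) • (H * C⁻¹ * A))ᵀ + ((1 / 2 : ℝ) • (H * C⁻¹ * A)) * Aᵀ) : Matrix _ _ ℝ) = H
  rw [e1, e2, ← add_smul]
  norm_num
  exact auxP_coe hH'

def auxX {k : ℕ} (G : Subgroup (Matrix.orthogonalGroup (Fin k) ℝ)) (S : auxSym k) : Set (auxSym k) :=
  {T | ∃ g ∈ G, (T : Matrix (Fin k) (Fin k) ℝ) = (g : Matrix (Fin k) (Fin k) ℝ) * S * (g : Matrix (Fin k) (Fin k) ℝ)ᵀ}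

lemma aux_orth {k : ℕ} (g : Matrix.orthogonalGroup (Fin k) ℝ) :
    (g : Matrix (Fin k) (Fin k) ℝ).det ≠ 0 := by
  have h := (Matrix.mem_orthogonalGroup_iff _ _).1 g.2
  intro h0
  have := congrArg Matrix.det h
  rw [Matrix.det_mul, h0] at this
  simp at this

lemma aux_det_conj {k : ℕ} (g : Matrix.orthogonalGroup (Fin k) ℝ) (M : Matrix (Fin k) (Fin k) ℝ) :
    ((g : Matrix (Fin k) (Fin k) ℝ) * M * (g : Matrix (Fin k) (Fin k) ℝ)ᵀ).det = 0 ↔ M.det = 0 := by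
  rw [Matrix.det_mul, Matrix.det_mul, Matrix.det_transpose]
  have := aux_orth g
  simp [this]

lemma aux_orbit_sq {k n : ℕ} (g : Matrix (Fin k) (Fin k) ℝ) (A : Matrix (Fin k) (Fin n) ℝ)
    {h : Matrix (Fin n) (Fin n) ℝ} (hh : h ∈ Matrix.specialOrthogonalGroup (Fin n) ℝ) :
    (g * A * hᵀ) * (g * A * hᵀ)ᵀ = g * (A * Aᵀ) * gᵀ := by
  have h1 := (Matrix.mem_orthogonalGroup_iff' _ _).1 (Matrix.mem_specialOrthogonalGroup_iff.1 hh).1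
  rw [Matrix.transpose_mul, Matrix.transpose_transpose, Matrix.mul_assoc, ← Matrix.mul_assoc hᵀ, h1,
    Matrix.one_mul, Matrix.transpose_mul]
  simp only [Matrix.mul_assoc]

lemma aux_orbit_eq {k n : ℕ} (hkn : k < n) (G : Subgroup (Matrix.orthogonalGroup (Fin k) ℝ))
    {A : Matrix (Fin k) (Fin n) ℝ} (hA : (A * Aᵀ).det ≠ 0) :
    orbit11 G A = auxQ k n ⁻¹' (auxX G (auxQ k n A)) := by
  ext B
  constructor
  · rintro ⟨g, hg, h, hh, rfl⟩
    refine ⟨g, hg, ?_⟩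
    rw [auxQ_coe, auxQ_coe, aux_orbit_sq _ _ hh]
  · rintro ⟨g, hg, h⟩
    rw [auxQ_coe, auxQ_coe] at h
    have h1 : ((g : Matrix (Fin k) (Fin k) ℝ) * A) * ((g : Matrix (Fin k) (Fin k) ℝ) * A)ᵀ = B * Bᵀ := by
      rw [h, Matrix.transpose_mul]; simp only [Matrix.mul_assoc]
    have h2 : (((g : Matrix (Fin k) (Fin k) ℝ) * A) * ((g : Matrix (Fin k) (Fin k) ℝ) * A)ᵀ).det ≠ 0 := by
      rw [h1, h]
      exact fun h0 => hA ((aux_det_conj g _).1 h0)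
    obtain ⟨h, hh, hB⟩ := aux_ext hkn h2 h1
    exact ⟨g, hg, h, hh, hB⟩

lemma aux_dimH_orbit {k n m : ℕ} (hkn : k < n) (hm : m + Module.finrank ℝ (auxSym k) = k * n)
    (G : Subgroup (Matrix.orthogonalGroup (Fin k) ℝ))
    {A : Matrix (Fin k) (Fin n) ℝ} (hA : (A * Aᵀ).det ≠ 0) :
    dimH (orbit11 G A) = dimH (auxX G (auxQ k n A)) + m := by
  rw [aux_orbit_eq hkn G hA]
  apply aux_dimH_submersion
  · rintro B ⟨g, hg, h⟩
    rw [auxQ_coe, auxQ_coe] at h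
    apply auxQ_deriv
    rw [h]
    exact fun h0 => hA ((aux_det_conj g _).1 h0)
  · exact ⟨auxQ k n A, 1, G.one_mem, by simp⟩
  · rintro T ⟨g, hg, h⟩
    refine ⟨(g : Matrix (Fin k) (Fin k) ℝ) * A, Subtype.ext ?_⟩
    rw [h, auxQ_coe, auxQ_coe, Matrix.transpose_mul]
    simp only [Matrix.mul_assoc]
  · rw [hm, Module.finrank_matrix]; simp

lemma aux_singular {k n : ℕ} :
    dimH {B : Matrix (Fin k) (Fin n) ℝ | (B * Bᵀ).det = 0} ≤ ((k - 1) * (n + 1) : ℕ) := by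
  let φ : ∀ i : Fin k, (({j // j ≠ i} → ℝ) × ({j // j ≠ i} → Fin n → ℝ)) → (Fin k → Fin n → ℝ) :=
    fun i p j l => if h : j = i then ∑ j', p.1 j' * p.2 j' l else p.2 ⟨j, h⟩ l
  have hφ : ∀ i, ContDiff ℝ 1 (φ i) := by
    intro i
    refine contDiff_pi.2 fun j => contDiff_pi.2 fun l => ?_
    by_cases h : j = i
    · simp only [φ, h, dite_true]
      fun_prop
    · simp only [φ, h, dite_false]
      fun_prop
  have hcov : {B : Matrix (Fin k) (Fin n) ℝ | (B * Bᵀ).det = 0} ⊆ ⋃ i, range (φ i) := by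
    intro B hB
    obtain ⟨v, hv0, hv⟩ := Matrix.exists_vecMul_eq_zero_iff.2 hB
    have h1 : v ᵥ* B = 0 := by
      have := aux_dot B v
      rw [hv, zero_dotProduct] at this
      exact dotProduct_self_eq_zero.1 this
    obtain ⟨i, hi⟩ := Function.ne_iff.1 hv0
    refine mem_iUnion.2 ⟨i, (fun j => - v j / v i, fun j => B j), ?_⟩
    ext j l
    by_cases h : j = i
    · subst h
      simp only [φ, dite_true]
      have h2 := congrFun h1 l
      simp only [Matrix.vecMul, dotProduct, Pi.zero_apply] at h2
      rw [Fintype.sum_eq_add_sum_subtype_ne _ j] at h2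
      have hi' : v j ≠ 0 := hi
      have h3 : ∑ j' : {j' // j' ≠ j}, -v j' / v j * B j' l = -(∑ j' : {j' // j' ≠ j}, v j' * B j' l) / v j := by
        rw [neg_div, Finset.sum_div, ← Finset.sum_neg_distrib]
        refine Finset.sum_congr rfl fun x _ => ?_
        ring
      rw [h3, div_eq_iff hi']
      linarith
    · simp [φ, h]
  refine (dimH_mono hcov).trans ?_
  refine (dimH_iUnion _).le.trans (iSup_le fun i => ?_)
  refine (hφ i).dimH_range_le.trans ?_
  have hc : Fintype.card {j // j ≠ i} = k - 1 := by simp [Fintype.card_subtype_compl]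
  rw [Module.finrank_prod, Module.finrank_pi, Module.finrank_pi_fintype]
  simp only [Module.finrank_pi, Fintype.card_fin, Finset.sum_const, Finset.card_univ, hc, smul_eq_mul]
  exact_mod_cast (by rw [mul_add, mul_one, add_comm] : k - 1 + (k - 1) * n = (k - 1) * (n + 1)).le

lemma aux_orbit_singular {k n : ℕ} (G : Subgroup (Matrix.orthogonalGroup (Fin k) ℝ))
    {A : Matrix (Fin k) (Fin n) ℝ} (hA : (A * Aᵀ).det = 0) :
    dimH (orbit11 G A) ≤ ((k - 1) * (n + 1) : ℕ) := by
  refine (dimH_mono ?_).trans aux_singular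
  rintro _ ⟨g, hg, h, hh, rfl⟩
  simp only [mem_ofPred_eq]
  rw [aux_orbit_sq _ _ hh, aux_det_conj]
  exact hA

lemma aux_sup {k n m : ℕ} (hkn : k < n) (hm : m + Module.finrank ℝ (auxSym k) = k * n)
    (hm' : (k - 1) * (n + 1) ≤ m)
    (G : Subgroup (Matrix.orthogonalGroup (Fin k) ℝ)) :
    sSup {d : ℝ≥0∞ | ∃ A : Matrix (Fin k) (Fin n) ℝ, d = dimH (orbit11 G A)} =
      (⨆ C : {C : Matrix (Fin k) (Fin k) ℝ // (C * Cᵀ).det ≠ 0}, dimH (auxX G (auxQ k k C))) + m := by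
  have hne : Nonempty {C : Matrix (Fin k) (Fin k) ℝ // (C * Cᵀ).det ≠ 0} := ⟨⟨1, by simp⟩⟩
  apply le_antisymm
  · refine sSup_le ?_
    rintro _ ⟨A, rfl⟩
    by_cases hA : (A * Aᵀ).det = 0
    · refine (aux_orbit_singular G hA).trans (le_trans ?_ le_add_self)
      exact_mod_cast hm'
    · rw [aux_dimH_orbit hkn hm G hA]
      have hpos : (A * Aᵀ).PosSemidef := by
        have := Matrix.posSemidef_self_mul_conjTranspose A
        rwa [Matrix.conjTranspose_eq_transpose_of_trivial] at this
      obtain ⟨C, hC⟩ := aux_sqrt hpos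
      have hq : auxQ k n A = auxQ k k C := Subtype.ext (by rw [auxQ_coe, auxQ_coe, hC])
      gcongr
      rw [hq]
      exact le_iSup (fun C : {C : Matrix (Fin k) (Fin k) ℝ // (C * Cᵀ).det ≠ 0} =>
        dimH (auxX G (auxQ k k C))) ⟨C, by rw [hC]; exact hA⟩
  · rw [ENNReal.iSup_add]
    refine iSup_le ?_
    rintro ⟨C, hC⟩
    obtain ⟨A, hA⟩ := aux_resize hkn.le C
    have hq : auxQ k n A = auxQ k k C := Subtype.ext (by rw [auxQ_coe, auxQ_coe, hA])
    have hA' : (A * Aᵀ).det ≠ 0 := by rw [hA]; exact hC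
    refine le_sSup ⟨A, ?_⟩
    rw [aux_dimH_orbit hkn hm G hA', hq]

end Main

theorem stmt11 (k : ℕ) (hk : 1 ≤ k)
    (G : Subgroup (Matrix.orthogonalGroup (Fin k) ℝ))
    (hG : IsClosed {M : Matrix (Fin k) (Fin k) ℝ | ∃ g ∈ G, M = g}) :
    ∃ N : ℕ, ∃ c₀ : ℝ≥0∞, ∀ n : ℕ, N ≤ n → cohom11 k G n = c₀ := by
  let s := Module.finrank ℝ (auxSym k)
  refine ⟨k + s + 1, s - (⨆ C : {C : Matrix (Fin k) (Fin k) ℝ // (C * Cᵀ).det ≠ 0},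
    dimH (auxX G (auxQ k k C))), fun n hn => ?_⟩
  obtain ⟨j, rfl⟩ : ∃ j, k = j + 1 := ⟨k - 1, by omega⟩
  have h1 : j * (n + 1) + s ≤ (j + 1) * n := by nlinarith
  obtain ⟨m, hm⟩ : ∃ m, m + s = (j + 1) * n := ⟨(j + 1) * n - s, Nat.sub_add_cancel (by omega)⟩
  unfold cohom11
  rw [aux_sup (by omega) hm (by simp only [Nat.add_sub_cancel]; omega) G]
  rw [← hm, add_comm m s]
  rw [Nat.cast_add]
  exact ENNReal.add_sub_add_eq_sub_right (ENNReal.natCast_ne_top _)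
end

section
/- Let V be a nonzero finite-dimensional real inner product space and let G be a closed connected nontrivial subgroup of the orthogonal group O(V). Consider the diagonal action of G on V × V, g·(v,w) = (g v, g w). Then c(G, V × V) ≥ 2·c(G, V) + 1, where c denotes cohomogeneity. -/
open ENNReal

/-- The cohomogeneity of the action of a set `M` of continuous linear maps on a
finite-dimensional real normed space `W`: `dim_ℝ W` minus the supremum of the Hausdorff
dimensions of the orbits `{f p : f ∈ M}`. -/
noncomputable def cohom12 {W : Type*} [NormedAddCommGroup W] [NormedSpace ℝ W]
    (M : Set (W →L[ℝ] W)) : ℝ≥0∞ :=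
  (Module.finrank ℝ W : ℝ≥0∞) -
    sSup {d : ℝ≥0∞ | ∃ p : W, d = dimH {q : W | ∃ f ∈ M, q = f p}}

/-- The diagonal action of `M` on `V × V`, as a set of continuous linear maps on `V × V`. -/
noncomputable def diag12 {V : Type*} [NormedAddCommGroup V] [NormedSpace ℝ V]
    (M : Set (V →L[ℝ] V)) : Set ((V × V) →L[ℝ] (V × V)) :=
  {F | ∃ f ∈ M, F = f.prodMap f}

open Filter Topology

namespace S12

set_option linter.unusedSectionVars false

variable {V : Type*} [NormedAddCommGroup V] [InnerProductSpace ℝ V] [FiniteDimensional ℝ V]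

structure Grp (M : Set (V →L[ℝ] V)) : Prop where
  iso : ∀ f ∈ M, ∀ v : V, ‖f v‖ = ‖v‖
  one : (1 : V →L[ℝ] V) ∈ M
  mul : ∀ f ∈ M, ∀ g ∈ M, f * g ∈ M
  inv : ∀ f ∈ M, ∃ g ∈ M, f * g = 1 ∧ g * f = 1
  closed : IsClosed M

/-- one-parameter group -/
noncomputable def ex (X : V →L[ℝ] V) (t : ℝ) : V →L[ℝ] V := NormedSpace.exp (t • X)

lemma ex_add (X : V →L[ℝ] V) (s t : ℝ) : ex X (s + t) = ex X s * ex X t := by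
  let _ : NormedAlgebra ℚ (V →L[ℝ] V) := NormedAlgebra.restrictScalars ℚ ℝ (V →L[ℝ] V)
  unfold ex
  rw [add_smul]
  exact NormedSpace.exp_add_of_commute (((Commute.refl X).smul_left s).smul_right t)

lemma ex_zero (X : V →L[ℝ] V) : ex X 0 = 1 := by
  unfold ex; rw [zero_smul]; exact NormedSpace.exp_zero

lemma ex_deriv (X : V →L[ℝ] V) (t : ℝ) : HasDerivAt (ex X) (ex X t * X) t :=
  hasDerivAt_exp_smul_const X t

lemma ex_cont (X : V →L[ℝ] V) : Continuous (ex X) :=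
  continuous_iff_continuousAt.2 fun t => (ex_deriv X t).continuousAt

lemma ex_pow (X : V →L[ℝ] V) (t : ℝ) (n : ℕ) : ex X t ^ n = ex X (n * t) := by
  induction n with
  | zero => simp [ex_zero]
  | succ n ih => rw [pow_succ, ih, ← ex_add]; congr 1; push_cast; ring

lemma ex_slope (X : V →L[ℝ] V) {ε : ℕ → ℝ} (h0 : ∀ i, 0 < ε i) (h : Tendsto ε atTop (𝓝 0)) :
    Tendsto (fun i => (ε i)⁻¹ • (ex X (ε i) - 1)) atTop (𝓝 X) := by
  have := (ex_deriv X 0).tendsto_slope_zero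
  rw [ex_zero, one_mul] at this
  have h2 : Tendsto ε atTop (𝓝[≠] 0) :=
    tendsto_nhdsWithin_iff.2 ⟨h, Eventually.of_forall fun i => (h0 i).ne'⟩
  simpa [Function.comp_def] using this.comp h2

lemma pow_diff (A B : V →L[ℝ] V) (K : ℝ) (hA : ‖A‖ ≤ 1) (n : ℕ) (hB : ∀ j ≤ n, ‖B ^ j‖ ≤ K) :
    ‖A ^ n - B ^ n‖ ≤ n * K * ‖A - B‖ := by
  induction n with
  | zero => simp
  | succ n ih =>
    have e : A ^ (n+1) - B ^ (n+1) = A * (A ^ n - B ^ n) + (A - B) * B ^ n := by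
      rw [pow_succ' A, pow_succ' B]; noncomm_ring
    have h1 := ih fun j hj => hB j (by omega)
    have h2 := hB n (by omega)
    have a1 : ‖A * (A ^ n - B ^ n)‖ ≤ n * K * ‖A - B‖ := by
      refine (norm_mul_le _ _).trans ?_
      refine le_trans ?_ h1
      exact mul_le_of_le_one_left (norm_nonneg _) hA
    have a2 : ‖(A - B) * B ^ n‖ ≤ ‖A - B‖ * K :=
      (norm_mul_le _ _).trans (mul_le_mul_of_nonneg_left h2 (norm_nonneg _))
    rw [e]
    refine (norm_add_le _ _).trans ?_
    push_cast
    linarith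

variable {M : Set (V →L[ℝ] V)}

lemma Grp.norm_le (h : Grp M) {A : V →L[ℝ] V} (hA : A ∈ M) : ‖A‖ ≤ 1 :=
  A.opNorm_le_bound zero_le_one fun v => by rw [h.iso A hA, one_mul]

lemma Grp.pow (h : Grp M) {A : V →L[ℝ] V} (hA : A ∈ M) (n : ℕ) : A ^ n ∈ M := by
  induction n with
  | zero => simpa using h.one
  | succ n ih => rw [pow_succ]; exact h.mul _ ih _ hA

lemma Grp.neg (h : Grp M) {X : V →L[ℝ] V} {t : ℝ} (hA : ex X t ∈ M) : ex X (-t) ∈ M := by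
  obtain ⟨g, hg, h1, h2⟩ := h.inv _ hA
  have : ex X (-t) * ex X t = 1 := by rw [← ex_add]; simp [ex_zero]
  have e : ex X (-t) = g := by
    calc ex X (-t) = ex X (-t) * (ex X t * g) := by rw [h1, mul_one]
      _ = g := by rw [← mul_assoc, this, one_mul]
  rw [e]; exact hg

lemma Grp.compact (h : Grp M) : IsCompact M := by
  refine Metric.isCompact_of_isClosed_isBounded h.closed ?_
  refine (Metric.isBounded_closedBall (x := (0 : V →L[ℝ] V)) (r := 1)).subset fun A hA => ?_
  simpa using h.norm_le hA

lemma Grp.key (h : Grp M) {A : ℕ → (V →L[ℝ] V)} (hA : ∀ i, A i ∈ M) {ε : ℕ → ℝ}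
    (h0 : ∀ i, 0 < ε i) (hε : Tendsto ε atTop (𝓝 0)) {X : V →L[ℝ] V}
    (hX : Tendsto (fun i => (ε i)⁻¹ • (A i - 1)) atTop (𝓝 X)) {t : ℝ} (ht : 0 ≤ t) :
    ex X t ∈ M := by
  obtain ⟨K, hK⟩ := (isCompact_Icc (a := (0:ℝ)) (b := t)).exists_bound_of_continuousOn
    (ex_cont X).continuousOn
  have hK0 : 0 ≤ K := (norm_nonneg _).trans (hK 0 ⟨le_rfl, ht⟩)
  let n : ℕ → ℕ := fun i => ⌊t / ε i⌋₊
  have hn1 : ∀ i, n i * ε i ≤ t := fun i => by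
    have := Nat.floor_le (div_nonneg ht (h0 i).le)
    rwa [le_div_iff₀ (h0 i)] at this
  have hn2 : ∀ i, t - ε i ≤ n i * ε i := fun i => by
    have := Nat.lt_floor_add_one (t / ε i)
    rw [div_lt_iff₀ (h0 i)] at this
    have h3 : t < (n i + 1) * ε i := this
    linarith
  have hnt : Tendsto (fun i => n i * ε i) atTop (𝓝 t) := by
    refine tendsto_of_tendsto_of_tendsto_of_le_of_le (g := fun i => t - ε i) (h := fun _ => t)
      ?_ tendsto_const_nhds hn2 hn1
    simpa using tendsto_const_nhds.sub hε
  have hB : Tendsto (fun i => ex X (ε i) ^ n i) atTop (𝓝 (ex X t)) := by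
    simp_rw [ex_pow]
    exact ((ex_cont X).tendsto t).comp hnt
  have hd : Tendsto (fun i => A i ^ n i - ex X (ε i) ^ n i) atTop (𝓝 0) := by
    have hs := hX.sub (ex_slope X h0 hε)
    have hs2 := (hs.norm).const_mul (t * K)
    simp only [sub_self, norm_zero, mul_zero] at hs2
    refine squeeze_zero_norm (fun i => ?_) hs2
    refine (pow_diff (A i) (ex X (ε i)) K (h.norm_le (hA i)) (n i) fun j hj => ?_).trans ?_
    · rw [ex_pow]
      refine hK _ ⟨by have := (h0 i).le; positivity, ?_⟩
      refine le_trans ?_ (hn1 i)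
      exact mul_le_mul_of_nonneg_right (by exact_mod_cast hj) (h0 i).le
    · rw [← smul_sub, norm_smul, norm_inv, Real.norm_of_nonneg (h0 i).le]
      have e : A i - 1 - (ex X (ε i) - 1) = A i - ex X (ε i) := by abel
      rw [e]
      have : (n i : ℝ) ≤ t * (ε i)⁻¹ := by
        rw [← div_eq_mul_inv, le_div_iff₀ (h0 i)]; exact hn1 i
      have h5 : (n i : ℝ) * (K * ‖A i - ex X (ε i)‖) ≤ t * (ε i)⁻¹ * (K * ‖A i - ex X (ε i)‖) :=
        mul_le_mul_of_nonneg_right this (by positivity)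
      linarith
  have hl : Tendsto (fun i => A i ^ n i) atTop (𝓝 (ex X t)) := by
    simpa using hd.add hB
  exact h.closed.mem_of_tendsto hl (Eventually.of_forall fun i => h.pow (hA i) _)

lemma Grp.key' (h : Grp M) {A : ℕ → (V →L[ℝ] V)} (hA : ∀ i, A i ∈ M) {ε : ℕ → ℝ}
    (h0 : ∀ i, 0 < ε i) (hε : Tendsto ε atTop (𝓝 0)) {X : V →L[ℝ] V}
    (hX : Tendsto (fun i => (ε i)⁻¹ • (A i - 1)) atTop (𝓝 X)) (t : ℝ) :
    ex X t ∈ M := by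
  rcases le_total 0 t with ht | ht
  · exact h.key hA h0 hε hX ht
  · have := h.neg (h.key hA h0 hε hX (t := -t) (by linarith))
    simpa using this

/-- The Lie algebra. -/
noncomputable def Grp.lie (h : Grp M) : Submodule ℝ (V →L[ℝ] V) where
  carrier := {X | ∀ t : ℝ, ex X t ∈ M}
  zero_mem' := fun t => by
    have : ex (0 : V →L[ℝ] V) t = 1 := by
      unfold ex; rw [smul_zero]; exact NormedSpace.exp_zero
    rw [this]; exact h.one
  smul_mem' := fun c X hX t => by
    have : ex (c • X) t = ex X (t * c) := by unfold ex; rw [smul_smul]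
    rw [this]; exact hX _
  add_mem' := by
    intro X Y hX hY t
    have hd : HasDerivAt (fun s => ex X s * ex Y s) (X + Y) 0 := by
      have := (ex_deriv X 0).mul (ex_deriv Y 0)
      simp only [ex_zero, mul_one, one_mul] at this
      exact this
    have hs := hd.tendsto_slope_zero
    have hε : Tendsto (fun i : ℕ => 1 / ((i : ℝ) + 1)) atTop (𝓝 0) :=
      tendsto_one_div_add_atTop_nhds_zero_nat
    have h0 : ∀ i : ℕ, 0 < 1 / ((i : ℝ) + 1) := fun i => by positivity
    have h2 := hs.comp (tendsto_nhdsWithin_iff.2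
      ⟨hε, Eventually.of_forall fun i => (h0 i).ne'⟩)
    refine h.key' (A := fun i => ex X (1 / ((i : ℝ) + 1)) * ex Y (1 / ((i : ℝ) + 1)))
      (fun i => h.mul _ (hX _) _ (hY _)) h0 hε ?_ t
    simpa [Function.comp_def, ex_zero] using h2

lemma Grp.mem_lie (h : Grp M) {X : V →L[ℝ] V} : X ∈ h.lie ↔ ∀ t : ℝ, ex X t ∈ M := Iff.rfl

lemma Grp.skew0 (h : Grp M) {X : V →L[ℝ] V} (hX : X ∈ h.lie) (v : V) :
    inner ℝ (X v) v = 0 := by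
  have hd : HasDerivAt (fun t => ex X t v) (X v) 0 := by
    have := (ex_deriv X 0).clm_apply (hasDerivAt_const (0:ℝ) v)
    simpa [ex_zero] using this
  have h1 := hd.norm_sq
  have h2 : (fun t => ‖ex X t v‖ ^ 2) = fun _ => ‖v‖ ^ 2 := by
    ext t; rw [h.iso _ (hX t)]
  rw [h2] at h1
  have h3 := h1.unique (hasDerivAt_const _ _)
  simp [ex_zero] at h3
  rw [real_inner_comm]; exact h3

lemma Grp.skew (h : Grp M) {X : V →L[ℝ] V} (hX : X ∈ h.lie) (u v : V) :
    inner ℝ (X u) v = - inner ℝ u (X v) := by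
  have h1 := h.skew0 hX (u + v)
  have h2 := h.skew0 hX u
  have h3 := h.skew0 hX v
  rw [map_add, inner_add_left, inner_add_right, inner_add_right] at h1
  rw [real_inner_comm (X v) u]
  linarith

lemma ex_fix {X : V →L[ℝ] V} {v : V} (hv : X v = 0) (t : ℝ) :
    ex X t v = v := by
  have hd : ∀ t, HasDerivAt (fun t => ex X t v) 0 t := fun t => by
    have := (ex_deriv X t).clm_apply (hasDerivAt_const t v)
    simpa [hv] using this
  have := is_const_of_deriv_eq_zero (fun t => (hd t).differentiableAt) (fun t => (hd t).deriv) t 0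
  simpa [ex_zero] using this

noncomputable def ev (v : V) : (V →L[ℝ] V) →L[ℝ] V := ContinuousLinearMap.apply ℝ V v

noncomputable def ev2 (v w : V) : (V →L[ℝ] V) →L[ℝ] V × V := (ev v).prod (ev w)

@[simp] lemma ev_apply (v : V) (X : V →L[ℝ] V) : ev v X = X v := rfl
@[simp] lemma ev2_apply (v w : V) (X : V →L[ℝ] V) : ev2 v w X = (X v, X w) := rfl

lemma Grp.ev2_norm (h : Grp M) {A : V →L[ℝ] V} (hA : A ∈ M) (v w : V) (X : V →L[ℝ] V) :
    ‖ev2 v w (A * X)‖ = ‖ev2 v w X‖ := by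
  simp [Prod.norm_def, h.iso A hA]

/-- Nearest representative: tangent direction. -/
lemma Grp.tangent (h : Grp M) (v w : V) {C : ℕ → (V →L[ℝ] V)} (hC : ∀ i, C i ∈ M)
    (hne : ∀ i, ev2 v w (C i) ≠ ev2 v w 1) (hlim : Tendsto C atTop (𝓝 1)) :
    ∃ X ∈ h.lie, ev2 v w X ≠ 0 ∧ ∃ φ : ℕ → ℕ, StrictMono φ ∧ ∃ ε : ℕ → ℝ, (∀ i, 0 < ε i) ∧
      Tendsto (fun i => (ε i)⁻¹ • (ev2 v w (C (φ i)) - ev2 v w 1)) atTop (𝓝 (ev2 v w X)) := by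
  have hB : ∀ i, ∃ B ∈ M, ev2 v w B = ev2 v w (C i) ∧
      ∀ B' ∈ M, ev2 v w B' = ev2 v w (C i) → ‖B - 1‖ ≤ ‖B' - 1‖ := by
    intro i
    have hc : IsCompact (M ∩ (ev2 v w) ⁻¹' {ev2 v w (C i)}) :=
      h.compact.inter_right (isClosed_singleton.preimage (ev2 v w).continuous)
    obtain ⟨B, hB, hmin⟩ := hc.exists_isMinOn ⟨C i, hC i, rfl⟩
      (f := fun B : V →L[ℝ] V => ‖B - 1‖) (by fun_prop)
    exact ⟨B, hB.1, hB.2, fun B' h1 h2 => hmin ⟨h1, h2⟩⟩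
  choose B hBM hBC hmin using hB
  have hpos : ∀ i, 0 < ‖B i - 1‖ := fun i => by
    rw [norm_pos_iff, sub_ne_zero]
    intro hh
    exact hne i (by rw [← hBC, hh])
  have hε : Tendsto (fun i => ‖B i - 1‖) atTop (𝓝 0) := by
    refine squeeze_zero (fun i => norm_nonneg _) (fun i => hmin i _ (hC i) rfl) ?_
    simpa using (hlim.sub_const 1).norm
  have hsph : ∀ i, ‖B i - 1‖⁻¹ • (B i - 1) ∈ Metric.sphere (0 : V →L[ℝ] V) 1 := fun i => by
    rw [mem_sphere_zero_iff_norm, norm_smul, norm_inv, norm_norm]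
    exact inv_mul_cancel₀ (hpos i).ne'
  obtain ⟨X, hXs, φ, hφ, hX⟩ := (isCompact_sphere (0 : V →L[ℝ] V) 1).tendsto_subseq hsph
  have hεφ := hε.comp hφ.tendsto_atTop
  have hXl : X ∈ h.lie := fun t => h.key' (A := fun i => B (φ i)) (fun i => hBM _)
    (fun i => hpos (φ i)) hεφ hX t
  refine ⟨X, hXl, ?_, φ, hφ, fun i => ‖B (φ i) - 1‖, fun i => hpos _, ?_⟩
  · intro hX0
    simp only [ev2_apply, Prod.mk_eq_zero] at hX0
    have hfix : ∀ i, ev2 v w (B i * ex X (-‖B i - 1‖)) = ev2 v w (C i) := fun i => by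
      rw [← hBC i]
      simp [ex_fix hX0.1, ex_fix hX0.2]
    have hge := fun i => hmin i _ (h.mul _ (hBM i) _ (hXl (-‖B i - 1‖))) (hfix i)
    -- the quotient tends to zero
    have hs : Tendsto (fun i => ‖B (φ i) - 1‖⁻¹ • (B (φ i) - ex X ‖B (φ i) - 1‖)) atTop (𝓝 0) := by
      have := hX.sub (ex_slope X (fun i => hpos (φ i)) hεφ)
      rw [sub_self] at this
      refine this.congr fun i => ?_
      simp only [Function.comp]
      rw [← smul_sub]; congr 1; abel
    have hr : Tendsto (fun i => ex X (-‖B (φ i) - 1‖)) atTop (𝓝 1) := by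
      have := ((ex_cont X).tendsto (-0)).comp hεφ.neg
      rw [neg_zero, ex_zero] at this
      exact this
    have hm := (hs.mul hr).norm
    rw [zero_mul, norm_zero] at hm
    have h1 : ∀ i, (1 : ℝ) ≤ ‖(‖B (φ i) - 1‖⁻¹ • (B (φ i) - ex X ‖B (φ i) - 1‖)) *
        ex X (-‖B (φ i) - 1‖)‖ := fun i => by
      rw [smul_mul_assoc, sub_mul, ← ex_add, add_neg_cancel, ex_zero, norm_smul, norm_inv,
        norm_norm, ← div_eq_inv_mul, one_le_div (hpos _)]
      exact hge _
    have := ge_of_tendsto' hm h1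
    linarith
  · have := ((ev2 v w).continuous.tendsto X).comp hX
    refine this.congr fun i => ?_
    simp only [Function.comp, map_smul, map_sub, hBC]

lemma Grp.local (h : Grp M) (v w : V) {A0 : V →L[ℝ] V} (hA0 : A0 ∈ M)
    (P : V × V →L[ℝ] V × V) (hP : ∀ X ∈ h.lie, P (ev2 v w (A0 * X)) = ev2 v w (A0 * X)) :
    ∃ n : ℕ, ∀ A ∈ M, ∀ A' ∈ M, dist A A0 < 1 / ((n : ℝ) + 1) → dist A' A0 < 1 / ((n : ℝ) + 1) →
      ‖ev2 v w A - ev2 v w A'‖ ≤ n * ‖P (ev2 v w A) - P (ev2 v w A')‖ := by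
  by_contra! hcon
  choose A hA A' hA' hd hd' hlt using hcon
  have hAl : Tendsto A atTop (𝓝 A0) := tendsto_iff_dist_tendsto_zero.2
    (squeeze_zero (fun _ => dist_nonneg) (fun i => (hd i).le) tendsto_one_div_add_atTop_nhds_zero_nat)
  have hAl' : Tendsto A' atTop (𝓝 A0) := tendsto_iff_dist_tendsto_zero.2
    (squeeze_zero (fun _ => dist_nonneg) (fun i => (hd' i).le) tendsto_one_div_add_atTop_nhds_zero_nat)
  choose I hI h1 h2 using fun i => h.inv _ (hA' i)
  have hCl : Tendsto (fun i => I i * A i) atTop (𝓝 1) := by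
    rw [tendsto_iff_norm_sub_tendsto_zero]
    refine squeeze_zero (fun _ => norm_nonneg _) (g := fun i => ‖A i - A' i‖) (fun i => ?_) ?_
    · rw [← h2 i, ← mul_sub]
      exact (norm_mul_le _ _).trans (mul_le_of_le_one_left (norm_nonneg _) (h.norm_le (hI i)))
    · simpa using (hAl.sub hAl').norm
  have hAC : ∀ i, A i = A' i * (I i * A i) := fun i => by rw [← mul_assoc, h1, one_mul]
  have hdiff : ∀ i, ev2 v w (A i) - ev2 v w (A' i) = ev2 v w (A' i * (I i * A i - 1)) := fun i => by
    rw [mul_sub, mul_one, ← hAC, map_sub]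
  obtain ⟨X, hX, hX0, φ, hφ, ε, hε, hlim⟩ := h.tangent v w (C := fun i => I i * A i)
    (fun i => h.mul _ (hI i) _ (hA i)) (fun i hi => by
      have : ev2 v w (A i) - ev2 v w (A' i) = 0 := by
        rw [← norm_eq_zero, hdiff, h.ev2_norm (hA' i), map_sub, hi, sub_self, norm_zero]
      have h3 := hlt i
      rw [this, norm_zero] at h3
      exact absurd h3 (not_lt.2 (by positivity))) hCl
  -- difference quotients
  have hq : Tendsto (fun i => (ε i)⁻¹ • (ev2 v w (A (φ i)) - ev2 v w (A' (φ i)))) atTop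
      (𝓝 (ev2 v w (A0 * X))) := by
    have hb := hAl'.comp hφ.tendsto_atTop
    have hap : ∀ (a : ℕ → (V →L[ℝ] V)) (x : ℕ → V) (a0 : V →L[ℝ] V) (x0 : V),
        Tendsto a atTop (𝓝 a0) → Tendsto x atTop (𝓝 x0) →
        Tendsto (fun i => a i (x i)) atTop (𝓝 (a0 x0)) := fun a x a0 x0 ha hx =>
      (((continuous_fst.clm_apply continuous_snd).tendsto
        ((a0, x0) : (V →L[ℝ] V) × V))).comp (ha.prodMk_nhds hx)
    have hp := (hap _ _ _ _ hb hlim.fst_nhds).prodMk_nhds (hap _ _ _ _ hb hlim.snd_nhds)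
    refine hp.congr fun i => ?_
    rw [hdiff]
    simp [mul_sub]
  have hPq : Tendsto (fun i => (ε i)⁻¹ • (P (ev2 v w (A (φ i))) - P (ev2 v w (A' (φ i))))) atTop
      (𝓝 (ev2 v w (A0 * X))) := by
    have := (P.continuous.tendsto _).comp hq
    rw [hP X hX] at this
    refine this.congr fun i => ?_
    simp only [Function.comp, map_smul, map_sub]
  have hpos : 0 < ‖ev2 v w (A0 * X)‖ := by rw [h.ev2_norm hA0]; exact norm_pos_iff.2 hX0
  have htop : Tendsto (fun i => (φ i : ℝ) * ‖(ε i)⁻¹ • (P (ev2 v w (A (φ i))) - P (ev2 v w (A' (φ i))))‖)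
      atTop atTop :=
    (tendsto_natCast_atTop_atTop.comp hφ.tendsto_atTop).atTop_mul_pos hpos hPq.norm
  have hle : ∀ i, (φ i : ℝ) * ‖(ε i)⁻¹ • (P (ev2 v w (A (φ i))) - P (ev2 v w (A' (φ i))))‖ ≤
      ‖(ε i)⁻¹ • (ev2 v w (A (φ i)) - ev2 v w (A' (φ i)))‖ := fun i => by
    rw [norm_smul, norm_smul, mul_left_comm]
    exact mul_le_mul_of_nonneg_left (hlt _).le (norm_nonneg _)
  exact not_tendsto_nhds_of_tendsto_atTop (tendsto_atTop_mono hle htop) _ hq.norm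

lemma Grp.upper (h : Grp M) (v w : V) :
    dimH (ev2 v w '' M) ≤ Module.finrank ℝ (h.lie.map (ev2 v w).toLinearMap) := by
  refine h.compact.induction_on (p := fun s => dimH (ev2 v w '' s) ≤
    Module.finrank ℝ (h.lie.map (ev2 v w).toLinearMap)) (by simp)
    (fun s t hst ht => (dimH_mono (Set.image_mono hst)).trans ht)
    (fun s t hs ht => by rw [Set.image_union, dimH_union]; exact max_le hs ht) ?_
  intro A0 hA0
  let T : Submodule ℝ (V × V) := (h.lie.map (ev2 v w).toLinearMap).map
    (A0.prodMap A0).toLinearMap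
  obtain ⟨P, hP⟩ : T.ClosedComplemented := Submodule.ClosedComplemented.of_finiteDimensional T
  have hT : ∀ X ∈ h.lie, ev2 v w (A0 * X) ∈ T := fun X hX =>
    ⟨ev2 v w X, ⟨X, hX, rfl⟩, rfl⟩
  obtain ⟨n, hn⟩ := h.local v w hA0 (T.subtypeL.comp P) (fun X hX => by
    have := hP ⟨_, hT X hX⟩
    simp only [ContinuousLinearMap.comp_apply, this]; rfl)
  refine ⟨M ∩ Metric.ball A0 (1 / ((n : ℝ) + 1)), ?_, ?_⟩
  · exact inter_mem_nhdsWithin M (Metric.ball_mem_nhds _ (by positivity))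
  · set S := ev2 v w '' (M ∩ Metric.ball A0 (1 / ((n : ℝ) + 1)))
    have hanti : AntilipschitzWith (n : NNReal) (fun x : S => P x) := by
      refine AntilipschitzWith.of_le_mul_dist ?_
      rintro ⟨_, A, hA, rfl⟩ ⟨_, A', hA', rfl⟩
      have := hn A hA.1 A' hA'.1 hA.2 hA'.2
      rw [Subtype.dist_eq, dist_eq_norm, dist_eq_norm]
      exact this
    have h1 := hanti.le_dimH_image Set.univ
    have h2 : dimH (Set.univ : Set S) = dimH S := by
      rw [← isometry_subtype_coe.dimH_image, Set.image_univ, Subtype.range_coe]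
    rw [← h2]
    refine h1.trans ((dimH_mono (Set.subset_univ _)).trans ?_)
    rw [Real.dimH_univ_eq_finrank]
    exact_mod_cast Submodule.finrank_map_le _ _

lemma Grp.lower (h : Grp M) (v : V) :
    (Module.finrank ℝ (h.lie.map (ev v).toLinearMap) : ENNReal) ≤ dimH (ev v '' M) := by
  let T : Submodule ℝ V := h.lie.map (ev v).toLinearMap
  let P : V →L[ℝ] T := T.orthogonalProjectionOnto
  let f : h.lie → T := fun X => P (NormedSpace.exp (X : V →L[ℝ] V) v)
  let f' : h.lie →L[ℝ] T := P.comp ((ev v).comp h.lie.subtypeL)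
  have hf : HasStrictFDerivAt f f' 0 := by
    have h1 : HasStrictFDerivAt (NormedSpace.exp : (V →L[ℝ] V) → _) (1 : (V →L[ℝ] V) →L[ℝ] _)
      (h.lie.subtypeL 0) := by
      rw [map_zero]; exact hasStrictFDerivAt_exp_zero
    have h2 := h1.comp (0 : h.lie) h.lie.subtypeL.hasStrictFDerivAt
    exact (P.comp (ev v)).hasStrictFDerivAt.comp (0 : h.lie) h2
  have hs : f'.range = ⊤ := by
    rw [LinearMap.range_eq_top]
    rintro ⟨_, X, hX, rfl⟩
    refine ⟨⟨X, hX⟩, ?_⟩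
    exact T.orthogonalProjectionOnto_mem_subspace_eq_self ⟨_, X, hX, rfl⟩
  have hm := @HasStrictFDerivAt.map_nhds_eq_of_surj ℝ _ h.lie _ _ T _ _ _ _ f f' 0 hf hs
  have hr : Set.range f ∈ 𝓝 (f 0) := by
    rw [← hm]; exact range_mem_map
  have h1 : dimH (Set.range f) = Module.finrank ℝ T := Real.dimH_of_mem_nhds hr
  have h2 : Set.range f ⊆ P '' (ev v '' M) := by
    rintro _ ⟨X, rfl⟩
    refine ⟨_, ⟨_, X.2 1, rfl⟩, ?_⟩
    simp [f, ex]
  rw [← h1]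
  exact (dimH_mono h2).trans (P.lipschitz.dimH_image_le _)

lemma Grp.image_mem (h : Grp M) (v : V)
    (hmax : ∀ u, Module.finrank ℝ (h.lie.map (ev u).toLinearMap) ≤
      Module.finrank ℝ (h.lie.map (ev v).toLinearMap))
    {X : V →L[ℝ] V} (hX : X ∈ h.lie) (hXv : X v = 0) (u : V) :
    X u ∈ h.lie.map (ev v).toLinearMap := by
  by_contra hnot
  set T := h.lie.map (ev v).toLinearMap with hT
  let b := Module.finBasis ℝ T
  choose Y hY hYb using fun j => (b j).2
  have hli : LinearIndependent ℝ (Fin.cons (X u) (fun j => Y j v) : Fin (Module.finrank ℝ T + 1) → V) := by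
    rw [linearIndependent_finCons]
    have e : (fun j => Y j v) = fun j => (b j : V) := funext fun j => hYb j
    rw [e]
    refine ⟨b.linearIndependent.map' T.subtype (Submodule.ker_subtype _), fun hmem => hnot ?_⟩
    refine (Submodule.span_le.2 ?_) hmem
    rintro _ ⟨j, rfl⟩
    exact (b j).2
  let F : ℝ → (Fin (Module.finrank ℝ T + 1) → V) := fun t =>
    Fin.cons (X u) (fun j => Y j (v + t • u))
  have hF : Continuous F := by
    refine continuous_pi fun j => ?_
    refine Fin.cases ?_ (fun j => ?_) j
    · simp only [F, Fin.cons_zero]; fun_prop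
    · simp only [F, Fin.cons_succ]; fun_prop
  have hF0 : LinearIndependent ℝ (F 0) := by simpa [F] using hli
  have hev : ∀ᶠ t in 𝓝 (0:ℝ), LinearIndependent ℝ (F t) :=
    hF.continuousAt.eventually (isOpen_setOfPred_linearIndependent.mem_nhds hF0)
  have hev2 : ∀ᶠ t in 𝓝[≠] (0:ℝ), LinearIndependent ℝ (F t) ∧ t ≠ 0 :=
    (hev.filter_mono nhdsWithin_le_nhds).and self_mem_nhdsWithin
  obtain ⟨t, hlt, ht0⟩ := hev2.exists
  have hmem : ∀ j, F t j ∈ h.lie.map (ev (v + t • u)).toLinearMap := by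
    intro j
    refine Fin.cases ?_ (fun j => ?_) j
    · refine ⟨t⁻¹ • X, h.lie.smul_mem _ hX, ?_⟩
      simp [F, hXv, smul_smul, ht0]
    · exact ⟨Y j, hY j, rfl⟩
  have hli2 : LinearIndependent ℝ
      (fun j => (⟨F t j, hmem j⟩ : h.lie.map (ev (v + t • u)).toLinearMap)) :=
    LinearIndependent.of_comp (Submodule.subtype _) hlt
  have := hli2.fintype_card_le_finrank
  rw [Fintype.card_fin] at this
  have := hmax (v + t • u)
  omega

lemma Grp.pair_le (h : Grp M) (v w : V) :
    Module.finrank ℝ (h.lie.map (ev2 v w).toLinearMap) ≤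
      Module.finrank ℝ (h.lie.map (ev v).toLinearMap) +
      Module.finrank ℝ (h.lie.map (ev w).toLinearMap) := by
  set T1 := h.lie.map (ev v).toLinearMap
  set T2 := h.lie.map (ev w).toLinearMap
  have hle : h.lie.map (ev2 v w).toLinearMap ≤
      T1.map (LinearMap.inl ℝ V V) ⊔ T2.map (LinearMap.inr ℝ V V) := by
    rintro _ ⟨X, hX, rfl⟩
    exact Submodule.mem_sup.2 ⟨(X v, 0), ⟨X v, ⟨X, hX, rfl⟩, rfl⟩, (0, X w),
      ⟨X w, ⟨X, hX, rfl⟩, rfl⟩, by simp⟩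
  refine (Submodule.finrank_mono hle).trans ?_
  refine (Submodule.finrank_add_le_finrank_add_finrank _ _).trans ?_
  exact add_le_add (Submodule.finrank_map_le _ _) (Submodule.finrank_map_le _ _)

lemma Grp.pair_lt (h : Grp M) (v w : V)
    (hmax : ∀ u, Module.finrank ℝ (h.lie.map (ev u).toLinearMap) ≤
      Module.finrank ℝ (h.lie.map (ev v).toLinearMap))
    (hpos : 0 < Module.finrank ℝ (h.lie.map (ev v).toLinearMap)) :
    Module.finrank ℝ (h.lie.map (ev2 v w).toLinearMap) <
      2 * Module.finrank ℝ (h.lie.map (ev v).toLinearMap) := by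
  set T := h.lie.map (ev v).toLinearMap with hT
  let S := h.lie.map (ev2 v w).toLinearMap
  let p : S →ₗ[ℝ] V := (LinearMap.fst ℝ V V).comp S.subtype
  have hrn := p.finrank_range_add_finrank_ker
  have hr : LinearMap.range p ≤ T := by
    rintro _ ⟨⟨_, X, hX, rfl⟩, rfl⟩
    exact ⟨X, hX, rfl⟩
  have hr' := Submodule.finrank_mono hr
  let q : LinearMap.ker p →ₗ[ℝ] V := (LinearMap.snd ℝ V V).comp (S.subtype.comp (LinearMap.ker p).subtype)
  have hq : Function.Injective q := by
    rintro ⟨⟨⟨a, b⟩, h1⟩, h2⟩ ⟨⟨⟨c, d⟩, h3⟩, h4⟩ he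
    have e1 : a = 0 := h2
    have e2 : c = 0 := h4
    have e3 : b = d := he
    subst e1 e2 e3
    rfl
  have hfq : Module.finrank ℝ (LinearMap.range q) = Module.finrank ℝ (LinearMap.ker p) :=
    LinearMap.finrank_range_of_inj hq
  have hmem : ∀ y ∈ LinearMap.range q, ∃ X ∈ h.lie, X v = 0 ∧ X w = y := by
    rintro _ ⟨⟨⟨_, X, hX, rfl⟩, h2⟩, rfl⟩
    exact ⟨X, hX, h2, rfl⟩
  have hqT : LinearMap.range q ≤ T := fun y hy => by
    obtain ⟨X, hX, h1, rfl⟩ := hmem y hy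
    exact h.image_mem v hmax hX h1 w
  have hlt : LinearMap.range q < T := by
    refine lt_of_le_of_ne hqT fun heq => ?_
    -- decomposition of w
    obtain ⟨a, ha, c, hc, hw⟩ : ∃ a ∈ T, ∃ c ∈ Tᗮ, w = a + c := by
      obtain ⟨a, ha, c, hc, e⟩ := T.exists_add_mem_mem_orthogonal w
      exact ⟨a, ha, c, hc, e⟩
    have hkill : ∀ X ∈ h.lie, X v = 0 → X w = X a := fun X hX hXv => by
      have : X c = 0 := by
        rw [← inner_self_eq_zero (𝕜 := ℝ), h.skew hX, neg_eq_zero]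
        exact Submodule.inner_left_of_mem_orthogonal (h.image_mem v hmax hX hXv _) hc
      rw [hw, map_add, this, add_zero]
    have ha0 : a = 0 := by
      rw [← heq] at ha
      obtain ⟨X, hX, h1, h2⟩ := hmem a ha
      rw [← inner_self_eq_zero (𝕜 := ℝ)]
      nth_rewrite 1 [← h2]
      rw [hkill X hX h1]
      exact h.skew0 hX a
    have : T = ⊥ := by
      rw [eq_bot_iff]
      intro y hy
      rw [← heq] at hy
      obtain ⟨X, hX, h1, rfl⟩ := hmem y hy
      rw [hkill X hX h1, ha0, map_zero]
      exact Submodule.zero_mem _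
    rw [this, finrank_bot] at hpos
    exact lt_irrefl _ hpos
  have := Submodule.finrank_lt_finrank_of_lt hlt
  have e : Module.finrank ℝ S = Module.finrank ℝ (h.lie.map (ev2 v w).toLinearMap) := rfl
  omega

lemma Grp.exists_pos (h : Grp M) (hconn : IsConnected M) (hnt : M ≠ {1}) :
    ∃ v, 0 < Module.finrank ℝ (h.lie.map (ev v).toLinearMap) := by
  obtain ⟨A, hA, hne⟩ : ∃ A ∈ M, A ≠ 1 := by
    by_contra! hh
    exact hnt (Set.eq_singleton_iff_unique_mem.2 ⟨h.one, hh⟩)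
  obtain ⟨v, hv⟩ : ∃ v, A v ≠ v := by
    by_contra! hh
    exact hne (ContinuousLinearMap.ext hh)
  refine ⟨v, ?_⟩
  have hc : IsPreconnected (ev2 v 0 '' M) :=
    hconn.isPreconnected.image _ (ev2 v 0).continuous.continuousOn
  have hl : LipschitzWith 1 (fun x : V × V => dist x (v, 0)) := LipschitzWith.dist_left _
  have hc2 := hc.image _ hl.continuous.continuousOn
  have hsub : Set.Icc 0 (dist (A v) v) ⊆ (fun x : V × V => dist x (v, 0)) '' (ev2 v 0 '' M) := by
    refine hc2.ordConnected.out ⟨_, ⟨1, h.one, rfl⟩, ?_⟩ ⟨_, ⟨A, hA, rfl⟩, ?_⟩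
    · simp
    · simp [Prod.dist_eq]
  have h1 : dimH (Set.Icc 0 (dist (A v) v)) = 1 := by
    rw [Real.dimH_of_nonempty_interior, Module.finrank_self]; · simp
    rw [interior_Icc]
    exact Set.nonempty_Ioo.2 (dist_pos.2 hv)
  have h2 : (1 : ENNReal) ≤ Module.finrank ℝ (h.lie.map (ev2 v 0).toLinearMap) := by
    rw [← h1]
    exact (dimH_mono hsub).trans ((hl.dimH_image_le _).trans (h.upper v 0))
  have h3 : 1 ≤ Module.finrank ℝ (h.lie.map (ev2 v 0).toLinearMap) := by exact_mod_cast h2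
  have h4 := h.pair_le v 0
  have h5 : h.lie.map (ev (0 : V)).toLinearMap = ⊥ := by
    rw [eq_bot_iff]
    rintro _ ⟨X, hX, rfl⟩
    simp
  rw [h5, finrank_bot] at h4
  omega

end S12

theorem stmt12 (V : Type*) [NormedAddCommGroup V] [InnerProductSpace ℝ V]
    [FiniteDimensional ℝ V] (hV : 0 < Module.finrank ℝ V)
    (M : Set (V →L[ℝ] V))
    -- `M` consists of orthogonal transformations:
    (hiso : ∀ f ∈ M, ∀ v : V, ‖f v‖ = ‖v‖)
    -- `M` is a subgroup of `O(V)`: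
    (hone : ContinuousLinearMap.id ℝ V ∈ M)
    (hmul : ∀ f ∈ M, ∀ g ∈ M, f.comp g ∈ M)
    (hinv : ∀ f ∈ M, ∃ g ∈ M, f.comp g = ContinuousLinearMap.id ℝ V ∧
      g.comp f = ContinuousLinearMap.id ℝ V)
    -- `M` is closed, connected and nontrivial:
    (hclosed : IsClosed M)
    (hconn : IsConnected M)
    (hnontriv : M ≠ {ContinuousLinearMap.id ℝ V}) :
    2 * cohom12 M + 1 ≤ cohom12 (diag12 M) := by
  have h : S12.Grp M := ⟨hiso, hone, hmul, hinv, hclosed⟩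
  obtain ⟨v0, hv0⟩ := h.exists_pos hconn hnontriv
  let d : V → ℕ := fun v => Module.finrank ℝ (h.lie.map (S12.ev v).toLinearMap)
  have hdn : ∀ v, d v ≤ Module.finrank ℝ V := fun v => Submodule.finrank_le _
  obtain ⟨v1, hv1⟩ : ∃ v1, ∀ u, d u ≤ d v1 := by
    have hb : BddAbove (Set.range d) := ⟨_, by rintro _ ⟨v, rfl⟩; exact hdn v⟩
    obtain ⟨v1, hv1⟩ := Nat.sSup_mem (Set.range_nonempty d) hb
    exact ⟨v1, fun u => hv1 ▸ le_csSup hb ⟨u, rfl⟩⟩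
  have hk : 0 < d v1 := lt_of_lt_of_le hv0 (hv1 v0)
  have hpair : ∀ v w, Module.finrank ℝ (h.lie.map (S12.ev2 v w).toLinearMap) ≤ 2 * d v1 - 1 := by
    intro v w
    by_cases hv : d v = d v1
    · have := h.pair_lt v w (fun u => (hv1 u).trans hv.ge) (by change 0 < d v; omega)
      change _ < 2 * d v at this
      omega
    · have h1 : _ ≤ d v + d w := h.pair_le v w
      have h2 := hv1 v
      have h3 := hv1 w
      omega
  unfold cohom12
  have hs1 : (d v1 : ℝ≥0∞) ≤ sSup {d : ℝ≥0∞ | ∃ p : V, d = dimH {q : V | ∃ f ∈ M, q = f p}} := by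
    refine (h.lower v1).trans (le_sSup ⟨v1, ?_⟩)
    congr 1
    ext q
    simp [eq_comm]
  have hs2 : sSup {d : ℝ≥0∞ | ∃ p : V × V, d = dimH {q : V × V | ∃ f ∈ diag12 M, q = f p}} ≤
      ((2 * d v1 - 1 : ℕ) : ℝ≥0∞) := by
    refine sSup_le ?_
    rintro _ ⟨⟨v, w⟩, rfl⟩
    have e : {q : V × V | ∃ f ∈ diag12 M, q = f (v, w)} = S12.ev2 v w '' M := by
      ext q
      constructor
      · rintro ⟨_, ⟨f, hf, rfl⟩, rfl⟩
        exact ⟨f, hf, rfl⟩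
      · rintro ⟨f, hf, rfl⟩
        exact ⟨_, ⟨f, hf, rfl⟩, rfl⟩
    rw [e]
    exact (h.upper v w).trans (by exact_mod_cast hpair v w)
  have hfin : Module.finrank ℝ (V × V) = 2 * Module.finrank ℝ V := by
    rw [Module.finrank_prod]; ring
  calc _ ≤ 2 * ((Module.finrank ℝ V : ℝ≥0∞) - (d v1 : ℝ≥0∞)) + 1 := by gcongr
    _ = ((2 * (Module.finrank ℝ V - d v1) + 1 : ℕ) : ℝ≥0∞) := by push_cast; rfl
    _ = ((2 * Module.finrank ℝ V - (2 * d v1 - 1) : ℕ) : ℝ≥0∞) := by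
        congr 1
        have := hdn v1
        omega
    _ = ((Module.finrank ℝ (V × V) : ℕ) : ℝ≥0∞) - ((2 * d v1 - 1 : ℕ) : ℝ≥0∞) := by
        rw [hfin, ← ENNReal.natCast_sub]
    _ ≤ _ := by gcongr
end
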